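/- arXiv:0910.1575 — 2 statements merged into one kernel-verified Lean document; each statement's English description precedes it below -/
import Mathlib

section
/- Every finite simple graph with at least 13 vertices and at most 20 edges is 2-apex. -/
/-- `H` is a minor of `G`: there are pairwise disjoint nonempty connected branch sets
in `G`, one for each vertex of `H`, with an edge of `G` between the branch sets of
any two vertices adjacent in `H`. -/
def SimpleGraph.IsMinor {W V : Type*} (H : SimpleGraph W) (G : SimpleGraph V) : Prop :=
  ∃ f : W → Set V,
    (∀ w, (f w).Nonempty) ∧
    (∀ w, (G.induce (f w)).Connected) ∧
    (Pairwise fun w₁ w₂ => Disjoint (f w₁) (f w₂)) ∧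
    ∀ ⦃w₁ w₂⦄, H.Adj w₁ w₂ → ∃ v₁ ∈ f w₁, ∃ v₂ ∈ f w₂, G.Adj v₁ v₂

/-- A graph is planar iff it has no `K₅` minor and no `K₃,₃` minor (Kuratowski–Wagner). -/
def SimpleGraph.IsPlanar {V : Type*} (G : SimpleGraph V) : Prop :=
  ¬ (⊤ : SimpleGraph (Fin 5)).IsMinor G ∧
  ¬ (completeBipartiteGraph (Fin 3) (Fin 3)).IsMinor G

/-- A graph is 2-apex if it becomes planar after deleting at most two vertices. -/
def SimpleGraph.TwoApex {V : Type*} (G : SimpleGraph V) : Prop :=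
  ∃ s : Set V, s.ncard ≤ 2 ∧ (G.induce sᶜ).IsPlanar

/-!
Suppressing vertices of degree at most two preserves nonplanarity and the failure to be `k`-apex,
so it suffices to treat graphs in which every vertex that is not isolated has degree at least three.
Deleting a vertex of large degree from a graph that is not `(k + 1)`-apex leaves a graph with fewer
edges that is not `k`-apex, and the larger graph arises from the smaller one by adding a star.
Starting from `K₃,₃` and `K₅`, this yields finite lists that contain first nonplanar graphs with at
most 12 edges, then the graphs with at most 15 edges that are not apex, and finally the
candidates with at most 20 edges that might fail to be 2-apex; finding two vertices to delete in
each candidate is a finite check. Deleting a vertex of a `4`-regular graph with 20 edges leaves 16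
edges, which is beyond the reach of the second list. There one deletes two nonadjacent vertices with
two common neighbours, and since those then have degree two, the first list applies.
-/

namespace AlmostPlanar

open SimpleGraph

variable {V V' W : Type*}

section Minors

variable {H : SimpleGraph W} {G : SimpleGraph V} {G' : SimpleGraph V'} {f : W → Set V}

/-- `f` assigns to the vertices of `H` the branch sets of a model of `H` in `G`, so that
`H.IsMinor G` says that a model exists. -/
structure IsModel (H : SimpleGraph W) (G : SimpleGraph V) (f : W → Set V) : Prop where
  nonempty : ∀ w, (f w).Nonempty
  connected : ∀ w, (G.induce (f w)).Connected
  disjoint : Pairwise fun w₁ w₂ => Disjoint (f w₁) (f w₂)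
  exists_adj : ∀ ⦃w₁ w₂⦄, H.Adj w₁ w₂ → ∃ v₁ ∈ f w₁, ∃ v₂ ∈ f w₂, G.Adj v₁ v₂

theorem IsModel.isMinor (hf : IsModel H G f) : H.IsMinor G :=
  ⟨f, hf.nonempty, hf.connected, hf.disjoint, hf.exists_adj⟩

theorem exists_isModel (h : H.IsMinor G) : ∃ f, IsModel H G f :=
  let ⟨f, h₁, h₂, h₃, h₄⟩ := h
  ⟨f, h₁, h₂, h₃, h₄⟩

theorem IsModel.eq_of_mem (hf : IsModel H G f) {w₁ w₂ : W} {v : V} (h₁ : v ∈ f w₁)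
    (h₂ : v ∈ f w₂) : w₁ = w₂ := by
  by_contra hne
  exact Set.disjoint_left.1 (hf.disjoint hne) h₁ h₂

theorem IsModel.exists_adj_of_ne (hf : IsModel H G f) {w : W} {u v : V} (hu : u ∈ f w)
    (hv : v ∈ f w) (huv : u ≠ v) : ∃ x ∈ f w, G.Adj u x := by
  have : Nontrivial (f w) := ⟨⟨u, hu⟩, ⟨v, hv⟩, by simpa using huv⟩
  obtain ⟨x, hx⟩ := (hf.connected w).preconnected.exists_adj_of_nontrivial ⟨u, hu⟩
  exact ⟨x, x.2, hx⟩

theorem IsModel.image (hf : IsModel H G f) (σ : V → V')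
    (hadj : ∀ w₁ w₂, ∀ a ∈ f w₁, ∀ b ∈ f w₂, G.Adj a b → σ a = σ b ∨ G'.Adj (σ a) (σ b))
    (hinj : ∀ w₁ w₂, ∀ a ∈ f w₁, ∀ b ∈ f w₂, σ a = σ b → w₁ = w₂) :
    IsModel H G' fun w => σ '' f w where
  nonempty w := (hf.nonempty w).image σ
  connected w := by
    let τ : f w → σ '' f w := fun a => ⟨σ a, Set.mem_image_of_mem σ a.2⟩
    have reachable_image (a b : f w) (hab : (G.induce (f w)).Reachable a b) :
        (G'.induce (σ '' f w)).Reachable (τ a) (τ b) := by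
      rw [reachable_iff_reflTransGen] at hab
      induction hab with
      | refl => rfl
      | @tail b c _ hbc ih =>
        obtain heq | hadj' := hadj w w b b.2 c c.2 hbc
        · rwa [show τ c = τ b from Subtype.ext heq.symm]
        · exact ih.trans (Adj.reachable (show G'.Adj _ _ from hadj'))
    obtain ⟨a, ha⟩ := hf.nonempty w
    refine connected_iff _ |>.2 ⟨?_, ⟨⟨σ a, Set.mem_image_of_mem σ ha⟩⟩⟩
    rintro ⟨_, b, hb, rfl⟩ ⟨_, c, hc, rfl⟩
    exact reachable_image ⟨b, hb⟩ ⟨c, hc⟩ ((hf.connected w).preconnected _ _)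
  disjoint w₁ w₂ hne := by
    refine Set.disjoint_left.2 ?_
    rintro _ ⟨a, ha, rfl⟩ ⟨b, hb, hba⟩
    exact hne (hinj w₁ w₂ a ha b hb hba.symm)
  exists_adj w₁ w₂ hw := by
    obtain ⟨a, ha, b, hb, hab⟩ := hf.exists_adj hw
    refine ⟨σ a, Set.mem_image_of_mem σ ha, σ b, Set.mem_image_of_mem σ hb, ?_⟩
    exact (hadj w₁ w₂ a ha b hb hab).resolve_left fun h => hw.ne (hinj w₁ w₂ a ha b hb h)

theorem IsModel.isMinor_of_adj {G' : SimpleGraph V} (hf : IsModel H G f)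
    (hadj : ∀ w₁ w₂, ∀ a ∈ f w₁, ∀ b ∈ f w₂, G.Adj a b → G'.Adj a b) : H.IsMinor G' :=
  (hf.image id (fun w₁ w₂ a ha b hb hab => .inr (hadj w₁ w₂ a ha b hb hab))
    fun _ _ a ha b hb (hab : a = b) => hf.eq_of_mem ha (hab ▸ hb)).isMinor

theorem isMinor_of_isContained (hG : G ⊑ G') (h : H.IsMinor G) : H.IsMinor G' := by
  obtain ⟨f, hf⟩ := exists_isModel h
  obtain ⟨φ⟩ := hG
  refine (hf.image φ (fun _ _ a _ b _ hab => .inr (φ.toHom.map_adj hab)) ?_).isMinor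
  exact fun _ _ a ha b hb hab => hf.eq_of_mem ha (φ.injective hab ▸ hb)

theorem isMinor_of_card_lt [Fintype W] {C : Finset V} {G' : SimpleGraph V} (hH : H.Preconnected)
    (hC : ∀ a ∈ C, ∀ b, G.Adj a b → b ∈ C) (hcard : C.card < Fintype.card W)
    (hG' : ∀ a ∉ C, ∀ b, G.Adj a b → G'.Adj a b) (h : H.IsMinor G) : H.IsMinor G' := by
  obtain ⟨f, hf⟩ := exists_isModel h
  have subset_of_mem {w : W} {a : V} (ha : a ∈ f w) (haC : a ∈ C) : f w ⊆ C := by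
    intro b hb
    have hab := (hf.connected w).preconnected ⟨a, ha⟩ ⟨b, hb⟩
    rw [reachable_iff_reflTransGen] at hab
    suffices ∀ x, Relation.ReflTransGen (G.induce (f w)).Adj ⟨a, ha⟩ x → x.1 ∈ C from this _ hab
    intro x hx
    induction hx with
    | refl => exact haC
    | tail _ hxy ih => exact hC _ ih _ hxy
  have subset_of_adj {w₁ w₂ : W} (hw : H.Adj w₁ w₂) (h₁ : f w₁ ⊆ C) : f w₂ ⊆ C := by
    obtain ⟨a, ha, b, hb, hab⟩ := hf.exists_adj hw
    exact subset_of_mem hb (hC a (h₁ ha) b hab)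
  have notMem_of_mem {w : W} {a : V} (ha : a ∈ f w) : a ∉ C := by
    intro haC
    have subset (w' : W) : f w' ⊆ C := by
      have hw := hH w w'
      rw [reachable_iff_reflTransGen] at hw
      induction hw with
      | refl => exact subset_of_mem ha haC
      | tail _ h ih => exact subset_of_adj h ih
    choose g hg using hf.nonempty
    refine hcard.not_ge (Finset.card_le_card_of_injOn g (fun w _ => subset w (hg w)) ?_)
    exact fun w₁ _ w₂ _ h => hf.eq_of_mem (hg w₁) (h ▸ hg w₂)
  exact hf.isMinor_of_adj fun _ _ a ha b _ => hG' a (notMem_of_mem ha) b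

theorem IsModel.exists_label (hf : IsModel H G f) :
    ∃ p : V → Option W, ∀ w, ∀ v ∈ f w, p v = some w := by
  classical
  refine ⟨fun v => if h : ∃ w, v ∈ f w then some h.choose else none, fun w v hv => ?_⟩
  have h : ∃ w, v ∈ f w := ⟨w, hv⟩
  simp only [dif_pos h, hf.eq_of_mem h.choose_spec hv]

theorem IsModel.isContained_of_subsingleton (hf : IsModel H G f)
    (hsub : ∀ w, (f w).Subsingleton) : H ⊑ G := by
  choose g hg using hf.nonempty
  refine ⟨⟨⟨g, fun {w₁ w₂} hw => ?_⟩, fun w₁ w₂ h => hf.eq_of_mem (hg w₁) ?_⟩⟩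
  · obtain ⟨a, ha, b, hb, hab⟩ := hf.exists_adj hw
    rwa [hsub w₁ (hg w₁) ha, hsub w₂ (hg w₂) hb]
  · exact (show g w₁ = g w₂ from h) ▸ hg w₂

end Minors

/-- The number of edges of a graph. -/
noncomputable def edgeCount (G : SimpleGraph V) : ℕ := G.edgeSet.ncard

/-- The degree of a vertex, available without any decidability or local finiteness instances. -/
noncomputable def deg (G : SimpleGraph V) (v : V) : ℕ := (G.neighborSet v).ncard

section FewEdges

variable [Finite V] {H : SimpleGraph W} {G : SimpleGraph V} {f : W → Set V}

theorem IsModel.edgeCount_lt (hf : IsModel H G f) {w : W} {a b : V} (ha : a ∈ f w)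
    (hb : b ∈ f w) (hab : G.Adj a b) : edgeCount H < edgeCount G := by
  obtain ⟨p, hp⟩ := hf.exists_label
  have hsub : Sym2.map some '' H.edgeSet ⊆ Sym2.map p '' (G.edgeSet \ {s(a, b)}) := by
    rintro _ ⟨e, he, rfl⟩
    induction e with | h w₁ w₂ =>
    obtain ⟨u, hu, v, hv, huv⟩ := hf.exists_adj he
    refine ⟨s(u, v), ⟨huv, fun h => he.ne (Option.some_injective _ ?_)⟩, ?_⟩
    · have hpe := congrArg (Sym2.map p) h
      simp only [Sym2.map_mk, hp _ _ hu, hp _ _ hv, hp _ _ ha, hp _ _ hb] at hpe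
      grind
    · simp [hp _ _ hu, hp _ _ hv]
  calc edgeCount H = (Sym2.map some '' H.edgeSet).ncard :=
        (Set.ncard_image_of_injective _ (Sym2.map.injective (Option.some_injective W))).symm
    _ ≤ (G.edgeSet \ {s(a, b)}).ncard :=
        (Set.ncard_le_ncard hsub).trans (Set.ncard_image_le (Set.toFinite _))
    _ < edgeCount G := Set.ncard_sdiff_singleton_lt_of_mem hab

theorem isContained_of_edgeCount_le (h : H.IsMinor G) (hE : edgeCount G ≤ edgeCount H) :
    H ⊑ G := by
  obtain ⟨f, hf⟩ := exists_isModel h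
  refine hf.isContained_of_subsingleton fun w a ha b hb => ?_
  by_contra hab
  obtain ⟨x, hx, hax⟩ := hf.exists_adj_of_ne ha hb hab
  exact (hf.edgeCount_lt ha hx hax).not_ge hE

theorem isContained_of_ncard_support_le (h : H.IsMinor G)
    (hH : ∀ w, ∃ w', H.Adj w w') (hV : G.support.ncard ≤ Nat.card W) : H ⊑ G := by
  obtain ⟨f, hf⟩ := exists_isModel h
  have mem_support {w : W} {a : V} (ha : a ∈ f w) : a ∈ G.support := by
    by_cases hne : ∃ b ∈ f w, a ≠ b
    · obtain ⟨b, hb, hab⟩ := hne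
      obtain ⟨x, -, hx⟩ := hf.exists_adj_of_ne ha hb hab
      exact ⟨x, hx⟩
    · push Not at hne
      obtain ⟨w', hw'⟩ := hH w
      obtain ⟨b, hb, x, -, hbx⟩ := hf.exists_adj hw'
      exact ⟨x, hne b hb ▸ hbx⟩
  choose g hg using hf.nonempty
  have g_injective : Function.Injective g := fun w₁ w₂ h => hf.eq_of_mem (hg w₁) (h ▸ hg w₂)
  have range_g : Set.range g = G.support := by
    refine Set.eq_of_subset_of_ncard_le ?_ ?_
    · rintro _ ⟨w, rfl⟩
      exact mem_support (hg w)
    · rwa [← Set.image_univ, Set.ncard_image_of_injective _ g_injective, Set.ncard_univ]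
  have eq_g {w : W} {a : V} (ha : a ∈ f w) : a = g w := by
    obtain ⟨w', rfl⟩ := range_g.ge (mem_support ha)
    rw [hf.eq_of_mem (hg w') ha]
  exact hf.isContained_of_subsingleton fun w a ha b hb => (eq_g ha).trans (eq_g hb).symm

end FewEdges

section Suppression

variable {G : SimpleGraph V} {H : SimpleGraph W} {t x y : V}

/-- The graph obtained by suppressing a vertex `t` with neighbours `x` and `y`: the path `x t y`
becomes an edge, whereas a vertex of degree one (the case `x = y`) is just deleted. -/
def suppress (G : SimpleGraph V) (t x y : V) : SimpleGraph V :=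
  G.deleteIncidenceSet t ⊔ edge x y

theorem suppress_comm (G : SimpleGraph V) (t x y : V) : suppress G t x y = suppress G t y x := by
  rw [suppress, suppress, edge_comm]

theorem suppress_adj {a b : V} : (suppress G t x y).Adj a b ↔
    (G.Adj a b ∧ a ≠ t ∧ b ≠ t) ∨ ((a = x ∧ b = y ∨ a = y ∧ b = x) ∧ a ≠ b) := by
  rw [suppress, sup_adj, deleteIncidenceSet_adj, edge_adj]

theorem IsModel.deg_le_of_eq_singleton {f : W → Set V} (hf : IsModel H G f) {w : W}
    (ht : f w = {t}) (hN : G.neighborSet t = {x, y}) : deg H w ≤ 2 := by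
  have exists_mem (w' : W) (hw' : w' ∈ H.neighborSet w) : ∃ v ∈ ({x, y} : Set V), v ∈ f w' := by
    obtain ⟨a, ha, b, hb, hab⟩ := hf.exists_adj hw'
    rw [ht, Set.mem_singleton_iff] at ha
    exact ⟨b, hN ▸ ha ▸ hab, hb⟩
  have : Nonempty V := ⟨t⟩
  choose! g hg hgf using exists_mem
  calc deg H w ≤ ({x, y} : Set V).ncard :=
        Set.ncard_le_ncard_of_injOn g hg fun w₁ h₁ w₂ h₂ h =>
          hf.eq_of_mem (hgf w₁ h₁) (h ▸ hgf w₂ h₂)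
    _ ≤ 2 := (Set.ncard_insert_le x {y}).trans (by simp)

theorem IsModel.isMinor_suppress {f : W → Set V} (hf : IsModel H G f)
    (hN : G.neighborSet t = {x, y}) {w : W} (ht : t ∈ f w) (hx : x ∈ f w) :
    H.IsMinor (suppress G t x y) := by
  classical
  have eq_or_eq {b : V} (h : G.Adj t b) : b = x ∨ b = y := hN.le h
  have htx : G.Adj t x := hN.ge (by simp)
  have hty : G.Adj t y := hN.ge (by simp)
  have update_mem (w' : W) (a : V) (ha : a ∈ f w') : Function.update id t x a ∈ f w' := by
    by_cases hat : a = t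
    · subst hat
      rwa [Function.update_self, hf.eq_of_mem ha ht]
    · rwa [Function.update_of_ne hat]
  refine (hf.image (Function.update id t x) (fun _ _ a _ b _ hab => ?_) ?_).isMinor
  · simp only [Function.update_apply, id, suppress_adj]
    have := hab.ne
    have := htx.ne
    have := hty.ne
    by_cases hat : a = t
    · have := eq_or_eq (hat ▸ hab)
      grind
    · by_cases hbt : b = t
      · have := eq_or_eq (hbt ▸ hab.symm)
        grind
      · grind
  · exact fun w₁ w₂ a ha b hb h => hf.eq_of_mem (update_mem w₁ a ha) (h ▸ update_mem w₂ b hb)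

theorem isMinor_suppress (hH : ∀ w, 3 ≤ deg H w) (hN : G.neighborSet t = {x, y})
    (h : H.IsMinor G) : H.IsMinor (suppress G t x y) := by
  obtain ⟨f, hf⟩ := exists_isModel h
  by_cases ht : ∃ w, t ∈ f w
  · obtain ⟨w, ht⟩ := ht
    have : ∃ b ∈ f w, t ≠ b := by
      by_contra! hb
      have := hf.deg_le_of_eq_singleton (Set.Subset.antisymm (fun b hb' => (hb b hb').symm)
        (Set.singleton_subset_iff.2 ht)) hN
      exact absurd (hH w) (by lia)
    obtain ⟨b, hb, htb⟩ := this
    obtain ⟨z, hz, htz⟩ := hf.exists_adj_of_ne ht hb htb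
    obtain rfl | rfl : z = x ∨ z = y := hN.le htz
    · exact hf.isMinor_suppress hN ht hz
    · rw [suppress_comm]
      exact hf.isMinor_suppress (hN.trans (Set.pair_comm x z)) ht hz
  · push Not at ht
    refine hf.isMinor_of_adj fun w₁ w₂ a ha b hb hab => suppress_adj.2 (.inl ⟨hab, ?_, ?_⟩)
    · exact fun h => ht w₁ (h ▸ ha)
    · exact fun h => ht w₂ (h ▸ hb)

theorem le_deg_top (w : Fin 5) : 4 ≤ deg (⊤ : SimpleGraph (Fin 5)) w := by
  simp [deg, Set.ncard_eq_toFinset_card', Finset.card_compl]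

theorem le_deg_completeBipartiteGraph (w : Fin 3 ⊕ Fin 3) :
    3 ≤ deg (completeBipartiteGraph (Fin 3) (Fin 3)) w := by
  have ncard_range {g : Fin 3 → Fin 3 ⊕ Fin 3} (hg : g.Injective) : (Set.range g).ncard = 3 := by
    simp [← Set.image_univ, Set.ncard_image_of_injective _ hg]
  cases w with
  | inl i =>
    refine (ncard_range Sum.inr_injective).ge.trans (Set.ncard_le_ncard ?_)
    rintro _ ⟨j, rfl⟩
    simp
  | inr i =>
    refine (ncard_range Sum.inl_injective).ge.trans (Set.ncard_le_ncard ?_)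
    rintro _ ⟨j, rfl⟩
    simp

theorem isPlanar_of_suppress (hN : G.neighborSet t = {x, y}) (h : (suppress G t x y).IsPlanar) :
    G.IsPlanar :=
  ⟨mt (isMinor_suppress (fun w => Nat.le_of_succ_le (le_deg_top w)) hN) h.1,
    mt (isMinor_suppress le_deg_completeBipartiteGraph hN) h.2⟩

end Suppression

theorem isPlanar_of_isContained {G : SimpleGraph V} {G' : SimpleGraph V'} (h : G ⊑ G')
    (hG' : G'.IsPlanar) : G.IsPlanar :=
  ⟨mt (isMinor_of_isContained h) hG'.1, mt (isMinor_of_isContained h) hG'.2⟩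

theorem completeBipartiteGraph_preconnected :
    (completeBipartiteGraph (Fin 3) (Fin 3)).Preconnected := by
  have reachable (i j : Fin 3) :
      (completeBipartiteGraph (Fin 3) (Fin 3)).Reachable (.inl i) (.inr j) :=
    Adj.reachable (by simp)
  rintro (i | i) (j | j)
  · exact (reachable i 0).trans (reachable j 0).symm
  · exact reachable i j
  · exact (reachable j i).symm
  · exact (reachable 0 i).symm.trans (reachable 0 j)

theorem isPlanar_of_card_le_four {C : Finset V} {G G' : SimpleGraph V}
    (hC : ∀ a ∈ C, ∀ b, G.Adj a b → b ∈ C) (hcard : C.card ≤ 4)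
    (hG' : ∀ a ∉ C, ∀ b, G.Adj a b → G'.Adj a b) (h : G'.IsPlanar) : G.IsPlanar := by
  refine ⟨mt (isMinor_of_card_lt ?_ hC ?_ hG') h.1, mt (isMinor_of_card_lt ?_ hC ?_ hG') h.2⟩
  · exact Connected.preconnected connected_top
  · simpa using by lia
  · exact completeBipartiteGraph_preconnected
  · simpa using by lia

/-- `k`-apex graphs: the graphs that can be made planar by deleting at most `k` vertices. A deleted
vertex stays in the vertex type and merely loses its edges. -/
def IsApex : ℕ → SimpleGraph V → Prop
  | 0, G => G.IsPlanar
  | k + 1, G => IsApex k G ∨ ∃ a, IsApex k (G.deleteIncidenceSet a)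

section Apex

variable {G G' : SimpleGraph V} {k : ℕ}

theorem IsApex.of_delete (a : V) (h : IsApex k (G.deleteIncidenceSet a)) : IsApex (k + 1) G :=
  .inr ⟨a, h⟩

theorem IsApex.succ (h : IsApex k G) : IsApex (k + 1) G := .inl h

theorem deleteIncidenceSet_mono (h : G ≤ G') (a : V) :
    G.deleteIncidenceSet a ≤ G'.deleteIncidenceSet a := by
  intro u v
  simp only [deleteIncidenceSet_adj]
  exact fun huv => ⟨h huv.1, huv.2⟩

theorem IsApex.mono (hle : G ≤ G') (h : IsApex k G') : IsApex k G := by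
  induction k generalizing G G' with
  | zero => exact isPlanar_of_isContained (.of_le hle) h
  | succ k ih =>
    obtain h | ⟨a, h⟩ := h
    · exact (ih hle h).succ
    · exact .of_delete a (ih (deleteIncidenceSet_mono hle a) h)

theorem IsApex.of_closed {C : Finset V} (hC : ∀ a ∈ C, ∀ b, G.Adj a b → b ∈ C)
    (hcard : C.card ≤ 4) (hG' : ∀ a ∉ C, ∀ b, G.Adj a b → G'.Adj a b) (h : IsApex k G') :
    IsApex k G := by
  induction k generalizing G G' with
  | zero => exact isPlanar_of_card_le_four hC hcard hG' h
  | succ k ih =>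
    obtain h | ⟨a, h⟩ := h
    · exact (ih hC hG' h).succ
    · refine .of_delete a (ih ?_ ?_ h)
      · exact fun u hu v huv => hC u hu v (deleteIncidenceSet_adj.1 huv).1
      · intro u hu v huv
        rw [deleteIncidenceSet_adj] at huv ⊢
        exact ⟨hG' u hu v huv.1, huv.2⟩

open Classical in
theorem IsApex.of_suppress {t x y : V} (hN : G.neighborSet t = {x, y})
    (h : IsApex k (suppress G t x y)) : IsApex k G := by
  induction k generalizing G x y with
  | zero => exact isPlanar_of_suppress hN h
  | succ k ih =>
    obtain h | ⟨a, h⟩ := h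
    · exact (ih hN h).succ
    refine .of_delete a ?_
    have adj_iff (b : V) : G.Adj t b ↔ b = x ∨ b = y := Set.ext_iff.1 hN b
    by_cases ha : a = t ∨ (a = x ∧ a = y)
    · refine h.mono fun u v => ?_
      simp only [deleteIncidenceSet_adj, suppress_adj]
      have := adj_iff u
      have := adj_iff v
      grind [SimpleGraph.Adj.symm]
    · obtain ⟨x', y', hN', hle⟩ : ∃ x' y', (G.deleteIncidenceSet a).neighborSet t = {x', y'} ∧
          suppress (G.deleteIncidenceSet a) t x' y' ≤ (suppress G t x y).deleteIncidenceSet a := by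
        have ha_t : t ≠ a := fun h => ha (.inl h.symm)
        have adj_iff' (b : V) :
            (G.deleteIncidenceSet a).Adj t b ↔ (b = x ∨ b = y) ∧ b ≠ a := by
          simp [deleteIncidenceSet_adj, adj_iff, ha_t]
        refine ⟨if a = x then y else x, if a = y then x else y, ?_, fun u v => ?_⟩
        · ext b
          rw [mem_neighborSet, adj_iff', Set.mem_insert_iff, Set.mem_singleton_iff]
          grind
        · simp only [deleteIncidenceSet_adj, suppress_adj]
          grind
      exact ih hN' (h.mono hle)

end Apex

section Degrees

variable {G G' : SimpleGraph V} {a t x y v : V}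

/-- Every vertex of `G` that is not isolated has degree at least `d`. -/
def MinDeg (G : SimpleGraph V) (d : ℕ) : Prop := ∀ v ∈ G.support, d ≤ deg G v

theorem MinDeg.mono {d d' : ℕ} (hG : MinDeg G d) (h : d' ≤ d) : MinDeg G d' :=
  fun v hv => h.trans (hG v hv)

theorem neighborSet_delete (h : v ≠ a) :
    (G.deleteIncidenceSet a).neighborSet v = G.neighborSet v \ {a} := by
  ext u
  simp [deleteIncidenceSet_adj, h]

theorem exists_neighborSet_eq_pair (h : deg G t = 2) :
    ∃ x y, x ≠ y ∧ G.neighborSet t = {x, y} := Set.ncard_eq_two.1 h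

theorem suppress_eq_delete (hN : G.neighborSet t = {x, y}) (h : x = y ∨ G.Adj x y) :
    suppress G t x y = G.deleteIncidenceSet t := by
  have htx : G.Adj t x := hN.ge (by simp)
  have hty : G.Adj t y := hN.ge (by simp)
  have := htx.ne'
  have := hty.ne'
  ext u v
  rw [suppress_adj, deleteIncidenceSet_adj]
  grind [SimpleGraph.Adj.symm]

theorem deg_delete_of_not_adj (hne : v ≠ a) (h : ¬ G.Adj a v) :
    deg (G.deleteIncidenceSet a) v = deg G v := by
  rw [deg, neighborSet_delete hne, deg, Set.sdiff_singleton_eq_self]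
  exact fun h' => h (Adj.symm h')

theorem support_delete_subset (G : SimpleGraph V) (a : V) :
    (G.deleteIncidenceSet a).support ⊆ G.support \ {a} := by
  rintro v ⟨u, hvu⟩
  have hvu := deleteIncidenceSet_adj.1 hvu
  exact ⟨⟨u, hvu.1⟩, hvu.2.1⟩

theorem sum_deg [Fintype V] (G : SimpleGraph V) : ∑ v, deg G v = 2 * edgeCount G := by
  classical
  simp only [edgeCount, deg, Set.ncard_eq_toFinset_card']
  exact G.sum_degrees_eq_twice_card_edges

variable [Finite V]

theorem mem_support_iff_deg_ne_zero : v ∈ G.support ↔ deg G v ≠ 0 := by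
  rw [deg, ne_eq, Set.ncard_eq_zero, ← ne_eq, ← Set.nonempty_iff_ne_empty]
  rfl

theorem deg_mono (h : G ≤ G') (v : V) : deg G v ≤ deg G' v :=
  Set.ncard_le_ncard fun _ hu => h hu

theorem deg_delete_of_adj (h : G.Adj a v) : deg (G.deleteIncidenceSet a) v + 1 = deg G v := by
  rw [deg, neighborSet_delete h.ne']
  exact Set.ncard_sdiff_singleton_add_one h.symm

theorem deg_le_deg_delete_add_one (hne : v ≠ a) :
    deg G v ≤ deg (G.deleteIncidenceSet a) v + 1 := by
  by_cases h : G.Adj a v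
  · exact (deg_delete_of_adj h).ge
  · exact (deg_delete_of_not_adj hne h).ge.trans (Nat.le_succ _)

theorem ncard_support_delete_lt (ha : a ∈ G.support) :
    (G.deleteIncidenceSet a).support.ncard < G.support.ncard :=
  (Set.ncard_le_ncard (support_delete_subset G a)).trans_lt (Set.ncard_sdiff_singleton_lt_of_mem ha)

theorem MinDeg.support_delete (hG : MinDeg G 2) (a : V) :
    (G.deleteIncidenceSet a).support = G.support \ {a} := by
  refine (support_delete_subset G a).antisymm fun v hv => ?_
  have := hG v hv.1
  have := deg_le_deg_delete_add_one (G := G) hv.2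
  exact mem_support_iff_deg_ne_zero.2 (by lia)

theorem deg_le_of_regular {d : ℕ} (h : ∀ v ∈ G.support, deg G v = d) (v : V) : deg G v ≤ d := by
  by_cases hv : v ∈ G.support
  · exact (h v hv).le
  · simp [not_not.1 (mt mem_support_iff_deg_ne_zero.2 hv)]

theorem MinDeg.delete {d : ℕ} (hG : MinDeg G (d + 1)) (a : V) :
    MinDeg (G.deleteIncidenceSet a) d := by
  rintro v ⟨u, hvu⟩
  have hvu := deleteIncidenceSet_adj.1 hvu
  exact Nat.le_of_succ_le_succ ((hG v ⟨u, hvu.1⟩).trans (deg_le_deg_delete_add_one hvu.2.1))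

theorem edgeCount_mono (h : G ≤ G') : edgeCount G ≤ edgeCount G' :=
  Set.ncard_le_ncard (edgeSet_mono h)

theorem edgeCount_delete_add_deg (G : SimpleGraph V) (a : V) :
    edgeCount (G.deleteIncidenceSet a) + deg G a = edgeCount G := by
  classical
  have hdeg : deg G a = (G.incidenceSet a).ncard :=
    Nat.card_congr (G.incidenceSetEquivNeighborSet a).symm
  rw [edgeCount, edgeSet_deleteIncidenceSet, hdeg]
  exact Set.ncard_sdiff_add_ncard_of_subset (G.incidenceSet_subset a)

theorem sum_deg_support (G : SimpleGraph V) :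
    ∑ v ∈ G.support.toFinite.toFinset, deg G v = 2 * edgeCount G := by
  have := Fintype.ofFinite V
  rw [← sum_deg]
  refine Finset.sum_subset (Finset.subset_univ _) fun v _ hv => ?_
  rwa [Set.Finite.mem_toFinset, mem_support_iff_deg_ne_zero, not_not] at hv

theorem MinDeg.mul_ncard_support_le {d : ℕ} (hG : MinDeg G d) :
    d * G.support.ncard ≤ 2 * edgeCount G := by
  rw [← sum_deg_support, Set.ncard_eq_toFinset_card, mul_comm, ← smul_eq_mul]
  exact Finset.card_nsmul_le_sum _ _ _ fun v hv => hG v (by simpa using hv)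

theorem mul_ncard_support_eq {d : ℕ} (h : ∀ v ∈ G.support, deg G v = d) :
    d * G.support.ncard = 2 * edgeCount G := by
  rw [← sum_deg_support, Finset.sum_congr rfl fun v hv => h v (by simpa using hv),
    Finset.sum_const, ← Set.ncard_eq_toFinset_card, smul_eq_mul, mul_comm]

theorem exists_neighborSet_eq_pair_of_le (hs : t ∈ G.support) (h : deg G t ≤ 2) :
    ∃ x y, G.neighborSet t = {x, y} := by
  have := mem_support_iff_deg_ne_zero.1 hs
  obtain h | h : deg G t = 1 ∨ deg G t = 2 := by lia
  · obtain ⟨x, hx⟩ := Set.ncard_eq_one.1 h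
    exact ⟨x, x, by simpa using hx⟩
  · obtain ⟨x, y, -, hxy⟩ := exists_neighborSet_eq_pair h
    exact ⟨x, y, hxy⟩

theorem edgeCount_edge_le (x y : V) : edgeCount (edge x y) ≤ 1 := by
  refine (Set.ncard_le_ncard (t := {s(x, y)}) ?_).trans (Set.ncard_singleton _).le
  simp [edge, edgeSet_fromEdgeSet]

theorem edgeCount_suppress_lt (hN : G.neighborSet t = {x, y}) :
    edgeCount (suppress G t x y) < edgeCount G := by
  have hdelete := edgeCount_delete_add_deg G t
  by_cases h : x = y
  · have hdeg : deg G t = 1 := by simp [deg, hN, h]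
    rw [suppress_eq_delete hN (.inl h)]
    lia
  · have hdeg : deg G t = 2 := by rw [deg, hN, Set.ncard_pair h]
    have hle : edgeCount (suppress G t x y) ≤
        edgeCount (G.deleteIncidenceSet t) + edgeCount (edge x y) := by
      rw [edgeCount, suppress, edgeSet_sup]
      exact Set.ncard_union_le _ _
    have := edgeCount_edge_le x y
    lia

theorem deg_suppress_left (hN : G.neighborSet t = {x, y}) (hxy : x ≠ y) (hadj : ¬ G.Adj x y) :
    deg (suppress G t x y) x = deg G x := by
  have htx : G.Adj t x := hN.ge (by simp)
  have hneighbor : (suppress G t x y).neighborSet x = insert y (G.neighborSet x \ {t}) := by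
    ext u
    simp only [mem_neighborSet, suppress_adj, Set.mem_insert_iff, Set.mem_sdiff,
      Set.mem_singleton_iff]
    have := htx.ne
    grind
  rw [deg, hneighbor, Set.ncard_insert_of_notMem (fun h => hadj h.1)]
  exact Set.ncard_sdiff_singleton_add_one htx.symm

theorem deg_suppress (hN : G.neighborSet t = {x, y}) (hxy : x ≠ y) (hadj : ¬ G.Adj x y)
    (hv : v ≠ t) : deg (suppress G t x y) v = deg G v := by
  by_cases hvx : v = x
  · rw [hvx, deg_suppress_left hN hxy hadj]
  by_cases hvy : v = y
  · rw [hvy, suppress_comm]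
    exact deg_suppress_left (hN.trans (Set.pair_comm x y)) hxy.symm (mt Adj.symm hadj)
  have hvt (u : V) (huv : G.Adj v u) : u ≠ t := by
    rintro rfl
    obtain h | h := hN.le huv.symm
    exacts [hvx h, hvy h]
  rw [deg, deg]
  congr 1
  ext u
  simp only [mem_neighborSet, suppress_adj]
  grind

theorem exists_minDeg_three {k : ℕ} (h : ¬ IsApex k G) :
    ∃ G' : SimpleGraph V, ¬ IsApex k G' ∧ edgeCount G' ≤ edgeCount G ∧ MinDeg G' 3 := by
  induction hE : edgeCount G using Nat.strong_induction_on generalizing G with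
  | _ n ih =>
    subst hE
    by_cases hG : MinDeg G 3
    · exact ⟨G, h, le_rfl, hG⟩
    · simp only [MinDeg, not_forall, not_le] at hG
      obtain ⟨t, ht, hlt⟩ := hG
      obtain ⟨x, y, hN⟩ := exists_neighborSet_eq_pair_of_le ht (Nat.le_of_lt_succ hlt)
      obtain ⟨G', hG', hE, hmin⟩ :=
        ih _ (edgeCount_suppress_lt hN) (mt (IsApex.of_suppress hN) h) rfl
      exact ⟨G', hG', hE.trans (edgeCount_suppress_lt hN).le, hmin⟩

theorem minDeg_three {k : ℕ} (hk : ∀ G' : SimpleGraph V, edgeCount G' < edgeCount G → IsApex k G')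
    (h : ¬ IsApex k G) : MinDeg G 3 := by
  intro t ht
  by_contra hlt
  obtain ⟨x, y, hN⟩ := exists_neighborSet_eq_pair_of_le ht (by lia)
  exact h (.of_suppress hN (hk _ (edgeCount_suppress_lt hN)))

theorem not_adj_of_deg_eq_two {k m : ℕ} (hk : ∀ G' : SimpleGraph V, edgeCount G' < m → IsApex k G')
    (hE : edgeCount G ≤ m + 1) (h : ¬ IsApex k G) (hxy : x ≠ y) (hN : G.neighborSet t = {x, y}) :
    ¬ G.Adj x y := by
  intro hadj
  have hdelete := edgeCount_delete_add_deg G t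
  have hdeg : deg G t = 2 := by rw [deg, hN, Set.ncard_pair hxy]
  refine h (.of_suppress hN (hk _ ?_))
  rw [suppress_eq_delete hN (.inr hadj)]
  lia

theorem three_le_deg_of_deg_eq_two {k m : ℕ}
    (hk : ∀ G' : SimpleGraph V, edgeCount G' < m → IsApex k G') (hE : edgeCount G ≤ m + 1)
    (h : ¬ IsApex k G) (ht : deg G t = 2) (hv : v ∈ G.support) (hvt : v ≠ t) : 3 ≤ deg G v := by
  obtain ⟨x, y, hxy, hN⟩ := exists_neighborSet_eq_pair ht
  have hadj := not_adj_of_deg_eq_two hk hE h hxy hN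
  have hlt := edgeCount_suppress_lt hN
  have hdeg := deg_suppress hN hxy hadj hvt
  rw [← hdeg]
  refine minDeg_three (fun G' hG' => hk G' (by lia)) (mt (IsApex.of_suppress hN) h) v ?_
  rwa [mem_support_iff_deg_ne_zero, hdeg, ← mem_support_iff_deg_ne_zero]

end Degrees

section Kuratowski

theorem edgeCount_top : edgeCount (⊤ : SimpleGraph (Fin 5)) = 10 := by
  rw [edgeCount, Set.ncard_eq_toFinset_card']
  exact card_edgeFinset_top_eq_card_choose_two

theorem edgeCount_completeBipartiteGraph :
    edgeCount (completeBipartiteGraph (Fin 3) (Fin 3)) = 9 := by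
  simp [edgeCount, Set.ncard, encard_edgeSet_completeBipartiteGraph]

theorem exists_adj_completeBipartiteGraph (w : Fin 3 ⊕ Fin 3) :
    ∃ w', (completeBipartiteGraph (Fin 3) (Fin 3)).Adj w w' := by
  cases w
  exacts [⟨.inr 0, by simp⟩, ⟨.inl 0, by simp⟩]

variable {G : SimpleGraph V} {H : SimpleGraph W}

theorem exists_embedding_map_le (h : H ⊑ G) : ∃ f : W ↪ V, H.map f ≤ G := by
  obtain ⟨f, hf⟩ := isContained_iff_exists_le_comap.1 h
  exact ⟨f, map_le_iff_le_comap f H G |>.2 hf⟩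

theorem edgeCount_map (f : W ↪ V) : edgeCount (H.map f) = edgeCount H := by
  rw [edgeCount, edgeSet_map]
  exact Set.ncard_image_of_injective _ f.sym2Map.injective

variable [Finite V]

theorem edgeCount_le_of_isContained (h : H ⊑ G) : edgeCount H ≤ edgeCount G := by
  obtain ⟨f, hf⟩ := exists_embedding_map_le h
  exact (edgeCount_map f).ge.trans (edgeCount_mono hf)

theorem edgeCount_le_of_isMinor (h : H.IsMinor G) : edgeCount H ≤ edgeCount G := by
  by_contra hlt
  exact hlt (edgeCount_le_of_isContained (isContained_of_edgeCount_le h (by lia)))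

theorem eq_of_edgeCount_le {G' : SimpleGraph V} (h : G ≤ G') (hE : edgeCount G' ≤ edgeCount G) :
    G = G' :=
  edgeSet_inj.1 (Set.eq_of_subset_of_ncard_le (edgeSet_mono h) hE)

theorem isPlanar_of_edgeCount_le_eight (hE : edgeCount G ≤ 8) : G.IsPlanar := by
  constructor <;> intro h <;> have := edgeCount_le_of_isMinor h
  · rw [edgeCount_top] at this
    lia
  · rw [edgeCount_completeBipartiteGraph] at this
    lia

theorem isPlanar_of_edgeCount_le_ten (hE : edgeCount G ≤ 10)
    (hV : G.support.ncard ≤ 6) (hdeg : {v | 4 ≤ deg G v}.ncard < 5)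
    (hcommon : ∀ s : Finset V, s.card = 3 → {v | ∀ u ∈ s, G.Adj u v}.ncard < 3) :
    G.IsPlanar := by
  constructor
  · intro h
    obtain ⟨f⟩ := isContained_of_edgeCount_le h (by rwa [edgeCount_top])
    have hle (w : Fin 5) : 4 ≤ deg G (f w) := (le_deg_top w).trans
      (Set.ncard_le_ncard_of_injOn f (fun v hv => f.toHom.map_adj hv) f.injective.injOn)
    refine hdeg.not_ge ?_
    calc 5 = (Set.range f).ncard := by
          rw [← Set.image_univ, Set.ncard_image_of_injective (f := f) _ f.injective,
            Set.ncard_univ, Nat.card_fin]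
      _ ≤ {v | 4 ≤ deg G v}.ncard := Set.ncard_le_ncard (Set.range_subset_iff.2 hle)
  · intro h
    have hcontained := isContained_of_ncard_support_le h exists_adj_completeBipartiteGraph
      (by simpa using hV)
    obtain ⟨A, B, hA, hB, hAB⟩ := completeBipartiteGraph_isContained_iff.1 hcontained
    refine (hcommon A (by simpa using hA)).not_ge ?_
    calc 3 = (B : Set V).ncard := by rw [Set.ncard_coe_finset, hB, Fintype.card_fin]
      _ ≤ {v | ∀ u ∈ A, G.Adj u v}.ncard := Set.ncard_le_ncard fun b hb a ha => hAB ha hb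

end Kuratowski

section Codes

/-- A graph on the labels `0, …, 12`, encoded as the number whose bit `13 * i + j` says whether `i`
and `j` are adjacent. Labels without neighbours are considered unused. -/
abbrev Code := ℕ

/-- The value `k x`, arranged such that the kernel evaluates `x` first. It substitutes arguments
unevaluated otherwise, and would evaluate `x` at each place where `k` uses it. -/
def force {α : Type*} (x : ℕ) (k : ℕ → α) : α :=
  match x with
  | 0 => k 0
  | n + 1 => k n.succ

/-- The value `k l`, arranged such that the kernel evaluates the entries of `l` first. -/
def forceList {α : Type*} (l : List ℕ) (k : List ℕ → α) : α :=
  match l with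
  | [] => k []
  | x :: l => force x fun x => forceList l fun l => k (x :: l)

/-- The labels available to codes, spelled out because the kernel is slow to unfold `List.range`. -/
def labels : List ℕ := [0, 1, 2, 3, 4, 5, 6, 7, 8, 9, 10, 11, 12]

/-- The row of the label `i` in the adjacency matrix, a number of 13 bits. -/
def row (m : Code) (i : ℕ) : ℕ := (m >>> (13 * i)) % 2 ^ 13

/-- The neighbours of the label `i`. -/
def neighbors (m : Code) (i : ℕ) : List ℕ := force (row m i) fun r => labels.filter r.testBit

/-- The degree of the label `i`. -/
def codeDeg (m : Code) (i : ℕ) : ℕ := (neighbors m i).length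

/-- The labels that are in use. -/
def usedLabels (m : Code) : List ℕ := labels.filter fun i => row m i ≠ 0

/-- The sum of the degrees of a code. -/
def degSum (m : Code) : ℕ := (labels.map (codeDeg m)).sum

/-- The edges of a code, each listed once, with the larger label first. -/
def codeEdges (m : Code) : List (ℕ × ℕ) :=
  labels.flatMap fun i => ((neighbors m i).filter (· < i)).map fun j => (i, j)

/-- The code whose only edge joins `i` and `j`. -/
def edgeCode (i j : ℕ) : Code := 2 ^ (13 * i + j) ||| 2 ^ (13 * j + i)

/-- The code `m` with an additional edge between `i` and `j`. -/
def addEdge (m : Code) (i j : ℕ) : Code := m ||| edgeCode i j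

/-- The code `m` without the edge between `i` and `j`. -/
def removeEdge (m : Code) (i j : ℕ) : Code := force m fun m => m &&& (m ^^^ edgeCode i j)

/-- The code `m` with additional edges. -/
def addEdges (m : Code) (l : List (ℕ × ℕ)) : Code :=
  l.foldl (fun m e => force m fun m => addEdge m e.1 e.2) m

/-- The code `m` without the edges at the label `i`. -/
def removeVertex (m : Code) (i : ℕ) : Code :=
  force m fun m => (neighbors m i).foldl (fun m j => removeEdge m i j) m

/-- A label that is not in use, if there is one. -/
def freshLabel (m : Code) : ℕ := (labels.find? fun i => row m i = 0).getD 0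

/-- The code `m` with an additional vertex that is joined to the labels in `l`. -/
def addVertex (m : Code) (l : List ℕ) : Code :=
  force (freshLabel m) fun i => addEdges m (l.map fun j => (i, j))

/-- The code `m` with the label `t` suppressed if its degree is one or two. -/
def suppressCode (m : Code) (t : ℕ) : Code :=
  force m fun m => match neighbors m t with
    | [_] => removeVertex m t
    | [x, y] => addEdge (removeVertex m t) x y
    | _ => m

/-- A sufficient criterion for planarity: after suppressing labels of small degree, the graph has at
most eight edges, or it has at most ten edges and six vertices, fewer than five vertices of degree
at least four, and no three vertices with three common neighbours. -/
def isPlanarCode (m : Code) : Bool :=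
  force (labels.foldl suppressCode m) fun m => force (degSum m) fun s => s ≤ 17 ||
    s ≤ 20 && (labels.filter fun i => 4 ≤ codeDeg m i).length < 5 &&
      forceList (usedLabels m) fun used => used.length ≤ 6 && (used.sublistsLen 3).all fun l =>
        (labels.filter fun j => l.all fun i => (row m i).testBit j).length < 3

/-- A sufficient criterion for being `k`-apex. -/
def isApexCode : ℕ → Code → Bool
  | 0, m => isPlanarCode m
  | k + 1, m => force m fun m => (usedLabels m).any fun i => isApexCode k (removeVertex m i)

/-- The codes that arise from `m` by subdividing an edge. -/
def subdivisions (m : Code) : List Code :=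
  force m fun m => (codeEdges m).map fun e => addVertex (removeEdge m e.1 e.2) [e.1, e.2]

/-- The codes that arise from `m` by adding a path of length two parallel to an edge. -/
def doublings (m : Code) : List Code :=
  force m fun m => (codeEdges m).map fun e => addVertex m [e.1, e.2]

/-- The codes that arise from `m` by adding a vertex of degree `k` whose neighbours have degree at
most `Δ` afterwards, such that all vertices of the new graph have degree at least `δ`. -/
def stars (δ Δ k : ℕ) (m : Code) : List Code :=
  force m fun m => forceList (usedLabels m) fun used =>
    forceList (used.filter fun i => codeDeg m i < δ) fun low =>
      if k < low.length then [] else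
        forceList (used.filter fun i => δ ≤ codeDeg m i ∧ codeDeg m i < Δ) fun high =>
          (high.sublistsLen (k - low.length)).map fun l => addVertex m (low ++ l)

/-- The code `m` with each label `i` renamed to `s i`. -/
def relabel (s : ℕ → ℕ) (m : Code) : Code :=
  addEdges 0 ((codeEdges m).map fun e => (s e.1, s e.2))

/-- A depth-first search for an extension of the list `s` of pairs of corresponding labels to an
isomorphism from `m` to `m'`, for which the labels in `l` have yet to be assigned. -/
def extendIso (m m' : Code) : List ℕ → List (ℕ × ℕ) → Option (List (ℕ × ℕ))
  | [], s => some s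
  | i :: l, s => (usedLabels m').findSome? fun j =>
      if codeDeg m' j = codeDeg m i ∧
          s.all (fun p => p.2 ≠ j ∧ (row m p.1).testBit i = (row m' p.2).testBit j) then
        extendIso m m' l ((i, j) :: s)
      else none

/-- The renaming that sends the first component of each pair in `s` to the second one. -/
def renameBy (s : List (ℕ × ℕ)) (i : ℕ) : ℕ := (s.lookup i).getD 0

/-- The degrees of all labels, in increasing order. -/
def degrees (m : Code) : List ℕ := (labels.map (codeDeg m)).insertionSort (· ≤ ·)

/-- A test for isomorphism of codes. The labels are assigned in decreasing order since the most
recent ones tend to have small degree. -/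
def isIso (m m' : Code) : Bool :=
  force m fun m => force m' fun m' => degrees m = degrees m' &&
    match extendIso m m' (usedLabels m).reverse [] with
    | none => false
    | some s => forceList ((usedLabels m).map (renameBy s)) fun l =>
        l.Nodup ∧ (∀ i ∈ l, i < 13) ∧ relabel (renameBy s) m = m'

/-- A list of representatives of the codes in a list up to isomorphism. -/
def representatives : List Code → List Code
  | [] => []
  | m :: L => force m fun m => forceList (representatives L) fun R =>
      if R.any (isIso m) then R else m :: R

end Codes

section CodeArithmetic

variable {α : Type*} {m m' : Code} {i j x y : ℕ}

theorem force_eq (n : ℕ) (k : ℕ → α) : force n k = k n := by cases n <;> rfl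

theorem forceList_eq (l : List ℕ) (k : List ℕ → α) : forceList l k = k l := by
  induction l generalizing k with
  | nil => rfl
  | cons x l ih => rw [forceList, force_eq, ih]

theorem mem_labels : i ∈ labels ↔ i < 13 := by
  rw [show labels = List.range 13 from rfl, List.mem_range]

theorem nodup_labels : labels.Nodup := by decide

theorem testBit_row : (row m i).testBit j = (decide (j < 13) && m.testBit (13 * i + j)) := by
  rw [row, Nat.testBit_mod_two_pow, Nat.testBit_shiftRight]

theorem mem_neighbors : j ∈ neighbors m i ↔ (row m i).testBit j := by
  rw [neighbors, force_eq, List.mem_filter, mem_labels, testBit_row]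
  simp

theorem lt_of_mem_neighbors (h : j ∈ neighbors m i) : j < 13 := by
  rw [mem_neighbors, testBit_row] at h
  simp_all

theorem nodup_neighbors : (neighbors m i).Nodup := by
  rw [neighbors, force_eq]
  exact nodup_labels.filter _

theorem row_eq_zero_iff : row m i = 0 ↔ ∀ j, j ∉ neighbors m i := by
  simp only [mem_neighbors]
  constructor
  · intro h j
    simp [h]
  · exact fun h => Nat.eq_of_testBit_eq fun j => by simpa using h j

theorem mem_usedLabels : i ∈ usedLabels m ↔ i < 13 ∧ ∃ j, j ∈ neighbors m i := by
  simp only [usedLabels, List.mem_filter, mem_labels, decide_not, Bool.not_eq_true',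
    decide_eq_false_iff_not, row_eq_zero_iff, not_forall, not_not]

theorem mem_usedLabels_mono (h : ∀ j, j ∈ neighbors m i → j ∈ neighbors m' i)
    (hi : i ∈ usedLabels m) : i ∈ usedLabels m' :=
  mem_usedLabels.2 ((mem_usedLabels.1 hi).imp_right fun ⟨j, hj⟩ => ⟨j, h j hj⟩)

theorem nodup_usedLabels : (usedLabels m).Nodup := nodup_labels.filter _

theorem testBit_edgeCode (hj : j < 13) (hi : i < 13) (hy : y < 13) :
    (edgeCode i j).testBit (13 * x + y) ↔ x = i ∧ y = j ∨ x = j ∧ y = i := by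
  simp only [edgeCode, Nat.testBit_or, Nat.testBit_two_pow, Bool.or_eq_true, decide_eq_true_eq]
  lia

theorem mem_neighbors_addEdge (hi : i < 13) (hj : j < 13) : y ∈ neighbors (addEdge m i j) x ↔
    y ∈ neighbors m x ∨ x = i ∧ y = j ∨ x = j ∧ y = i := by
  by_cases hy : y < 13
  · simp only [mem_neighbors, testBit_row, hy, decide_true, Bool.true_and, addEdge, Nat.testBit_or,
      Bool.or_eq_true, testBit_edgeCode hj hi hy]
  · have := mt (lt_of_mem_neighbors (m := m) (i := x)) hy
    have := mt (lt_of_mem_neighbors (m := addEdge m i j) (i := x)) hy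
    lia

theorem mem_neighbors_removeEdge (hi : i < 13) (hj : j < 13) :
    y ∈ neighbors (removeEdge m i j) x ↔
      y ∈ neighbors m x ∧ ¬ (x = i ∧ y = j ∨ x = j ∧ y = i) := by
  by_cases hy : y < 13
  · rw [← testBit_edgeCode hj hi hy]
    simp only [mem_neighbors, testBit_row, hy, decide_true, Bool.true_and, removeEdge, force_eq,
      Nat.testBit_and, Nat.testBit_xor]
    cases m.testBit (13 * x + y) <;> simp
  · have := mt (lt_of_mem_neighbors (m := m) (i := x)) hy
    have := mt (lt_of_mem_neighbors (m := removeEdge m i j) (i := x)) hy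
    tauto

theorem mem_neighbors_addEdges {l : List (ℕ × ℕ)} (hl : ∀ e ∈ l, e.1 < 13 ∧ e.2 < 13) :
    y ∈ neighbors (addEdges m l) x ↔ y ∈ neighbors m x ∨ (x, y) ∈ l ∨ (y, x) ∈ l := by
  induction l generalizing m with
  | nil => simp [addEdges]
  | cons e l ih =>
    obtain ⟨he, hl⟩ := List.forall_mem_cons.1 hl
    have hcons : addEdges m (e :: l) = addEdges (addEdge m e.1 e.2) l := by
      simp only [addEdges, List.foldl_cons, force_eq]
    rw [hcons, ih hl, mem_neighbors_addEdge he.1 he.2]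
    simp only [List.mem_cons, Prod.ext_iff]
    tauto

theorem mem_neighbors_addEdges_zero {l : List (ℕ × ℕ)} (hl : ∀ e ∈ l, e.1 < 13 ∧ e.2 < 13) :
    y ∈ neighbors (addEdges 0 l) x ↔ (x, y) ∈ l ∨ (y, x) ∈ l := by
  rw [mem_neighbors_addEdges hl, mem_neighbors]
  simp [row]

/-- Adjacency of codes is symmetric. -/
def IsSymmCode (m : Code) : Prop := ∀ ⦃i j⦄, j ∈ neighbors m i → i ∈ neighbors m j

theorem IsSymmCode.mem_usedLabels_left (hm : IsSymmCode m) (h : j ∈ neighbors m i) :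
    i ∈ usedLabels m :=
  mem_usedLabels.2 ⟨lt_of_mem_neighbors (hm h), j, h⟩

theorem IsSymmCode.mem_usedLabels_right (hm : IsSymmCode m) (h : j ∈ neighbors m i) :
    j ∈ usedLabels m :=
  hm.mem_usedLabels_left (hm h)

theorem mem_neighbors_removeVertex (hm : IsSymmCode m) (hi : i < 13) :
    y ∈ neighbors (removeVertex m i) x ↔ y ∈ neighbors m x ∧ x ≠ i ∧ y ≠ i := by
  have mem_foldl (l : List ℕ) (hl : ∀ j ∈ l, j < 13) (m : Code) :
      y ∈ neighbors (l.foldl (fun m j => removeEdge m i j) m) x ↔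
        y ∈ neighbors m x ∧ ∀ j ∈ l, ¬ (x = i ∧ y = j ∨ x = j ∧ y = i) := by
    induction l generalizing m with
    | nil => simp
    | cons j l ih =>
      obtain ⟨hj, hl⟩ := List.forall_mem_cons.1 hl
      rw [List.foldl_cons, ih hl, mem_neighbors_removeEdge hi hj, List.forall_mem_cons, and_assoc]
  rw [removeVertex, force_eq, mem_foldl _ fun j hj => lt_of_mem_neighbors hj]
  refine and_congr_right fun hxy => ⟨fun h => ⟨?_, ?_⟩, ?_⟩
  · rintro rfl
    exact h y hxy (.inl ⟨rfl, rfl⟩)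
  · rintro rfl
    exact h x (hm hxy) (.inr ⟨rfl, rfl⟩)
  · rintro ⟨hx, hy⟩ j -
    tauto

theorem freshLabel_spec (h : (usedLabels m).length < 13) :
    freshLabel m < 13 ∧ freshLabel m ∉ usedLabels m := by
  obtain ⟨i, hi⟩ : ∃ i, labels.find? (fun i => row m i = 0) = some i := by
    rw [← Option.isSome_iff_exists, List.find?_isSome]
    by_contra! hrow
    have hused : usedLabels m = labels :=
      List.filter_eq_self.2 fun i hi => by simpa using hrow i hi
    rw [hused] at h
    exact h.ne rfl
  have hrow := List.find?_some hi
  rw [freshLabel, hi, Option.getD_some, mem_usedLabels]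
  refine ⟨mem_labels.1 (List.mem_of_find?_eq_some hi), fun ⟨_, j, hj⟩ => ?_⟩
  exact row_eq_zero_iff.1 (by simpa using hrow) j hj

theorem mem_neighbors_addVertex {l : List ℕ} (h : (usedLabels m).length < 13)
    (hl : ∀ i ∈ l, i ∈ usedLabels m) : y ∈ neighbors (addVertex m l) x ↔
      y ∈ neighbors m x ∨ x = freshLabel m ∧ y ∈ l ∨ y = freshLabel m ∧ x ∈ l := by
  rw [addVertex, force_eq, mem_neighbors_addEdges]
  · simp only [List.mem_map, Prod.mk.injEq]
    grind
  · intro e he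
    obtain ⟨i, hi, rfl⟩ := List.mem_map.1 he
    exact ⟨(freshLabel_spec h).1, (mem_usedLabels.1 (hl i hi)).1⟩

theorem mem_codeEdges : (i, j) ∈ codeEdges m ↔ i < 13 ∧ j ∈ neighbors m i ∧ j < i := by
  simp [codeEdges, mem_labels]

end CodeArithmetic

/-- The code `m` describes the graph `G`, where `φ` sends the used labels to the vertices that are
not isolated. -/
structure HasCode (G : SimpleGraph V) (m : Code) (φ : ℕ → V) : Prop where
  symm : IsSymmCode m
  injOn : Set.InjOn φ {i | i ∈ usedLabels m}
  adj_iff : ∀ u v, G.Adj u v ↔ ∃ i j, j ∈ neighbors m i ∧ φ i = u ∧ φ j = v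

section HasCode

variable {G : SimpleGraph V} {m : Code} {φ : ℕ → V} {i j : ℕ} {t u : V}

theorem update_freshLabel (hused : (usedLabels m).length < 13) (hi : i ∈ usedLabels m) :
    Function.update φ (freshLabel m) t i = φ i := by
  refine Function.update_of_ne ?_ _ _
  rintro rfl
  exact (freshLabel_spec hused).2 hi

namespace HasCode

theorem adj (h : HasCode G m φ) (hij : j ∈ neighbors m i) : G.Adj (φ i) (φ j) :=
  (h.adj_iff _ _).2 ⟨i, j, hij, rfl, rfl⟩

theorem adj_map_iff (h : HasCode G m φ) (hi : i ∈ usedLabels m) (hj : j ∈ usedLabels m) :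
    G.Adj (φ i) (φ j) ↔ j ∈ neighbors m i := by
  refine ⟨fun hadj => ?_, h.adj⟩
  obtain ⟨i', j', hij, hi', hj'⟩ := (h.adj_iff _ _).1 hadj
  rwa [h.injOn hi (h.symm.mem_usedLabels_left hij) hi'.symm,
    h.injOn hj (h.symm.mem_usedLabels_right hij) hj'.symm]

theorem neighborSet_map (h : HasCode G m φ) (hi : i ∈ usedLabels m) :
    G.neighborSet (φ i) = φ '' {j | j ∈ neighbors m i} := by
  ext v
  refine ⟨fun hadj => ?_, ?_⟩
  · obtain ⟨i', j, hij, hi', rfl⟩ := (h.adj_iff _ _).1 hadj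
    rw [← h.injOn (h.symm.mem_usedLabels_left hij) hi hi']
    exact Set.mem_image_of_mem φ hij
  · rintro ⟨j, hij, rfl⟩
    exact h.adj hij

theorem ncard_image {l : List ℕ} (h : HasCode G m φ) (hl : l.Nodup)
    (hused : ∀ i ∈ l, i ∈ usedLabels m) : (φ '' {i | i ∈ l}).ncard = l.length := by
  have hinj : Set.InjOn φ {i | i ∈ l} := h.injOn.mono hused
  rw [hinj.ncard_image, ← List.toFinset_card_of_nodup hl,
    ← Set.ncard_coe_finset, List.coe_toFinset]

theorem deg_map (h : HasCode G m φ) (hi : i ∈ usedLabels m) : deg G (φ i) = codeDeg m i := by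
  rw [deg, h.neighborSet_map hi, codeDeg]
  exact h.ncard_image nodup_neighbors fun j hj => h.symm.mem_usedLabels_right hj

theorem support_eq (h : HasCode G m φ) : G.support = φ '' {i | i ∈ usedLabels m} := by
  ext v
  constructor
  · rintro ⟨u, huv⟩
    obtain ⟨i, j, hij, rfl, -⟩ := (h.adj_iff _ _).1 huv
    exact Set.mem_image_of_mem φ (h.symm.mem_usedLabels_left hij)
  · rintro ⟨i, hi, rfl⟩
    obtain ⟨-, j, hij⟩ := mem_usedLabels.1 hi
    exact ⟨φ j, h.adj hij⟩

theorem exists_of_mem_support (h : HasCode G m φ) (hu : u ∈ G.support) :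
    ∃ i ∈ usedLabels m, φ i = u := by
  rwa [h.support_eq] at hu

theorem ncard_support (h : HasCode G m φ) : G.support.ncard = (usedLabels m).length := by
  rw [h.support_eq]
  exact h.ncard_image nodup_usedLabels fun _ => id

theorem degSum_eq [Finite V] (h : HasCode G m φ) : degSum m = 2 * edgeCount G := by
  classical
  have hsupport : G.support.toFinite.toFinset = (usedLabels m).toFinset.image φ := by
    ext v
    simp [h.support_eq]
  rw [degSum, ← List.sum_toFinset _ nodup_labels, ← sum_deg_support, hsupport,
    Finset.sum_image (by simpa using h.injOn)]
  refine (Finset.sum_subset_zero_on_sdiff ?_ ?_ ?_).symm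
  · exact fun i hi => List.mem_toFinset.2 (List.mem_of_mem_filter (List.mem_toFinset.1 hi))
  · intro i hi
    simp only [Finset.mem_sdiff, List.mem_toFinset, mem_usedLabels, mem_labels, not_and,
      not_exists] at hi
    rw [codeDeg, List.length_eq_zero_iff, List.eq_nil_iff_forall_not_mem]
    exact hi.2 hi.1
  · exact fun i hi => h.deg_map (List.mem_toFinset.1 hi)

theorem addEdge (h : HasCode G m φ) (hi : i < 13) (hj : j < 13) (hij : φ i ≠ φ j)
    (hinj : Set.InjOn φ (insert i (insert j {k | k ∈ usedLabels m}))) :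
    HasCode (G ⊔ edge (φ i) (φ j)) (addEdge m i j) φ where
  symm k l hkl := by
    rw [mem_neighbors_addEdge hi hj] at hkl ⊢
    have := @h.symm k l
    tauto
  injOn := by
    refine hinj.mono fun k hk => ?_
    obtain ⟨-, l, hl⟩ := mem_usedLabels.1 hk
    rw [mem_neighbors_addEdge hi hj] at hl
    obtain hl | hl | hl := hl
    · exact .inr (.inr (h.symm.mem_usedLabels_left hl))
    · exact .inl hl.1
    · exact .inr (.inl hl.1)
  adj_iff u v := by
    simp only [sup_adj, edge_adj, h.adj_iff, mem_neighbors_addEdge hi hj]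
    constructor
    · rintro (⟨k, l, hkl, huv⟩ | ⟨⟨rfl, rfl⟩ | ⟨rfl, rfl⟩, -⟩)
      exacts [⟨k, l, .inl hkl, huv⟩, ⟨i, j, by simp⟩, ⟨j, i, by simp⟩]
    · rintro ⟨k, l, hkl | ⟨rfl, rfl⟩ | ⟨rfl, rfl⟩, rfl, rfl⟩
      exacts [.inl ⟨k, l, hkl, rfl, rfl⟩, .inr ⟨.inl ⟨rfl, rfl⟩, hij⟩,
        .inr ⟨.inr ⟨rfl, rfl⟩, hij.symm⟩]

theorem removeVertex (h : HasCode G m φ) (hi : i ∈ usedLabels m) :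
    HasCode (G.deleteIncidenceSet (φ i)) (removeVertex m i) φ where
  symm k l hkl := by
    rw [mem_neighbors_removeVertex h.symm (mem_usedLabels.1 hi).1] at hkl ⊢
    exact ⟨h.symm hkl.1, hkl.2.symm⟩
  injOn := h.injOn.mono fun k => mem_usedLabels_mono fun l hl =>
    ((mem_neighbors_removeVertex h.symm (mem_usedLabels.1 hi).1).1 hl).1
  adj_iff u v := by
    simp only [deleteIncidenceSet_adj, mem_neighbors_removeVertex h.symm (mem_usedLabels.1 hi).1]
    constructor
    · rintro ⟨huv, hu, hv⟩
      obtain ⟨k, l, hkl, rfl, rfl⟩ := (h.adj_iff _ _).1 huv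
      exact ⟨k, l, ⟨hkl, ne_of_apply_ne φ hu, ne_of_apply_ne φ hv⟩, rfl, rfl⟩
    · rintro ⟨k, l, ⟨hkl, hk, hl⟩, rfl, rfl⟩
      exact ⟨h.adj hkl, h.injOn.ne (h.symm.mem_usedLabels_left hkl) hi hk,
        h.injOn.ne (h.symm.mem_usedLabels_right hkl) hi hl⟩

theorem removeEdge (h : HasCode G m φ) (hi : i ∈ usedLabels m) (hj : j ∈ usedLabels m) :
    HasCode (G.deleteEdges {s(φ i, φ j)}) (removeEdge m i j) φ where
  symm k l hkl := by
    rw [mem_neighbors_removeEdge (mem_usedLabels.1 hi).1 (mem_usedLabels.1 hj).1] at hkl ⊢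
    exact ⟨h.symm hkl.1, by tauto⟩
  injOn := h.injOn.mono fun k => mem_usedLabels_mono fun l hl =>
    ((mem_neighbors_removeEdge (mem_usedLabels.1 hi).1 (mem_usedLabels.1 hj).1).1 hl).1
  adj_iff u v := by
    simp only [deleteEdges_adj, Set.mem_singleton_iff, Sym2.eq_iff,
      mem_neighbors_removeEdge (mem_usedLabels.1 hi).1 (mem_usedLabels.1 hj).1]
    constructor
    · rintro ⟨huv, hne⟩
      obtain ⟨k, l, hkl, rfl, rfl⟩ := (h.adj_iff _ _).1 huv
      exact ⟨k, l, ⟨hkl, by grind⟩, rfl, rfl⟩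
    · rintro ⟨k, l, ⟨hkl, hne⟩, rfl, rfl⟩
      have hk := h.symm.mem_usedLabels_left hkl
      have hl := h.symm.mem_usedLabels_right hkl
      refine ⟨h.adj hkl, ?_⟩
      rwa [h.injOn.eq_iff hk hi, h.injOn.eq_iff hk hj, h.injOn.eq_iff hl hi, h.injOn.eq_iff hl hj]

theorem map_ne_of_delete (h : HasCode (G.deleteIncidenceSet t) m φ) (hi : i ∈ usedLabels m) :
    φ i ≠ t := by
  obtain ⟨v, hv⟩ : φ i ∈ (G.deleteIncidenceSet t).support :=
    h.support_eq ▸ Set.mem_image_of_mem φ hi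
  exact (deleteIncidenceSet_adj.1 hv).2.1

theorem injOn_addVertex {l : List ℕ} (h : HasCode (G.deleteIncidenceSet t) m φ)
    (hused : (usedLabels m).length < 13) (hl : ∀ i ∈ l, i ∈ usedLabels m) :
    Set.InjOn (Function.update φ (freshLabel m) t)
      {i | i ∈ usedLabels (AlmostPlanar.addVertex m l)} := by
  have mem_used (i) (hi : i ∈ usedLabels (AlmostPlanar.addVertex m l)) :
      i = freshLabel m ∨ i ∈ usedLabels m := by
    obtain ⟨-, j, hij⟩ := mem_usedLabels.1 hi
    rw [mem_neighbors_addVertex hused hl] at hij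
    obtain hij | hij | hij := hij
    exacts [.inr (h.symm.mem_usedLabels_left hij), .inl hij.1, .inr (hl i hij.2)]
  intro i hi j hj hij
  obtain rfl | hi := mem_used i hi <;> obtain rfl | hj := mem_used j hj
  · rfl
  · rw [Function.update_self, update_freshLabel hused hj] at hij
    exact absurd hij.symm (h.map_ne_of_delete hj)
  · rw [Function.update_self, update_freshLabel hused hi] at hij
    exact absurd hij (h.map_ne_of_delete hi)
  · rw [update_freshLabel hused hi, update_freshLabel hused hj] at hij
    exact h.injOn hi hj hij

theorem addVertex {l : List ℕ} (h : HasCode (G.deleteIncidenceSet t) m φ)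
    (hused : (usedLabels m).length < 13) (hl : ∀ i ∈ l, i ∈ usedLabels m)
    (hN : G.neighborSet t = φ '' {i | i ∈ l}) :
    HasCode G (addVertex m l) (Function.update φ (freshLabel m) t) where
  symm i j hij := by
    rw [mem_neighbors_addVertex hused hl] at hij ⊢
    have := @h.symm i j
    tauto
  injOn := h.injOn_addVertex hused hl
  adj_iff u v := by
    simp only [mem_neighbors_addVertex hused hl]
    have adj_t (v) : G.Adj t v ↔ ∃ i ∈ l, φ i = v := Set.ext_iff.1 hN v
    constructor
    · intro huv
      by_cases hu : u = t
      · obtain ⟨i, hi, rfl⟩ := (adj_t v).1 (hu ▸ huv)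
        exact ⟨freshLabel m, i, .inr (.inl ⟨rfl, hi⟩), by simp [hu],
          update_freshLabel hused (hl i hi)⟩
      by_cases hv : v = t
      · obtain ⟨i, hi, rfl⟩ := (adj_t u).1 (hv ▸ huv.symm)
        exact ⟨i, freshLabel m, .inr (.inr ⟨rfl, hi⟩), update_freshLabel hused (hl i hi),
          by simp [hv]⟩
      obtain ⟨i, j, hij, rfl, rfl⟩ := (h.adj_iff u v).1 (deleteIncidenceSet_adj.2 ⟨huv, hu, hv⟩)
      exact ⟨i, j, .inl hij, update_freshLabel hused (h.symm.mem_usedLabels_left hij),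
        update_freshLabel hused (h.symm.mem_usedLabels_right hij)⟩
    · rintro ⟨i, j, hij | ⟨rfl, hj⟩ | ⟨rfl, hi⟩, rfl, rfl⟩
      · rw [update_freshLabel hused (h.symm.mem_usedLabels_left hij),
          update_freshLabel hused (h.symm.mem_usedLabels_right hij)]
        exact (deleteIncidenceSet_adj.1 (h.adj hij)).1
      · rw [Function.update_self, update_freshLabel hused (hl j hj), adj_t]
        exact ⟨j, hj, rfl⟩
      · rw [Function.update_self, update_freshLabel hused (hl i hi), adj_comm, adj_t]
        exact ⟨i, hi, rfl⟩

end HasCode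

end HasCode

section Soundness

variable {G : SimpleGraph V} {m : Code} {φ : ℕ → V}

theorem HasCode.exists_suppressCode (h : HasCode G m φ) (t : ℕ) :
    ∃ G', HasCode G' (suppressCode m t) φ ∧ (G'.IsPlanar → G.IsPlanar) := by
  have used_t {j : ℕ} (hj : j ∈ neighbors m t) : t ∈ usedLabels m := h.symm.mem_usedLabels_left hj
  rw [suppressCode, force_eq]
  split
  case h_1 x hN =>
    have ht := used_t (j := x) (by simp [hN])
    refine ⟨_, h.removeVertex ht, fun hG' =>
      isPlanar_of_suppress (t := φ t) (x := φ x) (y := φ x) ?_ ?_⟩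
    · simp [h.neighborSet_map ht, hN]
    · rwa [suppress_eq_delete (by simp [h.neighborSet_map ht, hN]) (.inl rfl)]
  case h_2 x y hN =>
    have hx : x ∈ neighbors m t := by simp [hN]
    have hy : y ∈ neighbors m t := by simp [hN]
    have ht := used_t hx
    have hxy : x ≠ y := by simpa [hN] using nodup_neighbors (m := m) (i := t)
    have hx' := h.symm.mem_usedLabels_right hx
    have hy' := h.symm.mem_usedLabels_right hy
    refine ⟨_, (h.removeVertex ht).addEdge (lt_of_mem_neighbors hx) (lt_of_mem_neighbors hy)
      (h.injOn.ne hx' hy' hxy) (h.injOn.mono ?_), isPlanar_of_suppress ?_⟩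
    · refine Set.insert_subset hx' (Set.insert_subset hy' fun k =>
        mem_usedLabels_mono fun l hl => ?_)
      exact ((mem_neighbors_removeVertex h.symm (mem_usedLabels.1 ht).1).1 hl).1
    · rw [h.neighborSet_map ht, ← Set.image_pair]
      congr 1
      ext j
      simp [hN]
  case h_3 => exact ⟨G, h, id⟩

theorem HasCode.exists_foldl_suppressCode (h : HasCode G m φ) (l : List ℕ) :
    ∃ G', HasCode G' (l.foldl suppressCode m) φ ∧ (G'.IsPlanar → G.IsPlanar) := by
  induction l generalizing G m with
  | nil => exact ⟨G, h, id⟩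
  | cons t l ih =>
    obtain ⟨G₁, h₁, hG₁⟩ := h.exists_suppressCode t
    obtain ⟨G₂, h₂, hG₂⟩ := ih h₁
    exact ⟨G₂, h₂, hG₁ ∘ hG₂⟩

theorem HasCode.ncard_le [Finite V] (h : HasCode G m φ) {s : Set V} (p : ℕ → Bool)
    (hs : s ⊆ G.support) (hp : ∀ i ∈ usedLabels m, φ i ∈ s → p i) :
    s.ncard ≤ (labels.filter p).length := by
  calc s.ncard ≤ (φ '' {i | i ∈ (usedLabels m).filter p}).ncard := by
        refine Set.ncard_le_ncard fun v hv => ?_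
        obtain ⟨i, hi, rfl⟩ := h.exists_of_mem_support (hs hv)
        exact ⟨i, List.mem_filter.2 ⟨hi, hp i hi hv⟩, rfl⟩
    _ = ((usedLabels m).filter p).length :=
        h.ncard_image (nodup_usedLabels.filter _) fun i => List.mem_of_mem_filter
    _ ≤ (labels.filter p).length := (List.filter_sublist.filter p).length_le

theorem HasCode.exists_sublist (h : HasCode G m φ) (s : Finset V) (hs : (s : Set V) ⊆ G.support) :
    ∃ l : List ℕ, l.Sublist (usedLabels m) ∧ l.length = s.card ∧ φ '' {i | i ∈ l} = s := by
  classical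
  have himage : φ '' {i | i ∈ (usedLabels m).filter (φ · ∈ s)} = s := by
    ext v
    constructor
    · rintro ⟨i, hi, rfl⟩
      simpa using List.of_mem_filter hi
    · intro hv
      obtain ⟨i, hi, rfl⟩ := h.exists_of_mem_support (hs hv)
      exact ⟨i, List.mem_filter.2 ⟨hi, by simpa using hv⟩, rfl⟩
  refine ⟨_, List.filter_sublist, ?_, himage⟩
  rw [← h.ncard_image (nodup_usedLabels.filter _) fun i => List.mem_of_mem_filter, himage,
    Set.ncard_coe_finset]

theorem HasCode.isPlanar [Finite V] (h : HasCode G m φ) (hm : isPlanarCode m) : G.IsPlanar := by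
  obtain ⟨G', h', hG'⟩ := h.exists_foldl_suppressCode labels
  refine hG' ?_
  simp only [isPlanarCode, force_eq, forceList_eq, Bool.or_eq_true, Bool.and_eq_true,
    decide_eq_true_eq, h'.degSum_eq, ← h'.ncard_support] at hm
  obtain hE | ⟨⟨hE, hdeg⟩, hV, hcommon⟩ := hm
  · exact isPlanar_of_edgeCount_le_eight (by lia)
  refine isPlanar_of_edgeCount_le_ten (by lia) hV ?_ fun s hs => ?_
  · refine (h'.ncard_le _ (fun v hv => ?_) fun i hi hdeg => ?_).trans_lt hdeg
    · exact mem_support_iff_deg_ne_zero.2 (Nat.ne_of_gt (Nat.lt_of_lt_of_le (by simp) hv))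
    · simpa [h'.deg_map hi] using hdeg
  · obtain ⟨u, hu⟩ : s.Nonempty := Finset.card_pos.1 (by lia)
    by_cases hne : ∃ v, ∀ u ∈ s, G'.Adj u v
    · obtain ⟨v, hv⟩ := hne
      obtain ⟨l, hl, hlen, himage⟩ := h'.exists_sublist s fun u hu => ⟨v, hv u hu⟩
      have hfew := List.all_eq_true.1 hcommon l (List.mem_sublistsLen.2 ⟨hl, hlen.trans hs⟩)
      refine (h'.ncard_le _ (fun v hv => ⟨u, (hv u hu).symm⟩) fun j hj hadj => ?_).trans_lt
        (of_decide_eq_true hfew)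
      rw [List.all_eq_true]
      intro i hi
      rw [← mem_neighbors, ← h'.adj_map_iff (hl.subset hi) hj]
      exact hadj _ (by simpa using himage.le (Set.mem_image_of_mem φ hi))
    · have hempty : {v | ∀ u ∈ s, G'.Adj u v} = ∅ :=
        Set.eq_empty_of_forall_notMem (not_exists.1 hne)
      simp [hempty]

theorem HasCode.isApex [Finite V] {k : ℕ} (h : HasCode G m φ) (hm : isApexCode k m) :
    IsApex k G := by
  induction k generalizing G m with
  | zero => exact h.isPlanar hm
  | succ k ih =>
    simp only [isApexCode, force_eq, List.any_eq_true] at hm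
    obtain ⟨i, hi, hm⟩ := hm
    exact .of_delete (φ i) (ih (h.removeVertex hi) hm)

end Soundness

section Extensions

/-- The graph `G` is described by a code in the list `L`. -/
def IsCoded (G : SimpleGraph V) (L : List Code) : Prop := ∃ m ∈ L, ∃ φ, HasCode G m φ

variable {G : SimpleGraph V} {m : Code} {φ : ℕ → V} {t x y : V} {L : List Code}

theorem IsCoded.mono {L' : List Code} (h : IsCoded G L) (hL : L ⊆ L') : IsCoded G L' := by
  obtain ⟨m, hm, φ, h⟩ := h
  exact ⟨m, hL hm, φ, h⟩

theorem IsCoded.flatMap {G' : SimpleGraph V'} {f : Code → List Code} (h : IsCoded G' L)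
    (hf : ∀ m φ, HasCode G' m φ → IsCoded G (f m)) : IsCoded G (L.flatMap f) := by
  obtain ⟨m, hm, φ, h⟩ := h
  exact (hf m φ h).mono fun c hc => List.mem_flatMap_of_mem hm hc

theorem deleteEdges_suppress (hadj : ¬ G.Adj x y) :
    (suppress G t x y).deleteEdges {s(x, y)} = G.deleteIncidenceSet t := by
  rw [suppress, deleteEdges_sup]
  ext u v
  simp only [sup_adj, deleteEdges_adj, Set.mem_singleton_iff, edge_adj, Sym2.eq_iff,
    deleteIncidenceSet_adj]
  have := G.adj_symm (u := y) (v := x)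
  grind

theorem HasCode.adj_of_codeDeg_lt {δ i : ℕ} (h : HasCode (G.deleteIncidenceSet x) m φ)
    (hδ : MinDeg G δ) (hi : i ∈ usedLabels m) (hlt : codeDeg m i < δ) : G.Adj x (φ i) := by
  by_contra hadj
  have hsupport : φ i ∈ G.support :=
    support_mono (deleteIncidenceSet_le G x) (h.support_eq ▸ Set.mem_image_of_mem φ hi)
  refine (hδ _ hsupport).not_gt ?_
  rwa [← deg_delete_of_not_adj (h.map_ne_of_delete hi) hadj, h.deg_map hi]

variable [Finite V]

theorem HasCode.length_usedLabels_lt (h : HasCode (G.deleteIncidenceSet t) m φ)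
    (ht : t ∈ G.support) (hV : G.support.ncard ≤ 13) : (usedLabels m).length < 13 :=
  h.ncard_support ▸ (ncard_support_delete_lt ht).trans_le hV

theorem HasCode.exists_of_adj {v : V} (h : HasCode (G.deleteIncidenceSet x) m φ)
    (hG : MinDeg G 2) (hadj : G.Adj x v) : ∃ i ∈ usedLabels m, φ i = v :=
  h.exists_of_mem_support ((hG.support_delete x).ge ⟨⟨x, hadj.symm⟩, hadj.ne'⟩)

theorem isCoded_subdivisions (h : HasCode (suppress G t x y) m φ)
    (hN : G.neighborSet t = {x, y}) (hxy : x ≠ y) (hadj : ¬ G.Adj x y) (hG : MinDeg G 2)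
    (hV : G.support.ncard ≤ 13) : IsCoded G (subdivisions m) := by
  have htx : G.Adj t x := hN.ge (.inl rfl)
  have hty : G.Adj t y := hN.ge (.inr rfl)
  obtain ⟨i, j, hij, hi, hj⟩ := (h.adj_iff x y).1 (suppress_adj.2 (.inr ⟨by simp, hxy⟩))
  wlog hlt : j < i generalizing x y i j
  · refine this (suppress_comm G t x y ▸ h) (Set.pair_comm x y ▸ hN) hxy.symm
      (fun h => hadj h.symm) hty htx j i (h.symm hij) hj hi ?_
    exact lt_of_le_of_ne (not_lt.1 hlt) fun hne => hxy (by rw [← hi, ← hj, hne])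
  have hi' := h.symm.mem_usedLabels_left hij
  have hj' := h.symm.mem_usedLabels_right hij
  have hdel := h.removeEdge hi' hj'
  rw [hi, hj, deleteEdges_suppress hadj] at hdel
  have mem_used {k : ℕ} (hk : k ∈ usedLabels m) (hadj : G.Adj t (φ k)) :
      k ∈ usedLabels (removeEdge m i j) := by
    obtain ⟨k', hk', heq⟩ := hdel.exists_of_adj hG hadj
    refine h.injOn (mem_usedLabels_mono (fun l hl => ?_) hk') hk heq ▸ hk'
    exact ((mem_neighbors_removeEdge (mem_usedLabels.1 hi').1 (mem_usedLabels.1 hj').1).1 hl).1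
  refine ⟨addVertex (removeEdge m i j) [i, j], ?_, _,
    hdel.addVertex (hdel.length_usedLabels_lt ⟨x, htx⟩ hV) ?_ ?_⟩
  · rw [subdivisions, force_eq]
    exact List.mem_map.2 ⟨(i, j), mem_codeEdges.2 ⟨(mem_usedLabels.1 hi').1, hij, hlt⟩, rfl⟩
  · simp only [List.forall_mem_cons, List.not_mem_nil, false_imp_iff, forall_const, and_true]
    exact ⟨mem_used hi' (hi ▸ htx), mem_used hj' (hj ▸ hty)⟩
  · rw [hN, ← hi, ← hj, ← Set.image_pair]
    congr 1
    ext k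
    simp

theorem isCoded_doublings (h : HasCode (G.deleteIncidenceSet t) m φ)
    (hN : G.neighborSet t = {x, y}) (hadj : G.Adj x y) (hV : G.support.ncard ≤ 13) :
    IsCoded G (doublings m) := by
  have htx : G.Adj t x := hN.ge (.inl rfl)
  have hty : G.Adj t y := hN.ge (.inr rfl)
  obtain ⟨i, j, hij, rfl, rfl⟩ :=
    (h.adj_iff x y).1 (deleteIncidenceSet_adj.2 ⟨hadj, htx.ne', hty.ne'⟩)
  wlog hlt : j < i generalizing i j
  · refine this j i (h.symm hij) hty htx (by rwa [Set.pair_comm]) hadj.symm ?_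
    exact lt_of_le_of_ne (not_lt.1 hlt) fun hne => hadj.ne (by rw [hne])
  have hi := h.symm.mem_usedLabels_left hij
  have hj := h.symm.mem_usedLabels_right hij
  refine ⟨addVertex m [i, j], ?_, _,
    h.addVertex (h.length_usedLabels_lt ⟨_, htx⟩ hV) ?_ ?_⟩
  · rw [doublings, force_eq]
    exact List.mem_map.2 ⟨(i, j), mem_codeEdges.2 ⟨(mem_usedLabels.1 hi).1, hij, hlt⟩, rfl⟩
  · simp [hi, hj]
  · rw [hN, ← Set.image_pair]
    congr 1
    ext k
    simp

theorem HasCode.codeDeg_add_one {i : ℕ} (h : HasCode (G.deleteIncidenceSet x) m φ)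
    (hi : i ∈ usedLabels m) (hadj : G.Adj x (φ i)) : codeDeg m i + 1 = deg G (φ i) := by
  rw [← h.deg_map hi, deg_delete_of_adj hadj]

theorem isCoded_stars {δ Δ : ℕ} (h : HasCode (G.deleteIncidenceSet x) m φ)
    (hδ : MinDeg G δ) (h2 : 2 ≤ δ) (hΔ : ∀ v, G.Adj x v → deg G v ≤ Δ) (hx : x ∈ G.support)
    (hV : G.support.ncard ≤ 13) : IsCoded G (stars δ Δ (deg G x) m) := by
  classical
  set low := (usedLabels m).filter fun i => codeDeg m i < δ with hlow
  set high := (usedLabels m).filter fun i => δ ≤ codeDeg m i ∧ codeDeg m i < Δ with hhigh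
  set l := high.filter fun i => G.Adj x (φ i) with hl
  have mem_used {i : ℕ} (hi : i ∈ low ++ l) : i ∈ usedLabels m := by
    simp only [hlow, hl, hhigh, List.mem_append, List.mem_filter] at hi
    tauto
  have hnodup : (low ++ l).Nodup := by
    refine (nodup_usedLabels.filter _).append ((nodup_usedLabels.filter _).filter _) ?_
    intro i hi hi'
    simp only [hl, hhigh, List.mem_filter, decide_eq_true_eq] at hi hi'
    lia
  have hN : G.neighborSet x = φ '' {i | i ∈ low ++ l} := by
    ext v
    constructor
    · intro hadj
      obtain ⟨i, hi, rfl⟩ := h.exists_of_adj (hδ.mono h2) hadj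
      refine Set.mem_image_of_mem φ ?_
      have hdeg := h.codeDeg_add_one hi hadj
      have hle := hΔ _ hadj
      by_cases hlt : codeDeg m i < δ
      · exact List.mem_append_left _ (List.mem_filter.2 ⟨hi, decide_eq_true hlt⟩)
      · refine List.mem_append_right _ (List.mem_filter.2 ⟨List.mem_filter.2 ⟨hi, ?_⟩, ?_⟩)
        · exact decide_eq_true ⟨not_lt.1 hlt, by lia⟩
        · exact decide_eq_true hadj
    · rintro ⟨i, hi, rfl⟩
      obtain hi | hi := List.mem_append.1 hi
      · obtain ⟨hi, hlt⟩ := List.mem_filter.1 hi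
        exact h.adj_of_codeDeg_lt hδ hi (of_decide_eq_true hlt)
      · simpa using List.of_mem_filter hi
  have hlen : deg G x = low.length + l.length := by
    rw [deg, hN, h.ncard_image hnodup fun _ => mem_used, List.length_append]
  refine ⟨addVertex m (low ++ l), ?_, _,
    h.addVertex (h.length_usedLabels_lt hx hV) (fun _ => mem_used) hN⟩
  simp only [stars, force_eq, forceList_eq]
  rw [if_neg (by lia)]
  refine List.mem_map_of_mem (List.mem_sublistsLen.2 ⟨List.filter_sublist, ?_⟩)
  rw [hlen, Nat.add_sub_cancel_left]

end Extensions

section Isomorphism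

variable {G : SimpleGraph V} {m m' : Code} {φ : ℕ → V}

theorem hasCode_addEdges {l : List (ℕ × ℕ)} (hl : ∀ e ∈ l, e.1 < 13 ∧ e.2 < 13)
    (hinj : ∀ i ∈ usedLabels (addEdges 0 l), ∀ j ∈ usedLabels (addEdges 0 l), φ i = φ j → i = j)
    (hadj : ∀ u v, G.Adj u v ↔ ∃ e ∈ l, s(φ e.1, φ e.2) = s(u, v)) :
    HasCode G (addEdges 0 l) φ where
  symm i j hij := by
    rw [mem_neighbors_addEdges_zero hl] at hij ⊢
    exact hij.symm
  injOn i hi j hj := hinj i hi j hj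
  adj_iff u v := by
    simp only [hadj, mem_neighbors_addEdges_zero hl, Sym2.eq_iff]
    constructor
    · rintro ⟨e, he, ⟨rfl, rfl⟩ | ⟨rfl, rfl⟩⟩
      exacts [⟨e.1, e.2, .inl he, rfl, rfl⟩, ⟨e.2, e.1, .inr he, rfl, rfl⟩]
    · rintro ⟨i, j, hij | hij, rfl, rfl⟩
      exacts [⟨_, hij, by simp⟩, ⟨_, hij, by simp⟩]

theorem HasCode.map {H : SimpleGraph W} {ψ : ℕ → W} (h : HasCode H m ψ) (f : W ↪ V) :
    HasCode (H.map f) m (f ∘ ψ) where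
  symm := h.symm
  injOn := f.injective.comp_injOn h.injOn
  adj_iff u v := by
    simp only [map_adj, h.adj_iff]
    constructor
    · rintro ⟨_, _, ⟨i, j, hij, rfl, rfl⟩, rfl, rfl⟩
      exact ⟨i, j, hij, rfl, rfl⟩
    · rintro ⟨i, j, hij, rfl, rfl⟩
      exact ⟨_, _, ⟨i, j, hij, rfl, rfl⟩, rfl, rfl⟩

theorem HasCode.adj_iff_codeEdges (h : HasCode G m φ) (u v : V) :
    G.Adj u v ↔ ∃ e ∈ codeEdges m, s(φ e.1, φ e.2) = s(u, v) := by
  constructor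
  · intro huv
    obtain ⟨i, j, hij, rfl, rfl⟩ := (h.adj_iff u v).1 huv
    have hi := (mem_usedLabels.1 (h.symm.mem_usedLabels_left hij)).1
    obtain hlt | hlt := (ne_of_apply_ne φ huv.ne).lt_or_gt
    · exact ⟨(j, i), mem_codeEdges.2 ⟨lt_of_mem_neighbors hij, h.symm hij, hlt⟩, Sym2.eq_swap⟩
    · exact ⟨(i, j), mem_codeEdges.2 ⟨hi, hij, hlt⟩, rfl⟩
  · rintro ⟨e, he, heq⟩
    rw [← mem_edgeSet, ← heq]
    exact h.adj (mem_codeEdges.1 he).2.1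

theorem HasCode.exists_relabel {s : ℕ → ℕ} (h : HasCode G m φ)
    (hinj : Set.InjOn s {i | i ∈ usedLabels m}) (hlt : ∀ i ∈ usedLabels m, s i < 13) :
    ∃ ψ, HasCode G (relabel s m) ψ := by
  have left_inv {i : ℕ} (hi : i ∈ usedLabels m) :
      Function.invFunOn s {i | i ∈ usedLabels m} (s i) = i := hinj.leftInvOn_invFunOn hi
  have mem_used {e : ℕ × ℕ} (he : e ∈ codeEdges m) : e.1 ∈ usedLabels m ∧ e.2 ∈ usedLabels m :=
    have hadj := (mem_codeEdges.1 he).2.1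
    ⟨h.symm.mem_usedLabels_left hadj, h.symm.mem_usedLabels_right hadj⟩
  have hbound : ∀ e ∈ (codeEdges m).map fun e => (s e.1, s e.2), e.1 < 13 ∧ e.2 < 13 := by
    simp only [List.mem_map]
    rintro _ ⟨e, he, rfl⟩
    exact ⟨hlt _ (mem_used he).1, hlt _ (mem_used he).2⟩
  have exists_preimage {x : ℕ} (hx : x ∈ usedLabels (relabel s m)) :
      ∃ i ∈ usedLabels m, s i = x := by
    obtain ⟨-, y, hxy⟩ := mem_usedLabels.1 hx
    simp only [relabel, mem_neighbors_addEdges_zero hbound, List.mem_map] at hxy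
    obtain ⟨e, he, heq⟩ | ⟨e, he, heq⟩ := hxy <;> cases heq
    exacts [⟨_, (mem_used he).1, rfl⟩, ⟨_, (mem_used he).2, rfl⟩]
  refine ⟨φ ∘ Function.invFunOn s {i | i ∈ usedLabels m},
    hasCode_addEdges hbound (fun x hx y hy hxy => ?_) fun u v => ?_⟩
  · obtain ⟨i, hi, rfl⟩ := exists_preimage hx
    obtain ⟨j, hj, rfl⟩ := exists_preimage hy
    rw [Function.comp_apply, left_inv hi, Function.comp_apply, left_inv hj] at hxy
    rw [h.injOn hi hj hxy]
  · simp only [h.adj_iff_codeEdges, List.mem_map, exists_exists_and_eq_and, Function.comp_apply]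
    refine exists_congr fun e => and_congr_right fun he => ?_
    rw [left_inv (mem_used he).1, left_inv (mem_used he).2]

theorem HasCode.exists_of_isIso (h : HasCode G m φ) (hm : isIso m m') : ∃ ψ, HasCode G m' ψ := by
  simp only [isIso, force_eq, Bool.and_eq_true] at hm
  obtain ⟨-, hm⟩ := hm
  split at hm
  · simp at hm
  · simp only [forceList_eq, decide_eq_true_eq, List.forall_mem_map] at hm
    obtain ⟨hnodup, hlt, rfl⟩ := hm
    exact h.exists_relabel (List.inj_on_of_nodup_map hnodup) hlt

theorem IsCoded.of_isIso {L L' : List Code} (h : IsCoded G L)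
    (hL : ∀ m ∈ L, (L'.any (isIso m) : Prop)) : IsCoded G L' := by
  obtain ⟨m, hm, φ, h⟩ := h
  obtain ⟨m', hm', hiso⟩ := List.any_eq_true.1 (hL m hm)
  obtain ⟨ψ, hψ⟩ := h.exists_of_isIso hiso
  exact ⟨m', hm', ψ, hψ⟩

theorem IsCoded.representatives {L : List Code} (h : IsCoded G L) :
    IsCoded G (representatives L) := by
  obtain ⟨m, hm, φ, h⟩ := h
  induction L with
  | nil => simp at hm
  | cons m' L ih =>
    simp only [AlmostPlanar.representatives, force_eq, forceList_eq]
    obtain rfl | hm := List.mem_cons.1 hm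
    · split
      case isTrue hany =>
        obtain ⟨m', hm', hiso⟩ := List.any_eq_true.1 hany
        obtain ⟨ψ, hψ⟩ := h.exists_of_isIso hiso
        exact ⟨m', hm', ψ, hψ⟩
      case isFalse => exact ⟨m, List.mem_cons_self, φ, h⟩
    · split
      · exact ih hm
      · exact (ih hm).mono (List.subset_cons_self _ _)

end Isomorphism

section Cores

/-- The complete bipartite graph with parts `{0, 1, 2}` and `{3, 4, 5}`. -/
def codeK33 : Code :=
  addEdges 0 [(0, 3), (0, 4), (0, 5), (1, 3), (1, 4), (1, 5), (2, 3), (2, 4), (2, 5)]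

/-- The complete graph on the labels `0, …, 4`. -/
def codeK5 : Code :=
  addEdges 0 [(0, 1), (0, 2), (0, 3), (0, 4), (1, 2), (1, 3), (1, 4), (2, 3), (2, 4), (3, 4)]

/-- The nonplanar graphs of minimum degree three with at most ten edges. -/
def kernels : List Code := [codeK33, codeK5, addEdge codeK33 0 1]

/-- The nonplanar graphs of minimum degree two with at most ten edges. -/
def cores10 : List Code := representatives (kernels ++ subdivisions codeK33)

/-- The nonplanar graphs with at most eleven edges and minimum degree exactly two, up to
isomorphism. -/
def cores11 : List Code :=
  representatives (cores10.flatMap subdivisions ++ doublings codeK33)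

/-- The nonplanar graphs of minimum degree two with at most twelve edges that have two vertices of
degree two, of which one has nonadjacent neighbours. The list contains isomorphic codes. -/
def cores12 : List Code := cores11.flatMap subdivisions

theorem hasCode_completeBipartiteGraph :
    HasCode (completeBipartiteGraph (Fin 3) (Fin 3)) codeK33
      fun i => if i < 3 then .inl (Fin.ofNat 3 i) else .inr (Fin.ofNat 3 i) :=
  hasCode_addEdges (by decide) (by decide +kernel)
    (by simp only [completeBipartiteGraph_adj]; decide +kernel)

theorem hasCode_top : HasCode (⊤ : SimpleGraph (Fin 5)) codeK5 (Fin.ofNat 5) :=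
  hasCode_addEdges (by decide) (by decide +kernel) (by decide +kernel)

theorem HasCode.isCoded_of_isContained [Finite V] {H : SimpleGraph W} {G : SimpleGraph V} {m : Code}
    {φ : ℕ → W} (hm : HasCode H m φ) (h : H ⊑ G) (hE : edgeCount G ≤ edgeCount H) :
    IsCoded G [m] := by
  obtain ⟨f, hf⟩ := exists_embedding_map_le h
  rw [← eq_of_edgeCount_le hf (by rwa [edgeCount_map])]
  exact ⟨m, by simp, _, hm.map f⟩

variable [Finite V] {G : SimpleGraph V} {t x y : V}

theorem isCoded_of_edgeCount_le_nine (hG : ¬ G.IsPlanar) (hE : edgeCount G ≤ 9) :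
    IsCoded G [codeK33] := by
  obtain h | h := not_and_or.1 hG
  · have := edgeCount_le_of_isMinor (not_not.1 h)
    rw [edgeCount_top] at this
    lia
  · rw [← edgeCount_completeBipartiteGraph] at hE
    exact hasCode_completeBipartiteGraph.isCoded_of_isContained
      (isContained_of_edgeCount_le (not_not.1 h) hE) hE

theorem exists_eq_map_sup_edge {H : SimpleGraph W} {f : W ↪ V} (hf : H.map f ≤ G)
    (hE : edgeCount G = edgeCount H + 1) :
    ∃ u v, G.Adj u v ∧ ¬ (H.map f).Adj u v ∧ G = H.map f ⊔ edge u v := by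
  have hne : ¬ G ≤ H.map f := fun hle => by
    have := edgeCount_mono hle
    rw [edgeCount_map] at this
    lia
  simp only [le_iff_adj, not_forall] at hne
  obtain ⟨u, v, huv, hnot⟩ := hne
  have hle : H.map f ⊔ edge u v ≤ G := sup_le hf ((edge_le_iff G).2 (.inr huv))
  have hlt : H.map f < H.map f ⊔ edge u v :=
    left_lt_sup.2 fun hle => hnot (hle (by simp [edge_adj, huv.ne]))
  have hcount : edgeCount (H.map f) < edgeCount (H.map f ⊔ edge u v) :=
    Set.ncard_lt_ncard (edgeSet_strict_mono hlt)
  rw [edgeCount_map] at hcount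
  exact ⟨u, v, huv, hnot, (eq_of_edgeCount_le hle (by lia)).symm⟩

theorem isCoded_kernels (hG : ¬ G.IsPlanar) (hE : edgeCount G ≤ 10) (hdeg : MinDeg G 3) :
    IsCoded G kernels := by
  obtain h | h := not_and_or.1 hG
  · rw [← edgeCount_top] at hE
    refine (hasCode_top.isCoded_of_isContained
      (isContained_of_edgeCount_le (not_not.1 h) hE) hE).mono ?_
    simp [kernels]
  obtain hE' | hE' := Nat.le_or_eq_of_le_succ hE
  · exact (isCoded_of_edgeCount_le_nine hG hE').mono (by simp [kernels])
  have hV := hdeg.mul_ncard_support_le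
  obtain ⟨f, hf⟩ := exists_embedding_map_le
    (isContained_of_ncard_support_le (not_not.1 h) exists_adj_completeBipartiteGraph
      (by rw [Nat.card_eq_fintype_card, Fintype.card_sum, Fintype.card_fin]; lia))
  obtain ⟨u, v, huv, hnot, hsup⟩ := exists_eq_map_sup_edge hf
    (by rw [hE', edgeCount_completeBipartiteGraph])
  have hm := hasCode_completeBipartiteGraph.map f
  have hsupport : ((completeBipartiteGraph (Fin 3) (Fin 3)).map f).support = G.support := by
    refine Set.eq_of_subset_of_ncard_le (support_mono hf) ?_
    rw [hm.ncard_support, show (usedLabels codeK33).length = 6 by decide +kernel]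
    lia
  obtain ⟨i, hi, rfl⟩ := hm.exists_of_mem_support (hsupport.ge ⟨v, huv⟩)
  obtain ⟨j, hj, rfl⟩ := hm.exists_of_mem_support (hsupport.ge ⟨_, huv.symm⟩)
  have hcode := hm.addEdge (mem_usedLabels.1 hi).1 (mem_usedLabels.1 hj).1 huv.ne
    (hm.injOn.mono (Set.insert_subset hi (Set.insert_subset hj subset_rfl)))
  rw [← hsup] at hcode
  have key : ∀ i ∈ usedLabels codeK33, ∀ j ∈ usedLabels codeK33, j ∉ neighbors codeK33 i →
      i ≠ j → kernels.any (isIso (addEdge codeK33 i j)) := by decide +kernel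
  refine IsCoded.of_isIso ⟨_, List.mem_singleton_self _, _, hcode⟩ (List.forall_mem_singleton.2 ?_)
  exact key i hi j hj (fun h => hnot (hm.adj h)) (ne_of_apply_ne _ huv.ne)

theorem MinDeg.suppress {d : ℕ} (hG : MinDeg G d) (hN : G.neighborSet t = {x, y}) (hxy : x ≠ y)
    (hadj : ¬ G.Adj x y) : MinDeg (suppress G t x y) d := by
  intro v hv
  have hvt : v ≠ t := by
    rintro rfl
    obtain ⟨u, hu⟩ := mem_support _ |>.1 hv
    have hx : G.Adj v x := hN.ge (.inl rfl)
    have hy : G.Adj v y := hN.ge (.inr rfl)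
    have := hx.ne
    have := hy.ne
    rw [suppress_adj] at hu
    grind
  rw [mem_support_iff_deg_ne_zero] at hv
  rw [deg_suppress hN hxy hadj hvt] at hv ⊢
  exact hG v (mem_support_iff_deg_ne_zero.2 hv)

theorem isCoded_cores10 (hG : ¬ G.IsPlanar) (hE : edgeCount G ≤ 10) (hdeg : MinDeg G 2) :
    IsCoded G cores10 := by
  refine IsCoded.representatives ?_
  by_cases hdeg' : MinDeg G 3
  · exact (isCoded_kernels hG hE hdeg').mono (List.subset_append_left _ _)
  simp only [MinDeg, not_forall, not_le] at hdeg'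
  obtain ⟨t, ht, hlt⟩ := hdeg'
  obtain ⟨x, y, hxy, hN⟩ := exists_neighborSet_eq_pair (Nat.le_antisymm (by lia) (hdeg t ht))
  have hadj := not_adj_of_deg_eq_two (k := 0) (m := 9)
    (fun _ hG' => isPlanar_of_edgeCount_le_eight (Nat.le_of_lt_succ hG')) hE hG hxy hN
  have hV := hdeg.mul_ncard_support_le
  obtain ⟨m, hm, φ, hφ⟩ := isCoded_of_edgeCount_le_nine (mt (isPlanar_of_suppress hN) hG)
    (by have := edgeCount_suppress_lt hN; lia)
  rw [List.mem_singleton.1 hm] at hφ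
  exact (isCoded_subdivisions hφ hN hxy hadj hdeg (by lia)).mono (List.subset_append_right _ _)

theorem isCoded_cores11 (hG : ¬ G.IsPlanar) (hE : edgeCount G ≤ 11) (hdeg : MinDeg G 2)
    (ht : deg G t = 2) : IsCoded G cores11 := by
  refine IsCoded.representatives ?_
  obtain ⟨x, y, hxy, hN⟩ := exists_neighborSet_eq_pair ht
  have hV := hdeg.mul_ncard_support_le
  by_cases hadj : G.Adj x y
  · have hdelete := edgeCount_delete_add_deg G t
    have hplanar := mt (isPlanar_of_suppress hN) hG
    rw [suppress_eq_delete hN (.inr hadj)] at hplanar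
    obtain ⟨m, hm, φ, hφ⟩ := isCoded_of_edgeCount_le_nine hplanar (by lia)
    rw [List.mem_singleton.1 hm] at hφ
    exact (isCoded_doublings hφ hN hadj (by lia)).mono (List.subset_append_right _ _)
  · refine (IsCoded.flatMap (isCoded_cores10 (mt (isPlanar_of_suppress hN) hG)
      (by have := edgeCount_suppress_lt hN; lia) (hdeg.suppress hN hxy hadj))
      fun m φ hφ => ?_).mono (List.subset_append_left _ _)
    exact isCoded_subdivisions hφ hN hxy hadj hdeg (by lia)

theorem isCoded_cores12 {t' : V} (hG : ¬ G.IsPlanar) (hE : edgeCount G ≤ 12) (hdeg : MinDeg G 2)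
    (hN : G.neighborSet t = {x, y}) (hxy : x ≠ y) (hadj : ¬ G.Adj x y) (ht' : deg G t' = 2)
    (hne : t' ≠ t) : IsCoded G cores12 := by
  have hV := hdeg.mul_ncard_support_le
  refine IsCoded.flatMap (isCoded_cores11 (t := t') (mt (isPlanar_of_suppress hN) hG)
    (by have := edgeCount_suppress_lt hN; lia) (hdeg.suppress hN hxy hadj)
    (by rwa [deg_suppress hN hxy hadj hne])) fun m φ hφ => ?_
  exact isCoded_subdivisions hφ hN hxy hadj hdeg (by lia)

end Cores

section OneApex

theorem exists_adj_of_edgeCount_ne_zero {G : SimpleGraph V} (h : edgeCount G ≠ 0) :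
    ∃ u v, G.Adj u v := by
  obtain ⟨e, he⟩ := Set.nonempty_of_ncard_ne_zero h
  induction e with
  | _ u v => exact ⟨u, v, he⟩

theorem exists_adj_deg_eq_or_deg_eq_of_le_four {G : SimpleGraph V}
    (h₃ : MinDeg G 3) (h₄ : ∀ v, deg G v ≤ 4) :
    (∃ x t, G.Adj x t ∧ deg G x = 4 ∧ deg G t = 3) ∨
      (∃ v, deg G v = 3 ∧ ∀ t, G.Adj v t → deg G t = 3) ∨ ∀ v ∈ G.support, deg G v = 4 := by
  have deg_eq (v) (hv : v ∈ G.support) : deg G v = 3 ∨ deg G v = 4 := by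
    have := h₃ v hv
    have := h₄ v
    lia
  by_cases hcubic : ∃ v ∈ G.support, deg G v = 3
  · obtain ⟨v, -, hv⟩ := hcubic
    by_cases hx : ∃ x, G.Adj v x ∧ deg G x = 4
    · obtain ⟨x, hvx, hx⟩ := hx
      exact .inl ⟨x, v, hvx.symm, hx, hv⟩
    · refine .inr (.inl ⟨v, hv, fun t ht => (deg_eq t ⟨v, ht.symm⟩).resolve_right fun h => ?_⟩)
      exact hx ⟨t, ht, h⟩
  · exact .inr (.inr fun v hv => (deg_eq v hv).resolve_left fun h => hcubic ⟨v, hv, h⟩)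

variable [Finite V] {G : SimpleGraph V} {L : List Code} {k : ℕ} {t t' v x : V}

theorem IsCoded.flatMap_stars {δ Δ : ℕ} (h : IsCoded (G.deleteIncidenceSet x) L) (hδ : MinDeg G δ)
    (h2 : 2 ≤ δ) (hΔ : ∀ v, deg G v ≤ Δ) (hx : x ∈ G.support) (hV : G.support.ncard ≤ 13) :
    IsCoded G (L.flatMap (stars δ Δ (deg G x))) :=
  h.flatMap fun _ _ hφ => isCoded_stars hφ hδ h2 (fun v _ => hΔ v) hx hV

theorem IsCoded.isApex (h : IsCoded G L) (hL : L.all (isApexCode k)) : IsApex k G := by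
  obtain ⟨m, hm, φ, hφ⟩ := h
  exact hφ.isApex (List.all_eq_true.1 hL m hm)

theorem isApex_of_edgeCount_le (hE : edgeCount G ≤ k + 8) : IsApex k G := by
  induction k generalizing G with
  | zero => exact isPlanar_of_edgeCount_le_eight (by lia)
  | succ k ih =>
    by_cases hE' : edgeCount G ≤ k + 8
    · exact (ih hE').succ
    obtain ⟨u, v, huv⟩ := exists_adj_of_edgeCount_ne_zero (G := G) (by lia)
    have hdeg := mem_support_iff_deg_ne_zero.1 ⟨v, huv⟩
    have hdelete := edgeCount_delete_add_deg G u
    exact .of_delete u (ih (by lia))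

theorem mem_insert_neighborSet_of_adj {a b : V} (hclique : G.IsClique (G.neighborSet x))
    (hdeg : ∀ u ∈ G.neighborSet x, deg G u ≤ deg G x) (ha : a ∈ insert x (G.neighborSet x))
    (hab : G.Adj a b) : b ∈ insert x (G.neighborSet x) := by
  obtain rfl | ha := ha
  · exact .inr hab
  have hsub : insert x (G.neighborSet x) \ {a} ⊆ G.neighborSet a := by
    rintro u ⟨rfl | hu, hne⟩
    exacts [ha.symm, hclique ha hu (Ne.symm hne)]
  have hcard : (insert x (G.neighborSet x) \ {a}).ncard = deg G x := by
    rw [Set.ncard_sdiff_singleton_of_mem (.inr ha), Set.ncard_insert_of_notMem (by simp)]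
    rfl
  have heq := Set.eq_of_subset_of_ncard_le hsub (hcard ▸ hdeg a ha)
  exact (heq.ge hab).1

/-- A list that contains, up to isomorphism, all graphs of minimum degree three with at most 15
edges that are not apex. -/
def nonApexCandidates : List Code :=
  [codeK33].flatMap (stars 3 6 6) ++ cores10.flatMap (stars 3 5 5) ++
    cores11.flatMap (stars 3 4 4) ++ cores12.flatMap (stars 3 3 3) ++ kernels.flatMap (stars 4 4 4)

theorem isApex_one_of_isClique (hE : edgeCount G ≤ 15) (hv : deg G v = 3)
    (hcubic : ∀ t, G.Adj v t → deg G t = 3) (hclique : G.IsClique (G.neighborSet v)) :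
    IsApex 1 G := by
  classical
  obtain ⟨t₁, t₂, t₃, h₁₂, -, -, hN⟩ := Set.ncard_eq_three.1 hv
  have h₁ : G.Adj v t₁ := hN.ge (by simp)
  have h₂ : G.Adj v t₂ := hN.ge (by simp)
  have h₁₂' : G.Adj t₁ t₂ := hclique h₁ h₂ h₁₂
  have mem_of_adj {a b : V} (ha : a ∈ ({v, t₁, t₂, t₃} : Finset V)) (hab : G.Adj a b) :
      b ∈ ({v, t₁, t₂, t₃} : Finset V) := by
    have := mem_insert_neighborSet_of_adj (a := a) hclique
      (fun u hu => ((hcubic u hu).trans hv.symm).le) (by simpa [hN] using ha) hab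
    simpa [hN] using this
  set G₁ := G.deleteIncidenceSet v with hG₁
  set G₂ := G₁.deleteIncidenceSet t₁ with hG₂
  have e₁ : edgeCount G₁ + deg G v = edgeCount G := edgeCount_delete_add_deg G v
  have e₂ : edgeCount G₂ + deg G₁ t₁ = edgeCount G₁ := edgeCount_delete_add_deg G₁ t₁
  have e₃ := edgeCount_delete_add_deg G₂ t₂
  have d₁ : deg G₁ t₁ + 1 = deg G t₁ := deg_delete_of_adj h₁
  have d₂ : deg G₁ t₂ + 1 = deg G t₂ := deg_delete_of_adj h₂
  have d₃ : deg G₂ t₂ + 1 = deg G₁ t₂ :=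
    deg_delete_of_adj (deleteIncidenceSet_adj.2 ⟨h₁₂', h₁.ne', h₂.ne'⟩)
  have c₁ := hcubic t₁ h₁
  have c₂ := hcubic t₂ h₂
  refine .of_closed (C := {v, t₁, t₂, t₃}) (fun a ha b => mem_of_adj ha) Finset.card_le_four
    (fun a ha b hab => ?_)
    (isApex_of_edgeCount_le (G := G₂.deleteIncidenceSet t₂) (by lia))
  have hb : b ∉ ({v, t₁, t₂, t₃} : Finset V) := fun hb => ha (mem_of_adj hb hab.symm)
  simp only [hG₂, hG₁, deleteIncidenceSet_adj]
  grind

theorem isCoded_cores12_delete (hG : ¬ IsApex 1 G) (hE : edgeCount G ≤ 15) (hdeg : MinDeg G 3)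
    (hv : deg G v = 3) (hcubic : ∀ t, G.Adj v t → deg G t = 3) (ht : G.Adj v t)
    (ht' : G.Adj v t') (hne : t ≠ t') (hadj : ¬ G.Adj t t') :
    IsCoded (G.deleteIncidenceSet v) cores12 := by
  set H := G.deleteIncidenceSet v
  have hplanar : ¬ H.IsPlanar := fun h => hG (.of_delete (k := 0) v h)
  have hEH : edgeCount H + deg G v = edgeCount G := edgeCount_delete_add_deg G v
  have deg_eq_two (u) (hu : G.Adj v u) : deg H u = 2 := by
    have hdelete : deg H u + 1 = deg G u := deg_delete_of_adj hu
    have := hcubic u hu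
    lia
  obtain ⟨p, q, hpq, hN⟩ := exists_neighborSet_eq_pair (deg_eq_two t ht)
  by_cases hpq' : H.Adj p q
  swap
  · exact isCoded_cores12 hplanar (by lia) (hdeg.delete v) hN hpq hpq' (deg_eq_two t' ht') hne.symm
  have hplanar' := mt (isPlanar_of_suppress hN) hplanar
  rw [suppress_eq_delete hN (.inr hpq')] at hplanar'
  have hEH' := edgeCount_delete_add_deg H t
  have hdt := deg_eq_two t ht
  obtain ⟨u, hu, hu'⟩ : ∃ u ∈ G.neighborSet v, u ∉ ({t, t'} : Set V) :=
    Set.exists_mem_notMem_of_ncard_lt_ncard (by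
      rw [Set.ncard_pair hne]
      exact hv.ge)
  simp only [Set.mem_insert_iff, Set.mem_singleton_iff, not_or] at hu'
  have hdu := deg_eq_two u hu
  have hdu' := deg_le_deg_delete_add_one (G := H) hu'.1
  have hmono := deg_mono (deleteIncidenceSet_le H t) u
  have hdt' : deg (H.deleteIncidenceSet t) t' = 2 := by
    rw [deg_delete_of_not_adj hne.symm fun h => hadj (deleteIncidenceSet_adj.1 h).1,
      deg_eq_two t' ht']
  have := three_le_deg_of_deg_eq_two (k := 0) (m := 9) (v := u)
    (fun _ hG' => isPlanar_of_edgeCount_le_eight (Nat.le_of_lt_succ hG')) (by lia) hplanar' hdt'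
    (mem_support_iff_deg_ne_zero.2 (by lia)) hu'.2
  lia

theorem add_deg_lt_edgeCount {m : ℕ} (hk : ∀ G' : SimpleGraph V, edgeCount G' ≤ m → IsApex k G')
    (hG : ¬ IsApex (k + 1) G) (v : V) : m + deg G v < edgeCount G := by
  rw [← edgeCount_delete_add_deg G v]
  have := not_le.1 (mt (hk (G.deleteIncidenceSet v)) fun h => hG (.of_delete v h))
  lia

theorem isCoded_nonApexCandidates_of_le_four (hG : ¬ IsApex 1 G) (hE : edgeCount G ≤ 15)
    (hdeg : MinDeg G 3) (h₄ : ∀ v, deg G v ≤ 4) : IsCoded G nonApexCandidates := by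
  have hplanar (x) : ¬ (G.deleteIncidenceSet x).IsPlanar := fun h => hG (.of_delete (k := 0) x h)
  have hV := hdeg.mul_ncard_support_le
  have hdelete := edgeCount_delete_add_deg G
  obtain ⟨x, t, hxt, hx, ht⟩ | ⟨v, hv, hcubic⟩ | hreg :=
    exists_adj_deg_eq_or_deg_eq_of_le_four hdeg h₄
  · have hdt : deg (G.deleteIncidenceSet x) t + 1 = deg G t := deg_delete_of_adj hxt
    have h := (isCoded_cores11 (t := t) (hplanar x) (by have := hdelete x; lia) (hdeg.delete x)
      (by lia)).flatMap_stars hdeg (by lia) h₄ ⟨t, hxt⟩ (by lia)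
    rw [hx] at h
    exact h.mono fun m hm => by
      simp only [nonApexCandidates, List.mem_append, hm, true_or, or_true]
  · by_cases hclique : G.IsClique (G.neighborSet v)
    · exact absurd (isApex_one_of_isClique hE hv hcubic hclique) hG
    simp only [isClique_iff, Set.Pairwise, not_forall] at hclique
    obtain ⟨t, ht, t', ht', hne, hadj⟩ := hclique
    have h := (isCoded_cores12_delete hG hE hdeg hv hcubic ht ht' hne hadj).flatMap fun _ _ hφ =>
      isCoded_stars hφ hdeg (by lia) (fun u hu => (hcubic u hu).le) ⟨t, ht⟩ (by lia)
    rw [hv] at h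
    exact h.mono fun m hm => by
      simp only [nonApexCandidates, List.mem_append, hm, true_or, or_true]
  · obtain ⟨x, y, hxy⟩ := exists_adj_of_edgeCount_ne_zero (G := G) fun h =>
      hG (isApex_of_edgeCount_le (by lia))
    have hx : x ∈ G.support := ⟨y, hxy⟩
    have hdeg' : MinDeg G 4 := fun v hv => (hreg v hv).ge
    have := mul_ncard_support_eq hreg
    have h := (isCoded_kernels (hplanar x) (by have := hdelete x; have := hreg x hx; lia)
      (hdeg'.delete x)).flatMap_stars hdeg' (by lia) h₄ hx (by lia)
    rw [hreg x hx] at h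
    exact h.mono fun m hm => by
      simp only [nonApexCandidates, List.mem_append, hm, or_true]

theorem isCoded_nonApexCandidates (hG : ¬ IsApex 1 G) (hE : edgeCount G ≤ 15)
    (hdeg : MinDeg G 3) : IsCoded G nonApexCandidates := by
  have hplanar (x) : ¬ (G.deleteIncidenceSet x).IsPlanar := fun h => hG (.of_delete (k := 0) x h)
  have hV := hdeg.mul_ncard_support_le
  have hdelete := edgeCount_delete_add_deg G
  have h₆ (v) : deg G v ≤ 6 := by
    have := add_deg_lt_edgeCount (k := 0) (fun _ => isPlanar_of_edgeCount_le_eight) hG v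
    lia
  by_cases hx : ∃ x, deg G x = 6
  · obtain ⟨x, hx⟩ := hx
    have h := (isCoded_of_edgeCount_le_nine (hplanar x) (by have := hdelete x; lia)).flatMap_stars
      hdeg (by lia) h₆ (mem_support_iff_deg_ne_zero.2 (by lia)) (by lia)
    rw [hx] at h
    exact h.mono fun m hm => by
      simp only [nonApexCandidates, List.mem_append, hm, true_or]
  have h₅ (v) : deg G v ≤ 5 := Nat.le_of_lt_succ ((h₆ v).lt_of_ne fun h => hx ⟨v, h⟩)
  by_cases hx : ∃ x, deg G x = 5
  · obtain ⟨x, hx⟩ := hx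
    have hcores := isCoded_cores10 (hplanar x) (by have := hdelete x; lia) (hdeg.delete x)
    have h := hcores.flatMap_stars hdeg (by lia) h₅ (mem_support_iff_deg_ne_zero.2 (by lia))
      (by lia)
    rw [hx] at h
    exact h.mono fun m hm => by
      simp only [nonApexCandidates, List.mem_append, hm, true_or, or_true]
  exact isCoded_nonApexCandidates_of_le_four hG hE hdeg fun v =>
    Nat.le_of_lt_succ ((h₅ v).lt_of_ne fun h => hx ⟨v, h⟩)

end OneApex

section TwoApex

/-- Up to isomorphism, the graphs with at most 15 edges and without isolated vertices that are not
apex: the seven graphs of the Petersen family and two more. -/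
def nonApexCodes : List Code :=
  [[(3, 2), (3, 1), (3, 0), (4, 2), (4, 1), (4, 0), (5, 2), (5, 1), (5, 0),
      (6, 5), (6, 4), (6, 3), (6, 2), (6, 1), (6, 0)],
    [(0, 1), (0, 2), (0, 3), (0, 4), (0, 5), (1, 2), (1, 3), (1, 4), (1, 5),
      (2, 3), (2, 4), (2, 5), (3, 4), (3, 5), (4, 5)],
    [(1, 0), (3, 2), (3, 1), (3, 0), (4, 2), (4, 1), (4, 0), (5, 2), (5, 1), (5, 0),
      (6, 5), (6, 4), (6, 3), (6, 1), (6, 0)],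
    [(1, 0), (3, 2), (3, 1), (3, 0), (4, 2), (4, 1), (4, 0), (5, 2), (5, 1), (5, 0),
      (6, 5), (6, 4), (6, 3), (6, 2), (6, 0)],
    [(3, 2), (3, 1), (4, 2), (4, 1), (4, 0), (5, 2), (5, 1), (5, 0),
      (6, 3), (6, 0), (7, 6), (7, 5), (7, 4), (7, 2), (7, 1)],
    [(3, 2), (3, 1), (3, 0), (4, 2), (4, 1), (4, 0), (5, 2), (5, 1), (5, 0),
      (6, 1), (6, 0), (7, 6), (7, 5), (7, 4), (7, 3)],
    [(1, 0), (3, 2), (3, 1), (4, 2), (4, 1), (4, 0), (5, 2), (5, 1), (5, 0),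
      (6, 3), (6, 0), (7, 6), (7, 5), (7, 4), (7, 2)],
    [(3, 2), (3, 1), (4, 2), (4, 0), (5, 2), (5, 1), (5, 0),
      (6, 3), (6, 0), (7, 4), (7, 1), (8, 7), (8, 6), (8, 5), (8, 2)],
    [(3, 2), (3, 1), (4, 2), (4, 0), (5, 1), (5, 0),
      (6, 3), (6, 0), (7, 4), (7, 1), (8, 5), (8, 2), (9, 8), (9, 7), (9, 6)]].map (addEdges 0)

/-- Up to isomorphism, the graphs with at most 16 edges that are not apex and have minimum degree
exactly two, again without isolated vertices. -/
def nonApexSubdivisions : List Code := representatives (nonApexCodes.flatMap subdivisions)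

/-- The candidates for what remains of a `4`-regular graph on ten vertices that is not 2-apex after
deleting two nonadjacent vertices with at least two common neighbours. -/
def regularCores : List Code :=
  (cores12 ++ cores10.flatMap doublings).filter fun m => (usedLabels m).length = 8

/-- The graphs that are not apex and arise by restoring one of the two vertices deleted for
`regularCores`. -/
def regularVertexDeletions : List Code :=
  (regularCores.flatMap (stars 3 4 4)).filter fun m => !isApexCode 1 m

theorem all_nonApexCandidates :
    nonApexCandidates.all fun m => isApexCode 1 m || nonApexCodes.any (isIso m) := by
  decide +kernel

theorem all_stars_nonApexCodes : (nonApexCodes.flatMap (stars 3 5 5)).all (isApexCode 2) := by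
  decide +kernel

theorem all_stars_nonApexSubdivisions :
    (nonApexSubdivisions.flatMap (stars 3 4 4)).all (isApexCode 2) := by
  decide +kernel

theorem all_stars_regularVertexDeletions :
    (regularVertexDeletions.flatMap (stars 4 4 4)).all (isApexCode 2) := by
  decide +kernel

theorem IsCoded.filter {G : SimpleGraph V} {L : List Code} {p : Code → Bool} (h : IsCoded G L)
    (hp : ∀ m φ, HasCode G m φ → p m) : IsCoded G (L.filter p) := by
  obtain ⟨m, hm, φ, h⟩ := h
  exact ⟨m, List.mem_filter.2 ⟨hm, hp m φ h⟩, φ, h⟩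

variable [Finite V] {G : SimpleGraph V} {t v x : V}

theorem IsCoded.nonApexCodes (h : IsCoded G nonApexCandidates) (hG : ¬ IsApex 1 G) :
    IsCoded G nonApexCodes := by
  obtain ⟨m, hm, φ, hφ⟩ := h
  have hiso := List.all_eq_true.1 all_nonApexCandidates m hm
  rw [Bool.or_eq_true] at hiso
  exact IsCoded.of_isIso ⟨m, List.mem_singleton_self m, φ, hφ⟩
    (List.forall_mem_singleton.2 (hiso.resolve_left fun h => hG (hφ.isApex h)))

theorem isApex_one_of_edgeCount_le_fourteen (hE : edgeCount G ≤ 14) : IsApex 1 G := by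
  by_contra hG
  obtain ⟨G', hG', hE', hdeg⟩ := exists_minDeg_three hG
  obtain ⟨m, hm, φ, hφ⟩ := (isCoded_nonApexCandidates hG' (by lia) hdeg).nonApexCodes hG'
  have degSum_eq_thirty : ∀ m ∈ AlmostPlanar.nonApexCodes, degSum m = 30 := by decide +kernel
  have := hφ.degSum_eq
  have := degSum_eq_thirty m hm
  lia

theorem minDeg_three_of_edgeCount_le_fifteen (hG : ¬ IsApex 1 G) (hE : edgeCount G ≤ 15) :
    MinDeg G 3 :=
  minDeg_three (fun _ h => isApex_one_of_edgeCount_le_fourteen (by lia)) hG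

theorem isCoded_nonApexCodes (hG : ¬ IsApex 1 G) (hE : edgeCount G ≤ 15) :
    IsCoded G nonApexCodes :=
  (isCoded_nonApexCandidates hG hE (minDeg_three_of_edgeCount_le_fifteen hG hE)).nonApexCodes hG

theorem isCoded_nonApexSubdivisions (hG : ¬ IsApex 1 G) (hE : edgeCount G ≤ 16)
    (hdeg : MinDeg G 2) (hV : G.support.ncard ≤ 13) (ht : deg G t = 2) :
    IsCoded G nonApexSubdivisions := by
  obtain ⟨p, q, hpq, hN⟩ := exists_neighborSet_eq_pair ht
  have hadj := not_adj_of_deg_eq_two (m := 15)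
    (fun _ h => isApex_one_of_edgeCount_le_fourteen (Nat.le_of_lt_succ h)) hE hG hpq hN
  have hsuppress := isCoded_nonApexCodes (mt (IsApex.of_suppress hN) hG)
    (by have := edgeCount_suppress_lt hN; lia)
  exact IsCoded.representatives
    (hsuppress.flatMap fun _ _ hφ => isCoded_subdivisions hφ hN hpq hadj hdeg hV)

theorem isApex_two_of_deg_eq_five (hE : edgeCount G ≤ 20) (hdeg : MinDeg G 3)
    (h₅ : ∀ v, deg G v ≤ 5) (hx : deg G x = 5) : IsApex 2 G := by
  by_contra hG
  have hV := hdeg.mul_ncard_support_le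
  have hdelete := edgeCount_delete_add_deg G x
  have h := (isCoded_nonApexCodes (mt (IsApex.of_delete x) hG) (by lia)).flatMap_stars hdeg
    (by lia) h₅ (mem_support_iff_deg_ne_zero.2 (by lia)) (by lia)
  rw [hx] at h
  exact hG (h.isApex all_stars_nonApexCodes)

theorem isApex_two_of_deg_eq_four_of_deg_eq_three (hE : edgeCount G ≤ 20) (hdeg : MinDeg G 3)
    (h₄ : ∀ v, deg G v ≤ 4) (hxt : G.Adj x t) (hx : deg G x = 4) (ht : deg G t = 3) :
    IsApex 2 G := by
  by_contra hG
  have hV := hdeg.mul_ncard_support_le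
  have hdelete := edgeCount_delete_add_deg G x
  have hxs : x ∈ G.support := ⟨t, hxt⟩
  have hV' := ncard_support_delete_lt hxs
  have hdt : deg (G.deleteIncidenceSet x) t + 1 = deg G t := deg_delete_of_adj hxt
  have h := (isCoded_nonApexSubdivisions (t := t) (mt (IsApex.of_delete x) hG) (by lia)
    (hdeg.delete x) (by lia) (by lia)).flatMap_stars hdeg (by lia) h₄ hxs (by lia)
  rw [hx] at h
  exact hG (h.isApex all_stars_nonApexSubdivisions)

theorem isApex_two_of_deg_eq_three (hE : edgeCount G ≤ 20) (hv : deg G v = 3)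
    (hcubic : ∀ t, G.Adj v t → deg G t = 3) : IsApex 2 G := by
  by_contra hG
  obtain ⟨t₁, t₂, t₃, h₁₂, h₁₃, h₂₃, hN⟩ := Set.ncard_eq_three.1 hv
  set H := G.deleteIncidenceSet v
  have hapex : ¬ IsApex 1 H := mt (IsApex.of_delete v) hG
  have hEH : edgeCount H + deg G v = edgeCount G := edgeCount_delete_add_deg G v
  have deg_eq_two {t : V} (ht : t ∈ ({t₁, t₂, t₃} : Set V)) : deg H t = 2 := by
    have hvt : G.Adj v t := hN.ge ht
    have hdelete : deg H t + 1 = deg G t := deg_delete_of_adj hvt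
    have := hcubic t hvt
    lia
  have hd₁ : deg H t₁ = 2 := deg_eq_two (by simp)
  have hd₂ : deg H t₂ = 2 := deg_eq_two (by simp)
  have hd₃ : deg H t₃ = 2 := deg_eq_two (by simp)
  obtain ⟨p, q, hpq, hN₁⟩ := exists_neighborSet_eq_pair hd₁
  have hapex' := mt (IsApex.of_suppress hN₁) hapex
  by_cases hadj : H.Adj p q
  · rw [suppress_eq_delete hN₁ (.inr hadj)] at hapex'
    have hdelete := edgeCount_delete_add_deg H t₁
    have hd₂' := deg_le_deg_delete_add_one (G := H) h₁₂.symm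
    have hmono := deg_mono (deleteIncidenceSet_le H t₁) t₂
    have := minDeg_three_of_edgeCount_le_fifteen hapex' (by lia) t₂
      (mem_support_iff_deg_ne_zero.2 (by lia))
    lia
  · have hd₂' := deg_suppress hN₁ hpq hadj h₁₂.symm
    have hd₃' := deg_suppress hN₁ hpq hadj h₁₃.symm
    have hlt := edgeCount_suppress_lt hN₁
    have := three_le_deg_of_deg_eq_two (m := 15) (t := t₂) (v := t₃)
      (fun _ h => isApex_one_of_edgeCount_le_fourteen (Nat.le_of_lt_succ h)) (by lia) hapex'
      (by lia) (mem_support_iff_deg_ne_zero.2 (by lia)) h₂₃.symm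
    lia

theorem isApex_one_delete_of_isClique (hE : edgeCount G ≤ 20) (hreg : ∀ v ∈ G.support, deg G v = 4)
    (hx : x ∈ G.support) (hclique : G.IsClique (G.neighborSet x)) :
    IsApex 1 (G.deleteIncidenceSet x) := by
  have hxdeg := hreg x hx
  obtain ⟨t, ht⟩ := (Set.nonempty_of_ncard_ne_zero (by rw [← deg, hxdeg]; simp) :
    (G.neighborSet x).Nonempty)
  set H := G.deleteIncidenceSet x
  have mem_of_adj (a) (ha : a ∈ G.neighborSet x) (b) (hab : H.Adj a b) : b ∈ G.neighborSet x := by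
    obtain ⟨hab, -, hb⟩ := deleteIncidenceSet_adj.1 hab
    exact (mem_insert_neighborSet_of_adj hclique (fun u hu => by rw [hreg u ⟨x, hu.symm⟩, hxdeg])
      (.inr ha) hab).resolve_left hb
  have hEH : edgeCount H + deg G x = edgeCount G := edgeCount_delete_add_deg G x
  have hEH' := edgeCount_delete_add_deg H t
  have hdt : deg H t + 1 = deg G t := deg_delete_of_adj ht
  have := hreg t ⟨x, ht.symm⟩
  refine .of_closed (C := (G.neighborSet x).toFinite.toFinset) (by simpa using mem_of_adj)
    (by rw [← Set.ncard_eq_toFinset_card]; exact hxdeg.le) (fun a ha b hab => ?_)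
    (isApex_one_of_edgeCount_le_fourteen (G := H.deleteIncidenceSet t) (by lia))
  rw [Set.Finite.mem_toFinset] at ha
  exact deleteIncidenceSet_adj.2 ⟨hab, fun h => ha (h ▸ ht),
    fun h => ha (mem_of_adj t ht a (h ▸ hab.symm))⟩

end TwoApex

section Regular

theorem sum_card_neighborFinset_sdiff_le [Fintype V] [DecidableEq V] {G : SimpleGraph V}
    [DecidableRel G.Adj] {x : V} (hG : ∀ p, p ≠ x → ¬ G.Adj x p →
      (G.neighborFinset x ∩ G.neighborFinset p).card ≤ 1) :
    ∑ a ∈ G.neighborFinset x, (G.neighborFinset a \ insert x (G.neighborFinset x)).card ≤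
      (G.support.toFinset \ insert x (G.neighborFinset x)).card := by
  rw [← Finset.card_biUnion]
  · refine Finset.card_le_card (Finset.biUnion_subset.2 fun a _ p hp => ?_)
    simp only [Finset.mem_sdiff, mem_neighborFinset] at hp
    simp only [Finset.mem_sdiff, Set.mem_toFinset]
    exact ⟨⟨a, hp.1.symm⟩, hp.2⟩
  · intro a _ b _ hab
    refine Finset.disjoint_left.2 fun p hpa hpb => ?_
    simp only [Finset.mem_sdiff, mem_neighborFinset, Finset.mem_insert, not_or] at hpa hpb
    refine hab (Finset.card_le_one.1 (hG p hpa.2.1 hpa.2.2) a ?_ b ?_)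
    all_goals simp_all [adj_comm]

theorem sum_card_neighborFinset_inter_le_six [Fintype V] [DecidableEq V] {G : SimpleGraph V}
    [DecidableRel G.Adj] {A : Finset V} {u v : V} (hA : A.card = 4) (hu : u ∈ A) (hv : v ∈ A)
    (huv : u ≠ v) (hadj : ¬ G.Adj u v) (hcommon : ∀ w ∈ A, G.Adj u w → ¬ G.Adj v w) :
    ∑ a ∈ A, (G.neighborFinset a ∩ A).card ≤ 6 := by
  have hcard : ((A.erase u).erase v).card = 2 := by
    rw [Finset.card_erase_of_mem (by simp [hv, huv.symm]), Finset.card_erase_of_mem hu, hA]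
  obtain ⟨w, z, hwz, hA'⟩ := Finset.card_eq_two.1 hcard
  obtain ⟨⟨hwv, hwu, hw⟩, hzv, hzu, hz⟩ : (w ≠ v ∧ w ≠ u ∧ w ∈ A) ∧ z ≠ v ∧ z ≠ u ∧ z ∈ A := by
    simp only [← Finset.mem_erase, hA']
    simp
  obtain rfl : A = {u, v, w, z} := by
    rw [← hA', Finset.insert_erase (by simp [hv, huv.symm]), Finset.insert_erase hu]
  have hinter (a : V) : (G.neighborFinset a ∩ {u, v, w, z}).card =
      ∑ b ∈ {u, v, w, z}, if G.Adj a b then 1 else 0 := by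
    rw [← Finset.card_filter]
    congr 1
    ext b
    simp [and_comm]
  have hw' := hcommon w hw
  have hz' := hcommon z hz
  simp only [hinter, Finset.sum_insert, Finset.mem_insert, Finset.mem_singleton, huv, hwu.symm,
    hzu.symm, hwv.symm, hzv.symm, hwz, or_self, not_false_eq_true, Finset.sum_singleton,
    SimpleGraph.irrefl, hadj, mt Adj.symm hadj, G.adj_comm w u, G.adj_comm w v,
    G.adj_comm z u, G.adj_comm z v, G.adj_comm z w, if_false]
  split_ifs <;> simp_all

theorem exists_two_le_card_inter_neighborFinset [Fintype V] [DecidableEq V] {G : SimpleGraph V}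
    [DecidableRel G.Adj] {x u v : V} (hV : G.support.toFinset.card ≤ 10) (hx : G.degree x = 4)
    (hdeg : ∀ a, G.Adj x a → G.degree a = 4) (hu : G.Adj x u) (hv : G.Adj x v) (huv : u ≠ v)
    (hadj : ¬ G.Adj u v) :
    ∃ a b, a ≠ b ∧ ¬ G.Adj a b ∧ 2 ≤ (G.neighborFinset a ∩ G.neighborFinset b).card := by
  by_contra! hG
  set A := G.neighborFinset x with hA
  have hsub : insert x A ⊆ G.support.toFinset := by
    intro p hp
    simp only [hA, Finset.mem_insert, mem_neighborFinset] at hp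
    rw [Set.mem_toFinset]
    obtain rfl | hp := hp
    exacts [⟨u, hu⟩, ⟨x, hp.symm⟩]
  have hxA : x ∉ A := by simp [hA]
  have hsdiff := sum_card_neighborFinset_sdiff_le (G := G) (x := x)
    fun p hp hxp => Nat.le_of_lt_succ (hG x p hp.symm hxp)
  rw [Finset.card_sdiff_of_subset hsub, Finset.card_insert_of_notMem hxA,
    card_neighborFinset_eq_degree, hx] at hsdiff
  have hinter : ∑ a ∈ A, (G.neighborFinset a ∩ A).card ≤ 6 := by
    refine sum_card_neighborFinset_inter_le_six hx (by simpa [hA] using hu) (by simpa [hA] using hv)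
      huv hadj fun w hw huw hvw => (hG u v huv hadj).not_ge ?_
    refine Finset.one_lt_card.2 ⟨w, by simp [huw, hvw], x, by simp [hu.symm, hv.symm], ?_⟩
    rintro rfl
    exact hxA hw
  have hsplit (a) (ha : a ∈ A) :
      (G.neighborFinset a \ insert x A).card + (G.neighborFinset a ∩ A).card = 3 := by
    have hxa : G.Adj x a := by simpa [hA] using ha
    have := Finset.card_sdiff_add_card_inter (G.neighborFinset a) (insert x A)
    rw [Finset.inter_insert_of_mem (by simpa using hxa.symm),
      Finset.card_insert_of_notMem (by simp [hxA]), card_neighborFinset_eq_degree, hdeg a hxa]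
      at this
    lia
  have hsum := Finset.sum_congr rfl hsplit
  rw [Finset.sum_add_distrib, Finset.sum_const, card_neighborFinset_eq_degree, hx, smul_eq_mul]
    at hsum
  lia

variable [Finite V] {G : SimpleGraph V} {a b t t' p q x : V}

theorem exists_common_neighbors_of_not_isClique (hV : G.support.ncard ≤ 10)
    (hreg : ∀ v ∈ G.support, deg G v = 4) (hx : x ∈ G.support)
    (hclique : ¬ G.IsClique (G.neighborSet x)) :
    ∃ a b t t', a ≠ b ∧ ¬ G.Adj a b ∧ t ≠ t' ∧
      (G.Adj a t ∧ G.Adj b t) ∧ G.Adj a t' ∧ G.Adj b t' := by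
  classical
  let := Fintype.ofFinite V
  have degree_eq (v) (hv : v ∈ G.support) : G.degree v = 4 := by
    rw [← hreg v hv, deg, Set.ncard_eq_toFinset_card', degree, neighborFinset]
  simp only [isClique_iff, Set.Pairwise, not_forall] at hclique
  obtain ⟨u, hu, v, hv, huv, hadj⟩ := hclique
  obtain ⟨a, b, hab, hadj', hcard⟩ := exists_two_le_card_inter_neighborFinset
    (by rwa [← Set.ncard_eq_toFinset_card']) (degree_eq x hx)
    (fun a ha => degree_eq a ⟨x, ha.symm⟩) hu hv huv hadj
  obtain ⟨t, ht, t', ht', hne⟩ := Finset.one_lt_card.1 hcard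
  simp only [Finset.mem_inter, mem_neighborFinset] at ht ht'
  exact ⟨a, b, t, t', hab, hadj', hne, ht, ht'⟩

theorem ncard_support_of_edgeCount_le_nine (hG : ¬ G.IsPlanar) (hE : edgeCount G ≤ 9) :
    G.support.ncard = 6 := by
  obtain ⟨m, hm, φ, hφ⟩ := isCoded_of_edgeCount_le_nine hG hE
  rw [hφ.ncard_support, List.mem_singleton.1 hm]
  decide +kernel

theorem minDeg_two_delete (hG : ¬ G.IsPlanar) (hE : edgeCount G ≤ 12) (hdeg : MinDeg G 2)
    (h₄ : ∀ v, deg G v ≤ 4) (hV : G.support.ncard ≤ 8) (hN : G.neighborSet t = {p, q})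
    (hadj : G.Adj p q) : MinDeg (G.deleteIncidenceSet t) 2 := by
  intro z hz
  by_contra! hlt
  set K := G.deleteIncidenceSet t
  set L := K.deleteIncidenceSet z
  have hz' := support_delete_subset G t hz
  have htz : G.Adj t z := by
    by_contra hnot
    have := deg_delete_of_not_adj hz'.2 hnot
    have := hdeg z hz'.1
    lia
  obtain ⟨w, htw, hzw⟩ : ∃ w, G.Adj t w ∧ G.Adj z w := by
    obtain rfl | rfl : z = p ∨ z = q := hN.le htz
    exacts [⟨q, hN.ge (by simp), hadj⟩, ⟨p, hN.ge (by simp), hadj.symm⟩]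
  have hzw' : K.Adj z w := deleteIncidenceSet_adj.2 ⟨hzw, htz.ne', htw.ne'⟩
  have hdz := mem_support_iff_deg_ne_zero.1 hz
  obtain ⟨w', hNz⟩ := Set.ncard_eq_one.1 (show deg K z = 1 by lia)
  rw [← Set.pair_eq_singleton] at hNz
  have hplanar := mt (isPlanar_of_suppress hN) hG
  rw [suppress_eq_delete hN (.inr hadj)] at hplanar
  have hplanar' := mt (isPlanar_of_suppress hNz) hplanar
  rw [suppress_eq_delete hNz (.inl rfl)] at hplanar'
  have hEK : edgeCount K + deg G t = edgeCount G := edgeCount_delete_add_deg G t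
  have hEL : edgeCount L + deg K z = edgeCount K := edgeCount_delete_add_deg K z
  have hdt := hdeg t ⟨z, htz⟩
  have hwL : w ∉ L.support := fun hw => by
    have := minDeg_three (k := 0) (G := L)
      (fun _ h => isPlanar_of_edgeCount_le_eight (by lia)) hplanar' w hw
    have hdw : deg K w + 1 = deg G w := deg_delete_of_adj htw
    have hdw' : deg L w + 1 = deg K w := deg_delete_of_adj hzw'
    have := h₄ w
    lia
  have hsix : L.support.ncard = 6 :=
    ncard_support_of_edgeCount_le_nine hplanar' (by lia)
  have hcard := Set.ncard_le_ncard (Set.subset_sdiff_singleton (support_delete_subset K z) hwL)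
  have hw : w ∈ K.support \ {z} := ⟨⟨z, hzw'.symm⟩, hzw.ne'⟩
  rw [Set.ncard_sdiff_singleton_of_mem hw, Set.ncard_sdiff_singleton_of_mem hz] at hcard
  have hKV : K.support.ncard < G.support.ncard := ncard_support_delete_lt ⟨z, htz⟩
  lia

theorem isCoded_regularCores (hG : ¬ G.IsPlanar) (hE : edgeCount G ≤ 12) (hdeg : MinDeg G 2)
    (h₄ : ∀ v, deg G v ≤ 4) (hV : G.support.ncard = 8) (ht : deg G t = 2) (ht' : deg G t' = 2)
    (hne : t' ≠ t) : IsCoded G regularCores := by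
  refine IsCoded.filter ?_ fun m φ hφ => by simp [← hφ.ncard_support, hV]
  obtain ⟨p, q, hpq, hN⟩ := exists_neighborSet_eq_pair ht
  by_cases hadj : G.Adj p q
  · have hplanar := mt (isPlanar_of_suppress hN) hG
    rw [suppress_eq_delete hN (.inr hadj)] at hplanar
    have hdelete := edgeCount_delete_add_deg G t
    have hcores := isCoded_cores10 hplanar (by lia) (minDeg_two_delete hG hE hdeg h₄ hV.le hN hadj)
    exact (hcores.flatMap fun _ _ hφ => isCoded_doublings hφ hN hadj (by lia)).mono
      (List.subset_append_right _ _)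
  · exact (isCoded_cores12 hG hE hdeg hN hpq hadj ht' hne).mono (List.subset_append_left _ _)

theorem isCoded_regularVertexDeletions (hG : ¬ IsApex 2 G) (hE : edgeCount G ≤ 20)
    (hreg : ∀ v ∈ G.support, deg G v = 4) (hV : G.support.ncard = 10) (hab : a ≠ b)
    (hadj : ¬ G.Adj a b) (ht : G.Adj a t ∧ G.Adj b t) (ht' : G.Adj a t' ∧ G.Adj b t')
    (hne : t ≠ t') : IsCoded (G.deleteIncidenceSet a) regularVertexDeletions := by
  set K := G.deleteIncidenceSet a with hK
  set H := K.deleteIncidenceSet b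
  have hKapex : ¬ IsApex 1 K := mt (IsApex.of_delete a) hG
  have hdeg : MinDeg G 4 := fun v hv => (hreg v hv).ge
  have hKdeg : MinDeg K 3 := hdeg.delete a
  have hHdeg : MinDeg H 2 := hKdeg.delete b
  have has : a ∈ G.support := ⟨t, ht.1⟩
  have ha := hreg a has
  have hb : deg K b = 4 := by
    rw [hK, deg_delete_of_not_adj hab.symm hadj, hreg b ⟨t, ht.2⟩]
  have hEK : edgeCount K + deg G a = edgeCount G := edgeCount_delete_add_deg G a
  have hEH : edgeCount H + deg K b = edgeCount K := edgeCount_delete_add_deg K b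
  have hK₄ (v) : deg K v ≤ 4 :=
    (deg_mono (deleteIncidenceSet_le G a) v).trans (deg_le_of_regular hreg v)
  have deg_eq_two {t} (ht : G.Adj a t ∧ G.Adj b t) : deg H t = 2 := by
    have hdK : deg K t + 1 = deg G t := deg_delete_of_adj ht.1
    have hdH : deg H t + 1 = deg K t := deg_delete_of_adj
      (deleteIncidenceSet_adj.2 ⟨ht.2, hab.symm, ht.1.ne'⟩)
    have := hreg t ⟨a, ht.1.symm⟩
    lia
  have hbK : b ∈ K.support := mem_support_iff_deg_ne_zero.2 (by lia)
  have hKV : K.support.ncard = 9 := by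
    rw [(hdeg.mono (by lia)).support_delete, Set.ncard_sdiff_singleton_of_mem has, hV]
  have hHV : H.support.ncard = 8 := by
    rw [(hKdeg.mono (by lia)).support_delete, Set.ncard_sdiff_singleton_of_mem hbK, hKV]
  have hH := (isCoded_regularCores (fun h => hKapex (.of_delete (k := 0) b h)) (by lia) hHdeg
    (fun v => (deg_mono (deleteIncidenceSet_le K b) v).trans (hK₄ v)) hHV (deg_eq_two ht)
    (deg_eq_two ht') hne.symm).flatMap_stars hKdeg (by lia) hK₄ hbK (by lia)
  rw [hb] at hH
  exact hH.filter fun m φ hφ => by simpa using fun h => hKapex (hφ.isApex h)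

theorem isApex_two_of_regular (hE : edgeCount G ≤ 20) (hreg : ∀ v ∈ G.support, deg G v = 4) :
    IsApex 2 G := by
  by_contra hG
  obtain ⟨x, y, hxy⟩ := exists_adj_of_edgeCount_ne_zero (G := G) fun h =>
    hG (isApex_of_edgeCount_le (by lia))
  have hx : x ∈ G.support := ⟨y, hxy⟩
  have hV : G.support.ncard = 10 := by
    have := mul_ncard_support_eq hreg
    have := hreg x hx
    have := add_deg_lt_edgeCount (fun _ => isApex_one_of_edgeCount_le_fourteen) hG x
    lia
  have hclique : ¬ G.IsClique (G.neighborSet x) := fun h =>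
    hG (.of_delete x (isApex_one_delete_of_isClique hE hreg hx h))
  obtain ⟨a, b, t, t', hab, hadj, hne, ht, ht'⟩ :=
    exists_common_neighbors_of_not_isClique hV.le hreg hx hclique
  have h := (isCoded_regularVertexDeletions hG hE hreg hV hab hadj ht ht' hne).flatMap_stars
    (δ := 4) (fun v hv => (hreg v hv).ge) (by lia) (deg_le_of_regular hreg) ⟨t, ht.1⟩ (by lia)
  rw [hreg a ⟨t, ht.1⟩] at h
  exact hG (h.isApex all_stars_regularVertexDeletions)

theorem isApex_two_of_minDeg_three (hE : edgeCount G ≤ 20) (hdeg : MinDeg G 3) : IsApex 2 G := by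
  by_contra hG
  have h₅ (v) : deg G v ≤ 5 := by
    have := add_deg_lt_edgeCount (fun _ => isApex_one_of_edgeCount_le_fourteen) hG v
    lia
  by_cases hx : ∃ x, deg G x = 5
  · obtain ⟨x, hx⟩ := hx
    exact hG (isApex_two_of_deg_eq_five hE hdeg h₅ hx)
  have h₄ (v) : deg G v ≤ 4 := Nat.le_of_lt_succ ((h₅ v).lt_of_ne fun h => hx ⟨v, h⟩)
  obtain ⟨x, t, hxt, hx, ht⟩ | ⟨v, hv, hcubic⟩ | hreg :=
    exists_adj_deg_eq_or_deg_eq_of_le_four hdeg h₄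
  · exact hG (isApex_two_of_deg_eq_four_of_deg_eq_three hE hdeg h₄ hxt hx ht)
  · exact hG (isApex_two_of_deg_eq_three hE hv hcubic)
  · exact hG (isApex_two_of_regular hE hreg)

theorem isApex_two_of_edgeCount_le_twenty (hE : edgeCount G ≤ 20) : IsApex 2 G := by
  by_contra hG
  obtain ⟨G', hG', hE', hdeg⟩ := exists_minDeg_three hG
  exact hG' (isApex_two_of_minDeg_three (by lia) hdeg)

end Regular

theorem IsApex.exists_isPlanar_induce {G : SimpleGraph V} {k : ℕ} (h : IsApex k G) :
    ∃ s : Set V, s.ncard ≤ k ∧ (G.induce sᶜ).IsPlanar := by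
  induction k generalizing G with
  | zero => exact ⟨∅, by simp, isPlanar_of_isContained ⟨(Embedding.induce _).toCopy⟩ h⟩
  | succ k ih =>
    obtain h | ⟨a, h⟩ := h
    · obtain ⟨s, hs, hplanar⟩ := ih h
      exact ⟨s, by lia, hplanar⟩
    obtain ⟨s, hs, hplanar⟩ := ih h
    refine ⟨insert a s, (Set.ncard_insert_le a s).trans (by lia),
      isPlanar_of_isContained ⟨⟨fun v => ⟨v, fun hv => v.2 (.inr hv)⟩, fun {u v} huv => ?_⟩, ?_⟩
        hplanar⟩
    · exact deleteIncidenceSet_adj.2 ⟨huv, fun hu => u.2 (.inl hu), fun hv => v.2 (.inl hv)⟩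
    · exact fun u v huv => Subtype.ext (congrArg (fun w : ↥sᶜ => (w : V)) huv)

end AlmostPlanar

theorem stmt6_general {V : Type*} [Finite V] (G : SimpleGraph V) (hE : G.edgeSet.ncard ≤ 20) :
    G.TwoApex :=
  (AlmostPlanar.isApex_two_of_edgeCount_le_twenty hE).exists_isPlanar_induce

/-- Every finite simple graph with at least 13 vertices and at most 20 edges is 2-apex. -/
theorem stmt6 {V : Type*} [Fintype V] (G : SimpleGraph V)
    (hV : 13 ≤ Fintype.card V) (hE : G.edgeSet.ncard ≤ 20) : G.TwoApex :=
  stmt6_general G hE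
end

section
/- Let G be a finite simple graph with 9 vertices and 20 edges whose minimum degree is at least 3 and whose maximum degree equals 5, and suppose that any two vertices of degree 5 in G are adjacent. Then G is 2-apex. -/
/-! By counting degrees, four vertices of degree five span a clique `T`; each of them sends two
edges to the remaining five vertices, which span exactly six edges. Suppose that no two deletions
make the graph planar.

The tool is a rigidity statement: if a graph on seven vertices has two adjacent vertices `a`, `b`
with a common neighbour `v` and at most one further neighbour each, `α` and `β`, then a `K₅` minor
makes each of the other vertices dominate everything but `a` and `b`, and a `K₃,₃` minor makes them
adjacent to `v`, `α`, `β`, since the branch sets are almost all singletons.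

Pigeonhole gives two vertices of `T` with a common neighbour outside `T`. Deleting the other two
vertices of `T` and applying rigidity, the six edges outside `T` can only form a `K₂,₃`, with sides
`D` and `C`. The degrees then force two neighbours in `T` for each vertex of `C` and one for each
vertex of `D`. Let `p ∈ D` have neighbour `t ∈ T`. A neighbour of `t` in `C` would, by the same
argument, produce another bipartition with both that neighbour and `p` on the larger side, although
they are adjacent. So `t` is not adjacent to `r ∈ C`; deleting `r` and `t` and applying rigidity to
the two neighbours of `r` in `T` would force `p` to be adjacent to the fourth vertex of `T`, which
is impossible. -/

/-- `f` is a model of `H` as a minor of `G`: its values are the branch sets witnessing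
`H.IsMinor G`. -/
structure IsMinorModel {W V : Type*} (H : SimpleGraph W) (G : SimpleGraph V) (f : W → Set V) :
    Prop where
  nonempty : ∀ w, (f w).Nonempty
  connected : ∀ w, (G.induce (f w)).Connected
  disjoint : Pairwise fun w₁ w₂ => Disjoint (f w₁) (f w₂)
  exists_adj : ∀ ⦃w₁ w₂⦄, H.Adj w₁ w₂ → ∃ v₁ ∈ f w₁, ∃ v₂ ∈ f w₂, G.Adj v₁ v₂

namespace IsMinorModel

variable {W V : Type*} {H : SimpleGraph W} {G : SimpleGraph V} {f : W → Set V}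

theorem eq_of_mem (hf : IsMinorModel H G f) {w w' : W} {x : V} (hw : x ∈ f w) (hw' : x ∈ f w') :
    w = w' := by
  by_contra hne
  exact Set.disjoint_left.mp (hf.disjoint hne) hw hw'

theorem injective_of_mem (hf : IsMinorModel H G f) {r : W → V} (hr : ∀ w, r w ∈ f w) :
    Function.Injective r := fun w w' h => hf.eq_of_mem (hr w) (h ▸ hr w')

theorem exists_mem_adj (hf : IsMinorModel H G f) {w : W} {x y : V} (hx : x ∈ f w) (hy : y ∈ f w)
    (hxy : x ≠ y) : ∃ z ∈ f w, G.Adj x z := by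
  have : Nontrivial (f w) := ⟨⟨x, hx⟩, ⟨y, hy⟩, fun h => hxy (congrArg Subtype.val h)⟩
  obtain ⟨z, hz⟩ := (hf.connected w).preconnected.exists_adj_of_nontrivial ⟨x, hx⟩
  exact ⟨z, z.2, hz⟩

theorem exists_mem_of_adj (hf : IsMinorModel H G f) {w w' : W} {S : Set V}
    (hS : ∀ x ∈ f w, ∀ y ∉ f w, G.Adj x y → y ∈ S) (hww' : H.Adj w w') : ∃ y ∈ f w', y ∈ S := by
  obtain ⟨x, hx, y, hy, hxy⟩ := hf.exists_adj hww'
  exact ⟨y, hy, hS x hx y (fun hyw => hww'.ne (hf.eq_of_mem hyw hy)) hxy⟩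

theorem ncard_neighborSet_le (hf : IsMinorModel H G f) {w : W} {S : Finset V}
    (hS : ∀ x ∈ f w, ∀ y ∉ f w, G.Adj x y → y ∈ S) : (H.neighborSet w).ncard ≤ S.card := by
  have : Nonempty V := (hf.nonempty w).to_type
  choose! g hgf hgS using fun w' => hf.exists_mem_of_adj (S := S) (w' := w') hS
  rw [← Set.ncard_coe_finset]
  exact Set.ncard_le_ncard_of_injOn g hgS
    fun w₁ h₁ w₂ h₂ h => hf.eq_of_mem (hgf w₁ h₁) (h ▸ hgf w₂ h₂)

theorem exists_adj_mem_of_card_le (hf : IsMinorModel H G f) {w : W} {S : Finset V}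
    (hS : ∀ x ∈ f w, ∀ y ∉ f w, G.Adj x y → y ∈ S)
    (hcard : S.card ≤ (H.neighborSet w).ncard) {y : V} (hy : y ∈ S) :
    ∃ w', H.Adj w w' ∧ y ∈ f w' ∧ ∀ z ∈ S, z ∈ f w' → z = y := by
  choose g hgf hgS using fun w' => hf.exists_mem_of_adj (S := S) (w' := w') hS
  have hsurj : ∀ z ∈ (S : Set V), ∃ w', ∃ hw' : w' ∈ H.neighborSet w, z = g w' hw' :=
    Set.surj_on_of_inj_on_of_ncard_le g hgS
      (fun w₁ w₂ h₁ h₂ h => hf.eq_of_mem (hgf w₁ h₁) (h ▸ hgf w₂ h₂))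
      (by rwa [Set.ncard_coe_finset])
  obtain ⟨w', hw', rfl⟩ := hsurj y hy
  refine ⟨w', hw', hgf w' hw', fun z hz hzw' => ?_⟩
  obtain ⟨w'', hw'', rfl⟩ := hsurj z hz
  obtain rfl := hf.eq_of_mem hzw' (hgf w'' hw'')
  rfl

theorem eq_pair_of_card [Fintype V] [Fintype W] (hf : IsMinorModel H G f)
    (hcard : Fintype.card V = Fintype.card W + 1) {w : W} {x y : V} (hx : x ∈ f w) (hy : y ∈ f w)
    (hxy : x ≠ y) :
    f w = {x, y} ∧ (∀ w' ≠ w, (f w').Subsingleton) ∧ ∀ z, ∃ w', z ∈ f w' := by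
  classical
  choose r hr using hf.nonempty
  have hux : ∀ w', Function.update r w x w' ∈ f w' := fun w' => by
    rcases eq_or_ne w' w with rfl | hne
    · rwa [Function.update_self]
    · rw [Function.update_of_ne hne]
      exact hr w'
  have hinj : Function.Injective (fun o : Option W => o.elim y (Function.update r w x)) := by
    refine Option.injective_iff.mpr ⟨hf.injective_of_mem hux, ?_⟩
    rintro ⟨w', hw'⟩
    have hw' : Function.update r w x w' = y := hw'
    obtain rfl := hf.eq_of_mem hy (hw' ▸ hux w')
    exact hxy (by rwa [Function.update_self] at hw')
  have hsurj : ∀ z, z = y ∨ ∃ w', Function.update r w x w' = z := fun z => by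
    obtain ⟨_ | w', rfl⟩ := (hinj.bijective_of_nat_card_le (by simp [hcard])).2 z
    exacts [Or.inl rfl, Or.inr ⟨w', rfl⟩]
  have hmem : ∀ w', ∀ z ∈ f w', z = y ∨ z = Function.update r w x w' := fun w' z hz =>
    (hsurj z).imp_right fun ⟨w'', h⟩ => by rw [← h, hf.eq_of_mem hz (h ▸ hux w'')]
  refine ⟨Set.Subset.antisymm (fun z hz => ?_) (Set.pair_subset hx hy), fun w' hw' => ?_,
    fun z => ?_⟩
  · simpa [or_comm] using hmem w z hz
  · have hy' : ∀ z ∈ f w', z ≠ y := fun z hz h => hw' (hf.eq_of_mem hz (h ▸ hy))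
    intro z hz z' hz'
    rw [(hmem w' z hz).resolve_left (hy' z hz), (hmem w' z' hz').resolve_left (hy' z' hz')]
  · rcases hsurj z with rfl | ⟨w', rfl⟩
    exacts [⟨w, hy⟩, ⟨w', hux w'⟩]

end IsMinorModel

theorem isMinor_iff_exists_isMinorModel {W V : Type*} {H : SimpleGraph W} {G : SimpleGraph V} :
    H.IsMinor G ↔ ∃ f, IsMinorModel H G f :=
  ⟨fun ⟨f, h₁, h₂, h₃, h₄⟩ => ⟨f, h₁, h₂, h₃, h₄⟩,
    fun ⟨f, h₁, h₂, h₃, h₄⟩ => ⟨f, h₁, h₂, h₃, h₄⟩⟩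

/-- The vertices `a` and `b` have, apart from each other, at most the neighbours `v`, `α` and
`v`, `β` respectively. In the application `a`, `b`, `v` form a triangle in which `a` and `b` have
degree three. -/
structure CubicTriangle {V : Type*} (G : SimpleGraph V) (a b v α β : V) : Prop where
  ne : a ≠ b
  left : ∀ x, G.Adj a x → x = b ∨ x = v ∨ x = α
  right : ∀ x, G.Adj b x → x = a ∨ x = v ∨ x = β
  ne_left : v ≠ a ∧ α ≠ a ∧ β ≠ a
  ne_right : v ≠ b ∧ α ≠ b ∧ β ≠ b

theorem ncard_neighborSet_completeBipartiteGraph {n : ℕ} (w : Fin n ⊕ Fin n) :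
    ((completeBipartiteGraph (Fin n) (Fin n)).neighborSet w).ncard = n := by
  rcases w with i | j
  · have : (completeBipartiteGraph (Fin n) (Fin n)).neighborSet (.inl i) = Set.range .inr := by
      ext (_ | _) <;> simp
    rw [this, Set.ncard_range_of_injective Sum.inr_injective, Nat.card_fin]
  · have : (completeBipartiteGraph (Fin n) (Fin n)).neighborSet (.inr j) = Set.range .inl := by
      ext (_ | _) <;> simp
    rw [this, Set.ncard_range_of_injective Sum.inl_injective, Nat.card_fin]

theorem completeBipartiteGraph_adj_of_not_adj {A B : Type*} {w w' w'' : A ⊕ B}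
    (hww' : ¬(completeBipartiteGraph A B).Adj w w')
    (hww'' : (completeBipartiteGraph A B).Adj w w'') :
    (completeBipartiteGraph A B).Adj w' w'' := by
  rcases w with _ | _ <;> rcases w' with _ | _ <;> rcases w'' with _ | _ <;> simp_all

theorem ncard_neighborSet_top {W : Type*} [Fintype W] (w : W) :
    ((⊤ : SimpleGraph W).neighborSet w).ncard = Fintype.card W - 1 := by
  classical
  rw [← SimpleGraph.complete_graph_degree w, ← SimpleGraph.card_neighborFinset_eq_degree]
  exact Set.ncard_eq_toFinset_card' _

namespace CubicTriangle

variable {V : Type*} {G : SimpleGraph V} {a b v α β : V}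

theorem symm (h : CubicTriangle G a b v α β) : CubicTriangle G b a v β α where
  ne := h.ne.symm
  left := h.right
  right := h.left
  ne_left := ⟨h.ne_right.1, h.ne_right.2.2, h.ne_right.2.1⟩
  ne_right := ⟨h.ne_left.1, h.ne_left.2.2, h.ne_left.2.1⟩

theorem mem_of_adj_of_eq_singleton [DecidableEq V] (h : CubicTriangle G a b v α β) {B : Set V}
    (hB : B = {b}) : ∀ x ∈ B, ∀ y ∉ B, G.Adj x y → y ∈ ({a, v, β} : Finset V) := by
  rw [hB]
  rintro x rfl y - hxy
  simpa using h.right y hxy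

section BipartiteMinor

variable {f : Fin 3 ⊕ Fin 3 → Set V}

theorem exists_mem_nontrivial_of_mem (h : CubicTriangle G a b v α β)
    (hf : IsMinorModel (completeBipartiteGraph (Fin 3) (Fin 3)) G f) {w : Fin 3 ⊕ Fin 3}
    (haw : a ∈ f w) : ∃ w', (a ∈ f w' ∨ b ∈ f w') ∧ (f w').Nontrivial := by
  classical
  by_contra! hno
  have eq_singleton : ∀ {w x}, (a ∈ f w ∨ b ∈ f w) → x ∈ f w → f w = {x} := fun hw hx =>
    (hno _ hw).eq_singleton_of_mem hx
  have hSa := h.symm.mem_of_adj_of_eq_singleton (eq_singleton (.inl haw) haw)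
  have hcard : ({b, v, α} : Finset V).card ≤
      ((completeBipartiteGraph (Fin 3) (Fin 3)).neighborSet w).ncard := by
    rw [ncard_neighborSet_completeBipartiteGraph]
    exact Finset.card_le_three
  obtain ⟨w', hww', hbw', -⟩ := hf.exists_adj_mem_of_card_le hSa hcard (y := b) (by simp)
  obtain ⟨u, hwu, hvu, -⟩ := hf.exists_adj_mem_of_card_le hSa hcard (y := v) (by simp)
  have hSb := h.mem_of_adj_of_eq_singleton (eq_singleton (.inr hbw') hbw')
  obtain ⟨u', hwu', hvu', -⟩ := hf.exists_adj_mem_of_card_le hSb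
    (by rw [ncard_neighborSet_completeBipartiteGraph]; exact Finset.card_le_three)
    (y := v) (by simp)
  obtain rfl := hf.eq_of_mem hvu hvu'
  -- `w`, `w'`, `u` would be a triangle in a bipartite graph.
  rcases w with _ | _ <;> rcases w' with _ | _ <;> rcases u with _ | _ <;> simp_all

theorem exists_mem_nontrivial [Fintype V] (h : CubicTriangle G a b v α β)
    (hcard : Fintype.card V = 7)
    (hf : IsMinorModel (completeBipartiteGraph (Fin 3) (Fin 3)) G f) :
    ∃ w, (a ∈ f w ∨ b ∈ f w) ∧ (f w).Nontrivial := by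
  classical
  by_cases ha : ∃ w, a ∈ f w
  · obtain ⟨w, haw⟩ := ha
    exact h.exists_mem_nontrivial_of_mem hf haw
  by_cases hb : ∃ w, b ∈ f w
  · obtain ⟨w, hbw⟩ := hb
    obtain ⟨w', hw', hnt⟩ := h.symm.exists_mem_nontrivial_of_mem hf hbw
    exact ⟨w', hw'.symm, hnt⟩
  push Not at ha hb
  choose r hr using hf.nonempty
  have hsub : Finset.univ.image r ⊆ ({a, b} : Finset V)ᶜ := by
    intro x hx
    obtain ⟨w, -, rfl⟩ := Finset.mem_image.mp hx
    simp only [Finset.mem_compl, Finset.mem_insert, Finset.mem_singleton, not_or]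
    exact ⟨fun h => ha w (h ▸ hr w), fun h => hb w (h ▸ hr w)⟩
  have hle := Finset.card_le_card hsub
  rw [Finset.card_image_of_injective _ (hf.injective_of_mem hr), Finset.card_compl, hcard,
    Finset.card_pair h.ne] at hle
  simp at hle

theorem exists_adj_of_boundary [Fintype V] (hcard : Fintype.card V = 7)
    (hf : IsMinorModel (completeBipartiteGraph (Fin 3) (Fin 3)) G f) {w w₀ : Fin 3 ⊕ Fin 3}
    (hw₀ : (f w₀).Nontrivial) {S : Finset V} (hS : ∀ x ∈ f w, ∀ y ∉ f w, G.Adj x y → y ∈ S)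
    (hS3 : S.card ≤ 3) {d y : V} (hdw₀ : d ∉ f w₀) (hd : d ∉ S) (hy : y ∈ S) :
    ∃ z, G.Adj d z ∧ (z = y ∨ y ∈ f w₀ ∧ z ∈ f w₀) := by
  obtain ⟨p, hp, q, hq, hpq⟩ := hw₀
  obtain ⟨-, hsub, hcov⟩ := hf.eq_pair_of_card (by simp [hcard]) hp hq hpq
  obtain ⟨w', hdw'⟩ := hcov d
  have eq_of_mem_w' : ∀ x ∈ f w', x = d := fun x hx =>
    hsub w' (fun h => hdw₀ (h ▸ hdw')) hx hdw'
  obtain ⟨u, hwu, hyu, -⟩ := hf.exists_adj_mem_of_card_le hS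
    (hS3.trans_eq (ncard_neighborSet_completeBipartiteGraph w).symm) hy
  -- Hence `w` and `w'` lie on the same side of `K₃,₃` and have the same neighbours.
  have hww' : ¬(completeBipartiteGraph (Fin 3) (Fin 3)).Adj w w' := fun hadj => by
    obtain ⟨x, hx, hxS⟩ := hf.exists_mem_of_adj (S := S) hS hadj
    exact hd (eq_of_mem_w' x hx ▸ hxS)
  obtain ⟨x, hx, z, hz, hxz⟩ := hf.exists_adj (completeBipartiteGraph_adj_of_not_adj hww' hwu)
  refine ⟨z, eq_of_mem_w' x hx ▸ hxz, ?_⟩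
  rcases eq_or_ne u w₀ with rfl | hu
  exacts [.inr ⟨hyu, hz⟩, .inl (hsub u hu hz hyu)]

theorem adj_of_boundary [Fintype V] (hcard : Fintype.card V = 7)
    (hf : IsMinorModel (completeBipartiteGraph (Fin 3) (Fin 3)) G f) {w w₀ : Fin 3 ⊕ Fin 3}
    (hw₀ : (f w₀).Nontrivial) {S : Finset V} (hS : ∀ x ∈ f w, ∀ y ∉ f w, G.Adj x y → y ∈ S)
    (hS3 : S.card ≤ 3) {d y : V} (hdw₀ : d ∉ f w₀) (hd : d ∉ S) (hy : y ∈ S) (hyw₀ : y ∉ f w₀) :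
    G.Adj d y := by
  obtain ⟨z, hdz, rfl | ⟨hyw, -⟩⟩ := exists_adj_of_boundary hcard hf hw₀ hS hS3 hdw₀ hd hy
  exacts [hdz, absurd hyw hyw₀]

theorem adj_of_contracted_edge [Fintype V] (h : CubicTriangle G a b v α β)
    (hcard : Fintype.card V = 7)
    (hf : IsMinorModel (completeBipartiteGraph (Fin 3) (Fin 3)) G f) {w : Fin 3 ⊕ Fin 3}
    (haw : a ∈ f w) (hbw : b ∈ f w) :
    α ≠ β ∧ ∀ d ∉ ({a, b, v, α, β} : Set V), G.Adj d v ∧ G.Adj d α ∧ G.Adj d β := by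
  classical
  obtain ⟨hpair, -, -⟩ := hf.eq_pair_of_card (by simp [hcard]) haw hbw h.ne
  have hS : ∀ x ∈ f w, ∀ y ∉ f w, G.Adj x y → y ∈ ({v, α, β} : Finset V) := by
    rw [hpair]
    rintro x (rfl | rfl) y hy hxy
    · have := h.left y hxy
      simp only [Set.mem_insert_iff, Set.mem_singleton_iff, Finset.mem_insert,
        Finset.mem_singleton] at hy ⊢
      tauto
    · have := h.right y hxy
      simp only [Set.mem_insert_iff, Set.mem_singleton_iff, Finset.mem_insert,
        Finset.mem_singleton] at hy ⊢
      tauto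
  refine ⟨?_, fun d hd => ?_⟩
  · rintro rfl
    have hle := hf.ncard_neighborSet_le hS
    rw [ncard_neighborSet_completeBipartiteGraph, Finset.pair_eq_singleton] at hle
    exact absurd (hle.trans Finset.card_le_two) (by norm_num)
  · simp only [Set.mem_insert_iff, Set.mem_singleton_iff, not_or] at hd
    have hdw : d ∉ f w := by
      rw [hpair]
      rintro (rfl | rfl)
      exacts [hd.1 rfl, hd.2.1 rfl]
    have hdS : d ∉ ({v, α, β} : Finset V) := by simp [hd]
    refine ⟨?_, ?_, ?_⟩ <;>
      refine adj_of_boundary hcard hf ⟨a, haw, b, hbw, h.ne⟩ hS Finset.card_le_three hdw hdS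
        ?_ ?_ <;>
      simp [hpair, h.ne_left, h.ne_right]

theorem eq_pair_of_notMem [Fintype V] (h : CubicTriangle G a b v α β)
    (hcard : Fintype.card V = 7)
    (hf : IsMinorModel (completeBipartiteGraph (Fin 3) (Fin 3)) G f) {w : Fin 3 ⊕ Fin 3}
    (haw : a ∈ f w) (hbw : b ∉ f w) (hnt : (f w).Nontrivial) :
    f w = {a, α} ∧ α ≠ v ∧ α ≠ β ∧ ∃ w', f w' = {b} := by
  classical
  obtain ⟨x, hx, hxa⟩ := hnt.exists_ne a
  obtain ⟨y, hyw, hay⟩ := hf.exists_mem_adj haw hx hxa.symm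
  obtain ⟨hpair, hsub, hcov⟩ := hf.eq_pair_of_card (by simp [hcard]) haw hyw hay.ne
  obtain ⟨wb, hb⟩ := hcov b
  have hwb : f wb = {b} := (hsub wb (fun h => hbw (h ▸ hb))).eq_singleton_of_mem hb
  obtain ⟨w', -, haw', huniq⟩ := hf.exists_adj_mem_of_card_le (h.mem_of_adj_of_eq_singleton hwb)
    (Finset.card_le_three.trans_eq (ncard_neighborSet_completeBipartiteGraph wb).symm)
    (y := a) (by simp)
  obtain rfl := hf.eq_of_mem haw haw'
  have hy : y ∉ ({a, v, β} : Finset V) := fun hy => hay.ne (huniq y hy hyw).symm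
  simp only [Finset.mem_insert, Finset.mem_singleton, not_or] at hy
  obtain rfl : y = α := ((h.left y hay).resolve_left (fun h => hbw (h ▸ hyw))).resolve_left hy.2.1
  exact ⟨hpair, hy.2.1, hy.2.2, wb, hwb⟩

theorem adj_of_bipartite_model_of_mem [Fintype V] (h : CubicTriangle G a b v α β)
    (hcard : Fintype.card V = 7)
    (hf : IsMinorModel (completeBipartiteGraph (Fin 3) (Fin 3)) G f) {w : Fin 3 ⊕ Fin 3}
    (haw : a ∈ f w) (hbw : b ∉ f w) (hnt : (f w).Nontrivial) :
    α ≠ β ∧ ∀ d ∉ ({a, b, v, α, β} : Set V), G.Adj d v ∧ G.Adj d α ∧ G.Adj d β := by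
  classical
  obtain ⟨hpair, hαv, hαβ, wb, hwb⟩ := h.eq_pair_of_notMem hcard hf haw hbw hnt
  have hS := h.mem_of_adj_of_eq_singleton hwb
  refine ⟨hαβ, fun d hd => ?_⟩
  simp only [Set.mem_insert_iff, Set.mem_singleton_iff, not_or] at hd
  have hda : ¬G.Adj d a := fun hda => by
    have := h.left d hda.symm
    tauto
  have hdw : d ∉ f w := by simp [hpair, hd]
  have hdS : d ∉ ({a, v, β} : Finset V) := by simp [hd]
  obtain ⟨z, hdz, rfl | ⟨-, hzw⟩⟩ := exists_adj_of_boundary hcard hf hnt hS Finset.card_le_three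
    hdw hdS (y := a) (by simp)
  · exact absurd hdz hda
  have hdα : G.Adj d α := by
    rw [hpair] at hzw
    obtain rfl | rfl := hzw
    exacts [absurd hdz hda, hdz]
  refine ⟨?_, hdα, ?_⟩
  · exact adj_of_boundary hcard hf hnt hS Finset.card_le_three hdw hdS (by simp)
      (by simp [hpair, h.ne_left, hαv.symm])
  · exact adj_of_boundary hcard hf hnt hS Finset.card_le_three hdw hdS (by simp)
      (by simp [hpair, h.ne_left, hαβ.symm])

theorem adj_of_bipartite_isMinor [Fintype V] (h : CubicTriangle G a b v α β)
    (hcard : Fintype.card V = 7) (hG : (completeBipartiteGraph (Fin 3) (Fin 3)).IsMinor G) :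
    α ≠ β ∧ ∀ d ∉ ({a, b, v, α, β} : Set V), G.Adj d v ∧ G.Adj d α ∧ G.Adj d β := by
  obtain ⟨f, hf⟩ := isMinor_iff_exists_isMinorModel.mp hG
  obtain ⟨w, hw, hnt⟩ := h.exists_mem_nontrivial hcard hf
  by_cases ha : a ∈ f w <;> by_cases hb : b ∈ f w
  · exact h.adj_of_contracted_edge hcard hf ha hb
  · exact h.adj_of_bipartite_model_of_mem hcard hf ha hb hnt
  · obtain ⟨hne, hadj⟩ := h.symm.adj_of_bipartite_model_of_mem hcard hf hb ha hnt
    refine ⟨hne.symm, fun d hd => ?_⟩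
    obtain ⟨hv, hβ, hα⟩ := hadj d (by simp_all)
    exact ⟨hv, hα, hβ⟩
  · tauto

end BipartiteMinor

section CompleteMinor

variable {f : Fin 5 → Set V}

theorem exists_mem_ne_ne (h : CubicTriangle G a b v α β)
    (hf : IsMinorModel (⊤ : SimpleGraph (Fin 5)) G f) (w : Fin 5) : ∃ x ∈ f w, x ≠ a ∧ x ≠ b := by
  classical
  by_contra! hno
  have mem_pair : ∀ x ∈ f w, x = a ∨ x = b := fun x hx => or_iff_not_imp_left.mpr (hno x hx)
  obtain ⟨S, hS, hS3⟩ : ∃ S : Finset V,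
      (∀ x ∈ f w, ∀ y ∉ f w, G.Adj x y → y ∈ S) ∧ S.card ≤ 3 := by
    have left := h.left
    have right := h.right
    by_cases ha : a ∈ f w <;> by_cases hb : b ∈ f w
    · refine ⟨{v, α, β}, fun x hx y hy hxy => ?_, Finset.card_le_three⟩
      rcases mem_pair x hx with rfl | rfl <;> grind
    · refine ⟨{b, v, α}, fun x hx y _ hxy => ?_, Finset.card_le_three⟩
      rcases mem_pair x hx with rfl | rfl <;> grind
    · refine ⟨{a, v, β}, fun x hx y _ hxy => ?_, Finset.card_le_three⟩
      rcases mem_pair x hx with rfl | rfl <;> grind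
    · obtain ⟨x, hx⟩ := hf.nonempty w
      rcases mem_pair x hx with rfl | rfl
      exacts [absurd hx ha, absurd hx hb]
  have hle := (hf.ncard_neighborSet_le hS).trans hS3
  rw [ncard_neighborSet_top, Fintype.card_fin] at hle
  norm_num at hle

theorem exists_sdiff_pair_eq_singleton [Fintype V] (h : CubicTriangle G a b v α β)
    (hcard : Fintype.card V = 7) (hf : IsMinorModel (⊤ : SimpleGraph (Fin 5)) G f) {x : V}
    (hx : x ∉ ({a, b} : Set V)) : ∃ w, f w \ {a, b} = {x} := by
  classical
  choose r hr hra hrb using h.exists_mem_ne_ne hf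
  have himage : Finset.univ.image r = ({a, b} : Finset V)ᶜ := by
    refine Finset.eq_of_subset_of_card_le (fun y hy => ?_) ?_
    · obtain ⟨w, -, rfl⟩ := Finset.mem_image.mp hy
      simp [hra, hrb]
    · rw [Finset.card_image_of_injective _ (hf.injective_of_mem hr), Finset.card_compl, hcard,
        Finset.card_pair h.ne]
      simp
  have exists_eq : ∀ y ∉ ({a, b} : Set V), ∃ w, r w = y := fun y hy => by
    have : y ∈ Finset.univ.image r := by simpa [himage] using hy
    simpa using this
  obtain ⟨w, rfl⟩ := exists_eq x hx
  refine ⟨w, Set.eq_singleton_iff_unique_mem.mpr ⟨⟨hr w, hx⟩, fun y ⟨hyw, hy⟩ => ?_⟩⟩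
  obtain ⟨w', rfl⟩ := exists_eq y hy
  rw [hf.eq_of_mem hyw (hr w')]

theorem adj_of_top_isMinor [Fintype V] (h : CubicTriangle G a b v α β)
    (hcard : Fintype.card V = 7) (hG : (⊤ : SimpleGraph (Fin 5)).IsMinor G) :
    ∀ d ∉ ({a, b, v, α, β} : Set V), ∀ x ∉ ({a, b} : Set V), x ≠ d → G.Adj d x := by
  intro d hd x hx hxd
  obtain ⟨f, hf⟩ := isMinor_iff_exists_isMinorModel.mp hG
  simp only [Set.mem_insert_iff, Set.mem_singleton_iff, not_or] at hd
  obtain ⟨w, hw⟩ := h.exists_sdiff_pair_eq_singleton hcard hf (x := d) (by simp [hd])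
  obtain ⟨w', hw'⟩ := h.exists_sdiff_pair_eq_singleton hcard hf hx
  have notMem_pair : ∀ y, G.Adj d y → y ∉ ({a, b} : Set V) := by
    rintro y hdy (rfl | rfl)
    · have := h.left d hdy.symm
      tauto
    · have := h.right d hdy.symm
      tauto
  have hdw : d ∈ f w := (hw.ge rfl).1
  have eq_d : ∀ y ∈ f w, y = d := by
    by_contra! ⟨y, hyw, hyd⟩
    obtain ⟨z, hzw, hdz⟩ := hf.exists_mem_adj hdw hyw hyd.symm
    exact hdz.ne' (hw.le ⟨hzw, notMem_pair z hdz⟩)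
  have hww' : w ≠ w' := by
    rintro rfl
    exact hxd (eq_d x (hw'.ge rfl).1)
  obtain ⟨d', hd', y, hyw', hdy⟩ := hf.exists_adj ((SimpleGraph.top_adj w w').mpr hww')
  obtain rfl := eq_d d' hd'
  obtain rfl : y = x := hw'.le ⟨hyw', notMem_pair y hdy⟩
  exact hdy

end CompleteMinor
end CubicTriangle

theorem adj_or_adj_of_not_isPlanar_induce_compl {V : Type*} [Fintype V] {G : SimpleGraph V}
    {s : Set V} {a b v α β : V} (hcard : Fintype.card V = s.ncard + 7) (ha : a ∉ s) (hb : b ∉ s)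
    (hv : v ∉ s) (hα : α ∉ s) (hβ : β ∉ s) (hab : a ≠ b)
    (left : ∀ x ∉ s, G.Adj a x → x = b ∨ x = v ∨ x = α)
    (right : ∀ x ∉ s, G.Adj b x → x = a ∨ x = v ∨ x = β)
    (ne_left : v ≠ a ∧ α ≠ a ∧ β ≠ a) (ne_right : v ≠ b ∧ α ≠ b ∧ β ≠ b)
    (hG : ¬(G.induce sᶜ).IsPlanar) :
    (∀ d ∉ s, d ∉ ({a, b, v, α, β} : Set V) → ∀ x ∉ s, x ∉ ({a, b} : Set V) → x ≠ d → G.Adj d x) ∨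
      (α ≠ β ∧ ∀ d ∉ s, d ∉ ({a, b, v, α, β} : Set V) → G.Adj d v ∧ G.Adj d α ∧ G.Adj d β) := by
  classical
  have h : CubicTriangle (G.induce sᶜ) ⟨a, ha⟩ ⟨b, hb⟩ ⟨v, hv⟩ ⟨α, hα⟩ ⟨β, hβ⟩ :=
    { ne := by simpa using hab
      left := fun x hx => by simpa [Subtype.ext_iff] using left x x.2 hx
      right := fun x hx => by simpa [Subtype.ext_iff] using right x x.2 hx
      ne_left := by simpa using ne_left
      ne_right := by simpa using ne_right }
  have hcard' : Fintype.card (sᶜ : Set V) = 7 := by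
    have := Set.ncard_add_ncard_compl s
    rw [Nat.card_eq_fintype_card, hcard, Nat.add_left_cancel_iff] at this
    rw [← this, ← Nat.card_eq_fintype_card, Nat.card_coe_set_eq]
  rcases not_and_or.mp hG with h₅ | h₃
  · left
    intro d hds hd x hxs hx hxd
    exact h.adj_of_top_isMinor hcard' (not_not.mp h₅) ⟨d, hds⟩ (by simpa using hd) ⟨x, hxs⟩
      (by simpa using hx) (by simpa using hxd)
  · right
    obtain ⟨hne, hadj⟩ := h.adj_of_bipartite_isMinor hcard' (not_not.mp h₃)
    exact ⟨by simpa using hne, fun d hds hd => hadj ⟨d, hds⟩ (by simpa using hd)⟩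

/-- The number of neighbours of `x` in `S`; it splits the degree of `x` along a partition of the
vertices. -/
def degreeIn {V : Type*} (G : SimpleGraph V) [DecidableRel G.Adj] (S : Finset V) (x : V) : ℕ :=
  (S.filter (G.Adj x)).card

section DegreeIn

variable {V : Type*} {G : SimpleGraph V} [DecidableRel G.Adj]

theorem sum_degreeIn_comm (S T : Finset V) :
    ∑ x ∈ S, degreeIn G T x = ∑ x ∈ T, degreeIn G S x := by
  refine (Finset.sum_card_bipartiteAbove_eq_sum_card_bipartiteBelow G.Adj).trans ?_
  simp only [Finset.bipartiteBelow, G.adj_comm, degreeIn]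

theorem degreeIn_eq_card {S : Finset V} {x : V} (h : ∀ y ∈ S, G.Adj x y) :
    degreeIn G S x = S.card := by
  rw [degreeIn, Finset.filter_true_of_mem h]

theorem degreeIn_pos {S : Finset V} {x : V} : 0 < degreeIn G S x ↔ ∃ y ∈ S, G.Adj x y := by
  simp [degreeIn, Finset.card_pos, Finset.filter_nonempty_iff]

theorem exists_ne_of_degreeIn_eq_two {S : Finset V} {x y : V} (h : degreeIn G S x = 2)
    (hy : y ∈ S) (hxy : G.Adj x y) :
    ∃ z ∈ S, z ≠ y ∧ G.Adj x z ∧ ∀ w ∈ S, G.Adj x w → w = y ∨ w = z := by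
  classical
  obtain ⟨p, q, hpq, hS⟩ := Finset.card_eq_two.mp h
  have mem_iff : ∀ w, w ∈ S ∧ G.Adj x w ↔ w = p ∨ w = q := fun w => by
    simpa using Finset.ext_iff.mp hS w
  have hp := (mem_iff p).mpr (.inl rfl)
  have hq := (mem_iff q).mpr (.inr rfl)
  rcases (mem_iff y).mp ⟨hy, hxy⟩ with rfl | rfl
  · exact ⟨q, hq.1, hpq.symm, hq.2, fun w hw hxw => (mem_iff w).mp ⟨hw, hxw⟩⟩
  · exact ⟨p, hp.1, hpq, hp.2, fun w hw hxw => ((mem_iff w).mp ⟨hw, hxw⟩).symm⟩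

theorem eq_of_degreeIn_eq_one {S : Finset V} {x y z : V} (h : degreeIn G S x = 1)
    (hy : y ∈ S) (hxy : G.Adj x y) (hz : z ∈ S) (hxz : G.Adj x z) : y = z :=
  Finset.card_le_one.mp h.le y (Finset.mem_filter.mpr ⟨hy, hxy⟩) z
    (Finset.mem_filter.mpr ⟨hz, hxz⟩)

variable [DecidableEq V]

theorem degreeIn_add_degreeIn_sdiff {S R : Finset V} (hSR : S ⊆ R) (x : V) :
    degreeIn G S x + degreeIn G (R \ S) x = degreeIn G R x := by
  rw [degreeIn, degreeIn, ← Finset.card_union_of_disjoint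
    (Finset.disjoint_filter_filter Finset.disjoint_sdiff), ← Finset.filter_union,
    Finset.union_sdiff_of_subset hSR, degreeIn]

theorem degreeIn_add_degreeIn_compl [Fintype V] (S : Finset V) (x : V) :
    degreeIn G S x + degreeIn G Sᶜ x = G.degree x := by
  rw [Finset.compl_eq_univ_sdiff, degreeIn_add_degreeIn_sdiff (Finset.subset_univ S),
    ← G.card_neighborFinset_eq_degree, G.neighborFinset_eq_filter, degreeIn]

theorem adj_iff_of_sum_degreeIn_le {C R : Finset V} (hCR : C ⊆ R)
    (hadj : ∀ d ∈ R \ C, ∀ c ∈ C, G.Adj d c)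
    (hsum : ∑ x ∈ R, degreeIn G R x ≤ 2 * (C.card * (R \ C).card)) {x y : V} (hx : x ∈ R)
    (hy : y ∈ R) : G.Adj x y ↔ (x ∈ C ↔ y ∉ C) := by
  have hcross : ∑ d ∈ R \ C, degreeIn G C d = C.card * (R \ C).card := by
    rw [Finset.sum_congr rfl fun d hd => degreeIn_eq_card (hadj d hd), Finset.sum_const,
      smul_eq_mul, mul_comm]
  have hsplit : ∑ x ∈ R, degreeIn G R x =
      ∑ c ∈ C, degreeIn G C c + ∑ d ∈ R \ C, degreeIn G (R \ C) d +
        2 * (C.card * (R \ C).card) := by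
    rw [← Finset.sum_sdiff hCR]
    simp only [← degreeIn_add_degreeIn_sdiff hCR, Finset.sum_add_distrib]
    rw [sum_degreeIn_comm C (R \ C), hcross]
    ring
  have hC : ∀ c ∈ C, degreeIn G C c = 0 := Finset.sum_eq_zero_iff.mp (by omega)
  have hD : ∀ d ∈ R \ C, degreeIn G (R \ C) d = 0 := Finset.sum_eq_zero_iff.mp (by omega)
  have not_adj : ∀ {S : Finset V}, (∀ z ∈ S, degreeIn G S z = 0) → x ∈ S → y ∈ S → ¬G.Adj x y :=
    fun hS hx hy hxy => (degreeIn_pos.mpr ⟨y, hy, hxy⟩).ne' (hS x hx)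
  by_cases hxC : x ∈ C <;> by_cases hyC : y ∈ C
  · simpa [hxC, hyC] using not_adj hC hxC hyC
  · simpa [hxC, hyC] using (hadj y (by simp [hy, hyC]) x hxC).symm
  · simpa [hxC, hyC] using hadj x (by simp [hx, hxC]) y hyC
  · simpa [hxC, hyC] using not_adj hD (by simp [hx, hxC]) (by simp [hy, hyC])

end DegreeIn

/-- The extremal data extracted from the degree conditions: a graph of degree sum 40 and maximum
degree at most five on nine vertices, and a clique `T` of four vertices of degree five, adjacent to
every further vertex of degree five. -/
structure IsHub {V : Type*} [Fintype V] (G : SimpleGraph V) [DecidableRel G.Adj] (T : Finset V) :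
    Prop where
  card_univ : Fintype.card V = 9
  sum_degree : ∑ x, G.degree x = 40
  degree_le : ∀ x, G.degree x ≤ 5
  card_eq : T.card = 4
  isClique : G.IsClique (T : Set V)
  degree_eq : ∀ t ∈ T, G.degree t = 5
  adj_of_degree_eq : ∀ x ∉ T, G.degree x = 5 → ∀ t ∈ T, G.Adj x t

theorem exists_isHub {V : Type*} [Fintype V] {G : SimpleGraph V} [DecidableRel G.Adj]
    (hV : Fintype.card V = 9) (hsum : ∑ x, G.degree x = 40) (hmax : ∀ x, G.degree x ≤ 5)
    (hadj : ∀ x y, x ≠ y → G.degree x = 5 → G.degree y = 5 → G.Adj x y) : ∃ T, IsHub G T := by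
  have hle : ∑ x, G.degree x ≤ ∑ x : V, (4 + if G.degree x = 5 then 1 else 0) :=
    Finset.sum_le_sum fun x _ => by
      have := hmax x
      split_ifs <;> omega
  rw [Finset.sum_add_distrib, ← Finset.card_filter, hsum, Finset.sum_const, Finset.card_univ, hV,
    smul_eq_mul] at hle
  obtain ⟨T, hT, hT4⟩ := Finset.exists_subset_card_eq (n := 4) (Nat.le_of_add_le_add_left hle)
  have hdeg : ∀ t ∈ T, G.degree t = 5 := fun t ht => (Finset.mem_filter.mp (hT ht)).2
  exact ⟨T, hV, hsum, hmax, hT4, fun t ht u hu htu => hadj t u htu (hdeg t ht) (hdeg u hu), hdeg,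
    fun x hx hx5 t ht => hadj x t (fun h => hx (h ▸ ht)) hx5 (hdeg t ht)⟩

/-- `C` is the three-vertex side of a bipartition exhibiting the subgraph outside `T` as a complete
bipartite graph. -/
structure IsSide {V : Type*} (G : SimpleGraph V) (T C : Finset V) : Prop where
  notMem : ∀ x ∈ C, x ∉ T
  card_eq : C.card = 3
  adj_iff : ∀ x ∉ T, ∀ y ∉ T, (G.Adj x y ↔ (x ∈ C ↔ y ∉ C))

theorem IsSide.subset_compl {V : Type*} [Fintype V] [DecidableEq V] {G : SimpleGraph V}
    {T C : Finset V} (hC : IsSide G T C) : C ⊆ Tᶜ := fun x hx =>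
  Finset.mem_compl.mpr (hC.notMem x hx)

namespace IsHub

variable {V : Type*} [Fintype V] {G : SimpleGraph V} [DecidableRel G.Adj]
  {T C : Finset V}

theorem card_compl [DecidableEq V] (hT : IsHub G T) : Tᶜ.card = 5 := by
  rw [Finset.card_compl, hT.card_univ, hT.card_eq]

theorem degreeIn_self (hT : IsHub G T) {t : V} (ht : t ∈ T) : degreeIn G T t = 3 := by
  classical
  have : T.filter (G.Adj t) = T.erase t := by
    ext x
    simp only [Finset.mem_filter, Finset.mem_erase]
    exact ⟨fun ⟨hx, htx⟩ => ⟨htx.ne', hx⟩, fun ⟨hxt, hx⟩ => ⟨hx, hT.isClique ht hx hxt.symm⟩⟩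
  rw [degreeIn, this, Finset.card_erase_of_mem ht, hT.card_eq]

theorem degreeIn_compl [DecidableEq V] (hT : IsHub G T) {t : V} (ht : t ∈ T) :
    degreeIn G Tᶜ t = 2 := by
  have := degreeIn_add_degreeIn_compl (G := G) T t
  rw [hT.degreeIn_self ht, hT.degree_eq t ht] at this
  omega

theorem sum_compl_degreeIn [DecidableEq V] (hT : IsHub G T) : ∑ x ∈ Tᶜ, degreeIn G T x = 8 := by
  rw [sum_degreeIn_comm, Finset.sum_congr rfl fun t ht => hT.degreeIn_compl ht, Finset.sum_const,
    hT.card_eq, smul_eq_mul]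

theorem sum_compl_degreeIn_compl [DecidableEq V] (hT : IsHub G T) :
    ∑ x ∈ Tᶜ, degreeIn G Tᶜ x = 12 := by
  have hsum := hT.sum_degree
  rw [← Finset.sum_add_sum_compl T, Finset.sum_congr rfl hT.degree_eq, Finset.sum_const,
    hT.card_eq, smul_eq_mul] at hsum
  simp only [← degreeIn_add_degreeIn_compl T, Finset.sum_add_distrib, hT.sum_compl_degreeIn] at hsum
  omega

theorem exists_common_neighbor (hT : IsHub G T) :
    ∃ v ∉ T, ∃ a ∈ T, ∃ b ∈ T, a ≠ b ∧ G.Adj a v ∧ G.Adj b v := by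
  classical
  obtain ⟨v, hv, hlt⟩ : ∃ v ∈ Tᶜ, 1 < degreeIn G T v :=
    Finset.exists_lt_of_sum_lt (by
      rw [hT.sum_compl_degreeIn, Finset.sum_const, hT.card_compl]
      norm_num)
  obtain ⟨a, ha, b, hb, hab⟩ := Finset.one_lt_card.mp hlt
  simp only [Finset.mem_filter] at ha hb
  exact ⟨v, Finset.mem_compl.mp hv, a, ha.1, b, hb.1, hab, ha.2.symm, hb.2.symm⟩

theorem isSide_of_forall_adj (hT : IsHub G T) (hCT : ∀ x ∈ C, x ∉ T) (hC3 : C.card = 3)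
    (hadj : ∀ d ∉ T, d ∉ C → ∀ c ∈ C, G.Adj d c) : IsSide G T C := by
  classical
  have hsub : C ⊆ Tᶜ := fun x hx => Finset.mem_compl.mpr (hCT x hx)
  refine ⟨hCT, hC3, fun x hx y hy => adj_iff_of_sum_degreeIn_le hsub (fun d hd => ?_) ?_
    (Finset.mem_compl.mpr hx) (Finset.mem_compl.mpr hy)⟩
  · rw [Finset.mem_sdiff, Finset.mem_compl] at hd
    exact hadj d hd.1 hd.2
  · rw [hT.sum_compl_degreeIn_compl, Finset.card_sdiff_of_subset hsub, hT.card_compl, hC3]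

theorem exists_adj_or_adj_of_not_twoApex (hT : IsHub G T) (hG : ¬G.TwoApex) {a b v : V}
    (ha : a ∈ T) (hb : b ∈ T) (hab : a ≠ b) (hv : v ∉ T) (hav : G.Adj a v) (hbv : G.Adj b v) :
    ∃ S : Finset V, (∀ x ∈ S, x ∉ T) ∧ S.card ≤ 3 ∧
      (∀ x ∉ T, G.Adj a x ∨ G.Adj b x → x ∈ S) ∧
      ((∀ d ∉ T, d ∉ S → ∀ x ∉ T, x ≠ d → G.Adj d x) ∨
        (S.card = 3 ∧ ∀ d ∉ T, d ∉ S → ∀ c ∈ S, G.Adj d c)) := by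
  classical
  obtain ⟨α, hα, hαv, -, left⟩ :=
    exists_ne_of_degreeIn_eq_two (hT.degreeIn_compl ha) (Finset.mem_compl.mpr hv) hav
  obtain ⟨β, hβ, hβv, -, right⟩ :=
    exists_ne_of_degreeIn_eq_two (hT.degreeIn_compl hb) (Finset.mem_compl.mpr hv) hbv
  simp only [Finset.mem_compl] at hα hβ left right
  refine ⟨{v, α, β}, by grind, Finset.card_le_three, by grind, ?_⟩
  have hs : ((T : Set V) \ {a, b}).ncard = 2 := by
    rw [Set.ncard_sdiff (by simp [Set.insert_subset_iff, *]), Set.ncard_coe_finset, hT.card_eq,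
      Set.ncard_pair hab]
  have hplanar : ¬(G.induce ((T : Set V) \ {a, b})ᶜ).IsPlanar := fun h => hG ⟨_, hs.le, h⟩
  rcases adj_or_adj_of_not_isPlanar_induce_compl (by rw [hT.card_univ, hs]) (by grind) (by grind)
    (by grind) (by grind) (by grind) hab (v := v) (α := α) (β := β) (by grind [G.ne_of_adj])
    (by grind [G.ne_of_adj]) (by grind) (by grind) hplanar with h | ⟨hαβ, h⟩
  · left
    intro d hd hdS x hx hxd
    exact h d (by grind) (by grind) x (by grind) (by grind) hxd
  · right
    refine ⟨Finset.card_eq_three.mpr ⟨v, α, β, hαv.symm, hβv.symm, hαβ, rfl⟩, fun d hd hdS => ?_⟩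
    obtain ⟨hdv, hdα, hdβ⟩ := h d (by grind) (by grind)
    simp [hdv, hdα, hdβ]

theorem exists_isSide (hT : IsHub G T) (hG : ¬G.TwoApex) {a b v : V} (ha : a ∈ T) (hb : b ∈ T)
    (hab : a ≠ b) (hv : v ∉ T) (hav : G.Adj a v) (hbv : G.Adj b v) :
    ∃ C, IsSide G T C ∧ ∀ x ∉ T, G.Adj a x ∨ G.Adj b x → x ∈ C := by
  classical
  obtain ⟨S, hST, hS3, habS, h⟩ :=
    hT.exists_adj_or_adj_of_not_twoApex hG ha hb hab hv hav hbv
  obtain ⟨C, hSC, hCT, hC3⟩ := Finset.exists_subsuperset_card_eq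
    (fun x hx => Finset.mem_compl.mpr (hST x hx)) hS3 (by rw [hT.card_compl]; norm_num)
  have hCT' : ∀ x ∈ C, x ∉ T := fun x hx => Finset.mem_compl.mp (hCT hx)
  refine ⟨C, hT.isSide_of_forall_adj hCT' hC3 fun d hd hdC c hc => ?_,
    fun x hx hab => hSC (habS x hx hab)⟩
  have hdS : d ∉ S := fun hdS => hdC (hSC hdS)
  rcases h with h | ⟨hS3, h⟩
  · exact h d hd hdS c (hCT' c hc) (ne_of_mem_of_not_mem hc hdC)
  · obtain rfl := Finset.eq_of_subset_of_card_le hSC (hC3.trans hS3.symm).le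
    exact h d hd hdS c hc

end IsHub

namespace IsSide

variable {V : Type*} [Fintype V] {G : SimpleGraph V} [DecidableRel G.Adj]
  {T C : Finset V}

theorem card_compl_sdiff [DecidableEq V] (hC : IsSide G T C) (hT : IsHub G T) :
    (Tᶜ \ C).card = 2 := by
  rw [Finset.card_sdiff_of_subset hC.subset_compl, hT.card_compl, hC.card_eq]

theorem degreeIn_compl [DecidableEq V] (hC : IsSide G T C) (hT : IsHub G T) {x : V} (hx : x ∉ T) :
    degreeIn G Tᶜ x = if x ∈ C then 2 else 3 := by
  split_ifs with hxC
  · have : Tᶜ.filter (G.Adj x) = Tᶜ \ C := by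
      ext y
      have := hC.adj_iff x hx y
      simp_all
    rw [degreeIn, this, hC.card_compl_sdiff hT]
  · have : Tᶜ.filter (G.Adj x) = C := by
      ext y
      have := hC.adj_iff x hx y
      have := hC.notMem y
      simp_all
      tauto
    rw [degreeIn, this, hC.card_eq]

theorem degreeIn_le [DecidableEq V] (hC : IsSide G T C) (hT : IsHub G T) {x : V} (hx : x ∉ T) :
    degreeIn G T x ≤ if x ∈ C then 2 else 1 := by
  have hdeg := degreeIn_add_degreeIn_compl (G := G) T x
  rw [hC.degreeIn_compl hT hx] at hdeg
  have hle := hT.degree_le x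
  have hne : G.degree x ≠ 5 := fun h5 => by
    rw [degreeIn_eq_card (hT.adj_of_degree_eq x hx h5), hT.card_eq] at hdeg
    split_ifs at hdeg <;> omega
  split_ifs at hdeg ⊢ <;> omega

protected theorem degreeIn [DecidableEq V] (hC : IsSide G T C) (hT : IsHub G T) {x : V}
    (hx : x ∉ T) : degreeIn G T x = if x ∈ C then 2 else 1 := by
  refine (Finset.sum_eq_sum_iff_of_le fun y hy => hC.degreeIn_le hT (Finset.mem_compl.mp hy)).mp ?_
    x (Finset.mem_compl.mpr hx)
  rw [hT.sum_compl_degreeIn, ← Finset.sum_sdiff hC.subset_compl,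
    Finset.sum_congr rfl fun y hy => if_neg (Finset.mem_sdiff.mp hy).2,
    Finset.sum_congr rfl fun y hy => if_pos hy, Finset.sum_const, Finset.sum_const,
    hC.card_compl_sdiff hT, hC.card_eq]
  rfl

theorem not_adj (hC : IsSide G T C) (hT : IsHub G T) (hG : ¬G.TwoApex) {t p c : V}
    (ht : t ∈ T) (hp : p ∉ T) (hpC : p ∉ C) (htp : G.Adj t p) (hc : c ∈ C) : ¬G.Adj t c := by
  classical
  intro htc
  have hcT : c ∉ T := hC.notMem c hc
  have hdeg : degreeIn G T c = 2 := by rw [hC.degreeIn hT hcT, if_pos hc]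
  obtain ⟨u, hu, hut, hcu, -⟩ := exists_ne_of_degreeIn_eq_two hdeg ht htc.symm
  obtain ⟨C', hC', hmem⟩ := hT.exists_isSide hG ht hu hut.symm hcT htc hcu.symm
  have hpc : G.Adj p c := (hC.adj_iff p hp c hcT).mpr (by tauto)
  exact (hC'.adj_iff p hp c hcT).mp hpc |>.mp (hmem p hp (.inl htp)) (hmem c hcT (.inl htc))

end IsSide

namespace IsHub

variable {V : Type*} [Fintype V] {G : SimpleGraph V} [DecidableRel G.Adj]
  {T : Finset V}

theorem twoApex_of_not_adj (hT : IsHub G T) {r p t a b : V} (hr : r ∉ T) (hp : p ∉ T)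
    (hpr : p ≠ r) (ht : t ∈ T) (ha : a ∈ T) (hb : b ∈ T) (hta : t ≠ a) (htb : t ≠ b) (hab : a ≠ b)
    (har : G.Adj a r) (hbr : G.Adj b r) (hpT : ∀ u ∈ T, u ≠ t → ¬G.Adj p u) : G.TwoApex := by
  classical
  obtain ⟨v, hv, rfl⟩ : ∃ v ∉ ({t, a, b} : Finset V), insert v {t, a, b} = T :=
    Finset.exists_eq_insert_iff.mpr ⟨by simp [Finset.insert_subset_iff, *], by
      rw [hT.card_eq, Finset.card_eq_three.mpr ⟨t, a, b, hta, htb, hab, rfl⟩]⟩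
  obtain ⟨α, hα, hαr, haα, left⟩ :=
    exists_ne_of_degreeIn_eq_two (hT.degreeIn_compl ha) (Finset.mem_compl.mpr hr) har
  obtain ⟨β, hβ, hβr, hbβ, right⟩ :=
    exists_ne_of_degreeIn_eq_two (hT.degreeIn_compl hb) (Finset.mem_compl.mpr hr) hbr
  simp only [Finset.mem_compl] at hα hβ left right
  have hrt : r ≠ t := (ne_of_mem_of_not_mem ht hr).symm
  have hpv : ¬G.Adj p v := hpT v (by grind) (by grind)
  have hpα : p ≠ α := fun h => hpT a ha hta.symm (h ▸ haα.symm)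
  have hpβ : p ≠ β := fun h => hpT b hb htb.symm (h ▸ hbβ.symm)
  refine ⟨{r, t}, (Set.ncard_pair hrt).le, by_contra fun hG => hpv ?_⟩
  have hp' : p ∉ ({a, b, v, α, β} : Set V) := by grind
  rcases adj_or_adj_of_not_isPlanar_induce_compl (s := {r, t}) (a := a) (b := b) (v := v) (α := α)
    (β := β) (by rw [hT.card_univ, Set.ncard_pair hrt]) (by grind) (by grind) (by grind) (by grind)
    (by grind) hab (by grind [G.ne_of_adj]) (by grind [G.ne_of_adj]) (by grind) (by grind) hG
    with h | ⟨-, h⟩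
  · exact h p (by grind) hp' v (by grind) (by grind) (by grind)
  · exact (h p (by grind) hp').1

theorem twoApex (hT : IsHub G T) : G.TwoApex := by
  classical
  by_contra hG
  obtain ⟨v, hv, a, ha, b, hb, hab, hav, hbv⟩ := hT.exists_common_neighbor
  obtain ⟨C, hC, -⟩ := hT.exists_isSide hG ha hb hab hv hav hbv
  obtain ⟨r, hrC⟩ : C.Nonempty := Finset.card_pos.mp (by rw [hC.card_eq]; norm_num)
  obtain ⟨p, hp⟩ : (Tᶜ \ C).Nonempty := Finset.card_pos.mp (by
    rw [hC.card_compl_sdiff hT]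
    norm_num)
  obtain ⟨hpT, hpC⟩ : p ∉ T ∧ p ∉ C := by simpa using hp
  have hrT : r ∉ T := hC.notMem r hrC
  have hdegp : degreeIn G T p = 1 := by rw [hC.degreeIn hT hpT, if_neg hpC]
  have hdegr : degreeIn G T r = 2 := by rw [hC.degreeIn hT hrT, if_pos hrC]
  obtain ⟨t, ht, hpt⟩ := degreeIn_pos.mp (hdegp.symm ▸ zero_lt_one)
  obtain ⟨t₁, ht₁, hrt₁⟩ := degreeIn_pos.mp (hdegr.symm ▸ zero_lt_two)
  obtain ⟨t₂, ht₂, hne, hrt₂, -⟩ := exists_ne_of_degreeIn_eq_two hdegr ht₁ hrt₁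
  have htr : ¬G.Adj t r := hC.not_adj hT hG ht hpT hpC hpt.symm hrC
  refine hG (hT.twoApex_of_not_adj hrT hpT (fun h => hpC (h ▸ hrC)) ht ht₁ ht₂ ?_ ?_ hne.symm
    hrt₁.symm hrt₂.symm fun u hu hut hpu => hut (eq_of_degreeIn_eq_one hdegp hu hpu ht hpt))
  · rintro rfl
    exact htr hrt₁.symm
  · rintro rfl
    exact htr hrt₂.symm

end IsHub

/-- A graph with 9 vertices, 20 edges, minimum degree at least 3, maximum degree
equal to 5, in which all degree-5 vertices are mutually adjacent, is 2-apex. -/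
theorem stmt11 {V : Type*} [Fintype V] (G : SimpleGraph V)
    (hV : Fintype.card V = 9) (hE : G.edgeSet.ncard = 20)
    (hmin : ∀ v : V, 3 ≤ (G.neighborSet v).ncard)
    (hmax : ∀ v : V, (G.neighborSet v).ncard ≤ 5)
    (hmax5 : ∃ v : V, (G.neighborSet v).ncard = 5)
    (hadj : ∀ v w : V, v ≠ w → (G.neighborSet v).ncard = 5 →
      (G.neighborSet w).ncard = 5 → G.Adj v w) :
    G.TwoApex := by
  classical
  have ncard_neighborSet : ∀ v, (G.neighborSet v).ncard = G.degree v := fun v => by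
    rw [← G.card_neighborFinset_eq_degree]
    exact Set.ncard_eq_toFinset_card' _
  have hsum : ∑ v, G.degree v = 40 := by
    rw [G.sum_degrees_eq_twice_card_edges, ← Set.ncard_coe_finset, G.coe_edgeFinset, hE]
  simp only [ncard_neighborSet] at hmax hadj
  obtain ⟨T, hT⟩ := exists_isHub hV hsum hmax hadj
  exact hT.twoApex
end
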